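/- arXiv:2412.04066 — 10 statements merged into one kernel-verified Lean document; each statement's English description precedes it below -/
import Mathlib

section
/- Let q ≥ 1 be an integer and let H be a q-uniform hypergraph on a vertex set V that satisfies the fractional Helly property. If H has arbitrarily large finite independent sets (i.e., for every natural number n there exists a finite independent set of H of size at least n), then H has an infinite independent set. -/
/-- `H` is a `q`-uniform hypergraph on vertex set `V`: every edge has exactly `q` vertices. -/
def IsUniform {V : Type*} (q : ℕ) (H : Set (Finset V)) : Prop :=
  ∀ e ∈ H, e.card = q

/-- `K` is a clique of the `q`-uniform hypergraph `H`:
every `q`-element subset of `K` is an edge. -/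
def IsClique {V : Type*} (q : ℕ) (H : Set (Finset V)) (K : Finset V) : Prop :=
  ∀ e : Finset V, e ⊆ K → e.card = q → e ∈ H

/-- `I` is an independent set of the `q`-uniform hypergraph `H`:
no `q`-element subset of `I` is an edge. -/
def IsIndep {V : Type*} (q : ℕ) (H : Set (Finset V)) (I : Set V) : Prop :=
  ∀ e : Finset V, ↑e ⊆ I → e.card = q → e ∉ H

/-- The fractional Helly property for a `q`-uniform hypergraph `H`: for every `α > 0`
there is a `β > 0` such that every finite vertex set `S` containing at least
`α·(|S| choose q)` edges contains a clique of size at least `β·|S|`. -/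
def FracHelly {V : Type*} (q : ℕ) (H : Set (Finset V)) : Prop :=
  ∀ α : ℝ, 0 < α → ∃ β : ℝ, 0 < β ∧ ∀ S : Finset V,
    α * (S.card.choose q : ℝ) ≤ ({e : Finset V | e ∈ H ∧ e ⊆ S}.ncard : ℝ) →
    ∃ K : Finset V, K ⊆ S ∧ IsClique q H K ∧ β * (S.card : ℝ) ≤ (K.card : ℝ)

/-!
Fix an ultrafilter `U` all of whose members contain independent sets of every finite size, and ask
whether `{x₁, …, x_q}` is an edge for `U`-almost all `x₁`, then `U`-almost all `x₂`, and so on. If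
not, choosing vertices one at a time gives an infinite independent set. If so, choosing in the same
way whole independent sets of size `t` gives, for every `m` and `t`, a complete `m`-partite
hypergraph with independent parts of size `t`. As `m → ∞` its edge density tends to `1`, while a
clique has at most `q - 1` vertices in each part, a proportion of at most `(q - 1) / t`; for large
`t` this contradicts the fractional Helly property at any fixed density below `1`.
-/

open Filter Finset

section Ultrafilter

theorem exists_ultrafilter_forall_mem_of_partitionRegular {X : Type*} {p : Set X → Prop}
    (hempty : ¬ p ∅) (huniv : p Set.univ) (hmono : ∀ ⦃s t⦄, s ⊆ t → p s → p t)
    (hunion : ∀ s t, p (s ∪ t) → p s ∨ p t) :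
    ∃ U : Ultrafilter X, ∀ s ∈ U, p s := by
  let F : Filter X := Filter.comk (fun s => ¬ p s) hempty (fun _ ht _ hst => mt (hmono hst) ht)
    (fun s hs t ht hst => (hunion s t hst).elim hs ht)
  have : F.NeBot := by
    rw [← Filter.empty_mem_iff_bot.not.trans Filter.neBot_iff.symm, Filter.mem_comk]
    simpa using huniv
  refine ⟨Ultrafilter.of F, fun s hs => ?_⟩
  by_contra hps
  have hsF : sᶜ ∈ F := Filter.compl_mem_comk.mpr hps
  exact Ultrafilter.compl_mem_iff_notMem.mp (Ultrafilter.of_le F hsF) hs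

/-- A family `L` of finite sets that contains `∅` and, along the filter `U`, almost every
one-point extension of each of its members. -/
def IsExtendable {V : Type*} [DecidableEq V] (U : Filter V) (L : Set (Finset V)) : Prop :=
  ∅ ∈ L ∧ ∀ e ∈ L, ∀ᶠ x in U, insert x e ∈ L

variable {V : Type*} [DecidableEq V]

theorem IsExtendable.of_link {U : Filter V} {q : ℕ} {G L : Set (Finset V)}
    (hL : IsExtendable U L) (hG : ∀ e ∈ L, #e = q → ∀ᶠ x in U, insert x e ∈ G) :
    ∃ L', IsExtendable U L' ∧ ∀ e ∈ L', #e = q + 1 → e ∈ G := by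
  refine ⟨{e | (#e ≤ q → e ∈ L) ∧ (#e = q + 1 → e ∈ G)}, ⟨⟨fun _ => hL.1, by simp⟩, ?_⟩,
    fun e he => he.2⟩
  intro e he
  have hlow : ∀ᶠ x in U, #e < q → insert x e ∈ L :=
    eventually_imp_distrib_left.mpr fun hlt => hL.2 e (he.1 hlt.le)
  have htop : ∀ᶠ x in U, #e = q → insert x e ∈ G :=
    eventually_imp_distrib_left.mpr fun heq => hG e (he.1 heq.le) heq
  filter_upwards [hlow, htop] with x hx_low hx_top
  by_cases hxe : x ∈ e
  · rwa [insert_eq_of_mem hxe]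
  · have hcard : #(insert x e) = #e + 1 := card_insert_of_notMem hxe
    exact ⟨fun h => hx_low (by lia), fun h => hx_top (by lia)⟩

-- The ultrafilter proof of Ramsey's theorem: induct on `q`, passing to the family of those `e`
-- for which `insert x e` lies in `H` for almost all `x`.
theorem exists_isExtendable_forall_mem_or_forall_notMem (U : Ultrafilter V) (q : ℕ)
    (H : Set (Finset V)) :
    (∃ L, IsExtendable (U : Filter V) L ∧ ∀ e ∈ L, #e = q → e ∈ H) ∨
      ∃ L, IsExtendable (U : Filter V) L ∧ ∀ e ∈ L, #e = q → e ∉ H := by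
  induction q generalizing H with
  | zero =>
    have huniv : IsExtendable (U : Filter V) Set.univ := by simp [IsExtendable]
    simp only [card_eq_zero]
    by_cases hempty : ∅ ∈ H
    · exact .inl ⟨_, huniv, by rintro e - rfl; exact hempty⟩
    · exact .inr ⟨_, huniv, by rintro e - rfl; exact hempty⟩
  | succ q ih =>
    obtain ⟨L, hL, hLH⟩ | ⟨L, hL, hLH⟩ := ih {e | ∀ᶠ x in U, insert x e ∈ H}
    · exact .inl (hL.of_link hLH)
    · exact .inr (hL.of_link (G := Hᶜ) fun e he heq =>
        Ultrafilter.eventually_not.mpr (hLH e he heq))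

theorem IsExtendable.eventually_forall_insert_mem {U : Filter V} {L : Set (Finset V)}
    (hL : IsExtendable U L) {E : Finset (Finset V)} (hE : ∀ e ∈ E, e ∈ L) :
    ∀ᶠ x in U, ∀ e ∈ E, insert x e ∈ L :=
  (eventually_all_finset E).mpr fun e he => hL.2 e (hE e he)

theorem IsExtendable.exists_infinite {U : Filter V} [U.NeBot] {L : Set (Finset V)}
    (hL : IsExtendable U L) (hU : U ≤ cofinite) :
    ∃ I : Set V, I.Infinite ∧ ∀ e : Finset V, ↑e ⊆ I → e ∈ L := by
  have hchar : Order.IsOfFiniteCharacter {I : Set V | ∀ e : Finset V, ↑e ⊆ I → e ∈ L} :=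
    fun I => ⟨fun hI J hJI _ e he => hI e (he.trans hJI),
      fun hI e he => hI e he e.finite_toSet e subset_rfl⟩
  obtain ⟨I, -, hI⟩ := hchar.exists_maximal (x := ∅) fun e he => by
    rw [coe_eq_empty.mp (Set.subset_empty_iff.mp he)]
    exact hL.1
  refine ⟨I, fun hfin => ?_, hI.prop⟩
  lift I to Finset V using hfin
  have hnew : ∀ᶠ x in U, x ∉ I := hU I.finite_toSet.compl_mem_cofinite
  have hext : ∀ᶠ x in U, ∀ e ∈ I.powerset, insert x e ∈ L :=
    hL.eventually_forall_insert_mem fun e he => hI.prop e (mem_powerset.mp he)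
  obtain ⟨x, hxI, hx⟩ := (hnew.and hext).exists
  refine hxI (hI.le_of_ge (y := insert x (I : Set V)) (fun e he => ?_) (Set.subset_insert _ _)
    (Set.mem_insert _ _))
  rw [← coe_insert, coe_subset, subset_insert_iff] at he
  by_cases hxe : x ∈ e
  · simpa [insert_erase hxe] using hx _ (mem_powerset.mpr he)
  · exact hI.prop e (by simpa [erase_eq_of_notMem hxe] using he)

theorem subset_or_exists_insert_of_injOn_of_subset_union {ι : Type*} {S I e : Finset V} {c : V → ι}
    {k : ι} (hI : ∀ x ∈ I, c x = k) (he : e ⊆ S ∪ I) (hce : Set.InjOn c e) :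
    e ⊆ S ∨ ∃ x ∈ I, ∃ f ⊆ S, Set.InjOn c f ∧ insert x f = e := by
  by_cases heI : Disjoint e I
  · exact .inl (heI.left_le_of_le_sup_right he)
  · obtain ⟨x, hxe, hxI⟩ := not_disjoint_iff.mp heI
    refine .inr ⟨x, hxI, e.erase x, fun y hy => ?_, hce.mono (coe_subset.mpr (erase_subset x e)),
      insert_erase hxe⟩
    obtain ⟨hyx, hye⟩ := mem_erase.mp hy
    exact (mem_union.mp (he hye)).resolve_right fun hyI =>
      hyx (hce hye hxe ((hI y hyI).trans (hI x hxI).symm))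

theorem IsExtendable.exists_rainbow {U : Filter V} {L : Set (Finset V)}
    (hL : IsExtendable U L) (hU : U ≤ cofinite) {P : Finset V → Prop}
    (hP : ∀ s ∈ U, ∃ I : Finset V, ↑I ⊆ s ∧ P I) (m : ℕ) :
    ∃ (S : Finset V) (c : V → ℕ), (∀ x ∈ S, c x < m) ∧ (∀ i < m, P {x ∈ S | c x = i}) ∧
      ∀ e ⊆ S, Set.InjOn c e → e ∈ L := by
  classical
  induction m with
  | zero => exact ⟨∅, 0, by simp, by simp, fun e he _ => subset_empty.mp he ▸ hL.1⟩
  | succ m ih =>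
    obtain ⟨S, c, hcolor, hpart, hrainbow⟩ := ih
    have hnew : ∀ᶠ x in U, x ∉ S := hU S.finite_toSet.compl_mem_cofinite
    have hext : ∀ᶠ x in U, ∀ e ∈ {e ∈ S.powerset | Set.InjOn c (e : Finset V)}, insert x e ∈ L :=
      hL.eventually_forall_insert_mem fun e he =>
        hrainbow e (mem_powerset.mp (mem_filter.mp he).1) (mem_filter.mp he).2
    obtain ⟨I, hIsub, hPI⟩ := hP _ (hnew.and hext)
    have hIS : ∀ x ∈ I, x ∉ S := fun x hx => (hIsub hx).1
    let c' : V → ℕ := fun x => if x ∈ S then c x else m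
    have hc'S {e : Finset V} (he : e ⊆ S) : Set.EqOn c' c e := fun x hx => if_pos (he hx)
    have hc'I : ∀ x ∈ I, c' x = m := fun x hx => if_neg (hIS x hx)
    refine ⟨S ∪ I, c', by grind, fun i hi => ?_, fun e he hce => ?_⟩
    · obtain hlt | rfl := Nat.lt_succ_iff_lt_or_eq.mp hi
      · have hold : {x ∈ S ∪ I | c' x = i} = {x ∈ S | c x = i} := by grind
        exact hold ▸ hpart i hlt
      · have hlast : {x ∈ S ∪ I | c' x = i} = I := by grind
        exact hlast.symm ▸ hPI
    · obtain heS | ⟨x, hxI, f, hfS, hcf, rfl⟩ :=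
        subset_or_exists_insert_of_injOn_of_subset_union hc'I he hce
      · exact hrainbow e heS (hce.congr (hc'S heS))
      · exact (hIsub hxI).2 f (mem_filter.mpr ⟨mem_powerset.mpr hfS, hcf.congr (hc'S hfS)⟩)

end Ultrafilter

section Rainbow

variable {ι V : Type*} [DecidableEq ι]

open Classical in
theorem prod_card_fiber_le_card_rainbow (S : Finset V) (c : V → ι) (s : Finset ι) :
    ∏ i ∈ s, #{x ∈ S | c x = i} ≤
      #{e ∈ S.powerset | Set.InjOn c (e : Finset V) ∧ e.image c = s} := by
  let fibers : s → Finset V := fun i => {x ∈ S | c x = i}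
  have hcolor {g : s → V} (hg : g ∈ Fintype.piFinset fibers) (i : s) : c (g i) = i :=
    (mem_filter.mp (Fintype.mem_piFinset.mp hg i)).2
  have hmem {g : s → V} (hg : g ∈ Fintype.piFinset fibers) (i : s) : g i ∈ S :=
    (mem_filter.mp (Fintype.mem_piFinset.mp hg i)).1
  rw [← prod_coe_sort, ← Fintype.card_piFinset fibers]
  refine card_le_card_of_injOn (fun g => univ.image g) (fun g hg => ?_) fun g hg g' hg' heq => ?_
  · simp only [coe_filter, Set.mem_ofPred_eq, mem_powerset, image_image]
    refine ⟨image_subset_iff.mpr fun i _ => hmem hg i, ?_, ?_⟩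
    · simp only [coe_image, coe_univ, Set.image_univ]
      rintro _ ⟨i, rfl⟩ _ ⟨j, rfl⟩ hij
      rw [hcolor hg, hcolor hg] at hij
      rw [Subtype.ext hij]
    · rw [show c ∘ g = Subtype.val from funext (hcolor hg), univ_eq_attach, attach_image_val]
  · funext i
    have hgi : g i ∈ univ.image g' := heq.subset (mem_image_of_mem g (mem_univ i))
    obtain ⟨j, -, hj⟩ := mem_image.mp hgi
    have hij : j = i := Subtype.ext (by rw [← hcolor hg' j, hj, hcolor hg i])
    rw [← hj, hij]

open Classical in
theorem choose_mul_pow_le_card_rainbow {S : Finset V} {c : V → ι} {s : Finset ι} {n : ℕ}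
    (hmaps : ∀ x ∈ S, c x ∈ s) (hfiber : ∀ i ∈ s, n ≤ #{x ∈ S | c x = i}) (q : ℕ) :
    (#s).choose q * n ^ q ≤ #{e ∈ S.powersetCard q | Set.InjOn c (e : Finset V)} := by
  rw [← card_powersetCard, mul_comm]
  refine mul_card_image_le_card_of_maps_to (f := image c) (fun e he => ?_) _ fun r hr => ?_
  · simp only [mem_filter, mem_powersetCard] at he ⊢
    exact ⟨image_subset_iff.mpr fun x hx => hmaps x (he.1.1 hx),
      (card_image_of_injOn he.2).trans he.1.2⟩
  · obtain ⟨hrs, hrq⟩ := mem_powersetCard.mp hr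
    calc n ^ q = ∏ _i ∈ r, n := by rw [prod_const, hrq]
      _ ≤ ∏ i ∈ r, #{x ∈ S | c x = i} := prod_le_prod' fun i hi => hfiber i (hrs hi)
      _ ≤ #{e ∈ S.powerset | Set.InjOn c (e : Finset V) ∧ e.image c = r} :=
        prod_card_fiber_le_card_rainbow S c r
      _ ≤ #{e ∈ {e ∈ S.powersetCard q | Set.InjOn c (e : Finset V)} | e.image c = r} := by
        refine card_le_card fun e he => ?_
        simp only [mem_filter, mem_powerset, mem_powersetCard] at he ⊢
        exact ⟨⟨⟨he.1, by rw [← card_image_of_injOn he.2.1, he.2.2, hrq]⟩, he.2.1⟩, he.2.2⟩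

end Rainbow

section Hypergraph

variable {V : Type*} {q : ℕ} {H : Set (Finset V)}

theorem IsIndep.mono {A B : Set V} (hB : IsIndep q H B) (hAB : A ⊆ B) : IsIndep q H A :=
  fun e he => hB e (he.trans hAB)

theorem IsClique.mono {K K' : Finset V} (hK : IsClique q H K) (h : K' ⊆ K) : IsClique q H K' :=
  fun e he => hK e (he.trans h)

theorem IsClique.card_lt_of_isIndep {K : Finset V} (hK : IsClique q H K)
    (hind : IsIndep q H (K : Set V)) : #K < q := by
  by_contra! hqK
  obtain ⟨e, heK, heq⟩ := exists_subset_card_eq hqK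
  exact hind e (coe_subset.mpr heK) heq (hK e heK heq)

/-- `A` contains independent sets of every finite size. This is the notion of largeness to which
the ultrafilter is adapted. -/
def HasLargeIndep (q : ℕ) (H : Set (Finset V)) (A : Set V) : Prop :=
  ∀ n : ℕ, ∃ I : Finset V, ↑I ⊆ A ∧ #I = n ∧ IsIndep q H (I : Set V)

namespace HasLargeIndep

theorem mono {A B : Set V} (hA : HasLargeIndep q H A) (hAB : A ⊆ B) : HasLargeIndep q H B :=
  fun n => (hA n).imp fun _ hI => ⟨hI.1.trans hAB, hI.2⟩

theorem of_le_card {A : Set V}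
    (h : ∀ n : ℕ, ∃ I : Finset V, ↑I ⊆ A ∧ n ≤ #I ∧ IsIndep q H (I : Set V)) :
    HasLargeIndep q H A := by
  intro n
  obtain ⟨I, hIA, hnI, hI⟩ := h n
  obtain ⟨J, hJI, hJ⟩ := exists_subset_card_eq hnI
  exact ⟨J, (coe_subset.mpr hJI).trans hIA, hJ, hI.mono (coe_subset.mpr hJI)⟩

theorem exists_forall_card_lt_of_not {A : Set V} (h : ¬ HasLargeIndep q H A) :
    ∃ n, ∀ I : Finset V, ↑I ⊆ A → IsIndep q H (I : Set V) → #I < n := by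
  by_contra! hcon
  exact h (of_le_card fun n => (hcon n).imp fun _ hI => ⟨hI.1, hI.2.2, hI.2.1⟩)

theorem infinite {A : Set V} (hA : HasLargeIndep q H A) : A.Infinite := by
  intro hfin
  obtain ⟨I, hIA, hcard, -⟩ := hA (#hfin.toFinset + 1)
  have hle : #I ≤ #hfin.toFinset := card_le_card fun x hx => hfin.mem_toFinset.mpr (hIA hx)
  lia

theorem union {A B : Set V} (h : HasLargeIndep q H (A ∪ B)) :
    HasLargeIndep q H A ∨ HasLargeIndep q H B := by
  classical
  by_contra! hAB
  obtain ⟨a, ha⟩ := exists_forall_card_lt_of_not hAB.1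
  obtain ⟨b, hb⟩ := exists_forall_card_lt_of_not hAB.2
  obtain ⟨I, hIAB, hIcard, hI⟩ := h (a + b)
  have hA := ha {x ∈ I | x ∈ A} (fun x hx => (mem_filter.mp hx).2)
    (hI.mono (coe_subset.mpr (filter_subset _ I)))
  have hB := hb {x ∈ I | x ∉ A}
    (fun x hx => (hIAB (mem_filter.mp hx).1).resolve_left (mem_filter.mp hx).2)
    (hI.mono (coe_subset.mpr (filter_subset _ I)))
  have hsplit := card_filter_add_card_filter_not (s := I) (· ∈ A)
  lia

theorem exists_ultrafilter (h : HasLargeIndep q H Set.univ) :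
    ∃ U : Ultrafilter V, ∀ A ∈ U, HasLargeIndep q H A :=
  exists_ultrafilter_forall_mem_of_partitionRegular
    (fun hempty => hempty.infinite Set.finite_empty) h (fun _ _ hst hs => hs.mono hst)
    fun _ _ => union

end HasLargeIndep

/-- The coloring `c` with colors `0, …, m - 1` splits `S` into `m` independent parts of size `t`,
and every `q`-element subset of `S` meeting each part at most once is an edge. -/
structure IsCompletePartite (q : ℕ) (H : Set (Finset V)) (S : Finset V) (c : V → ℕ)
    (m t : ℕ) : Prop where
  color_lt : ∀ x ∈ S, c x < m
  card_part : ∀ i < m, #{x ∈ S | c x = i} = t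
  isIndep_part : ∀ i < m, IsIndep q H ({x ∈ S | c x = i} : Finset V)
  rainbow_mem : ∀ e ⊆ S, Set.InjOn c e → #e = q → e ∈ H

namespace IsCompletePartite

variable {S : Finset V} {c : V → ℕ} {m t : ℕ}

theorem card_eq (h : IsCompletePartite q H S c m t) : #S = m * t := by
  rw [card_eq_sum_card_fiberwise (t := range m) fun x hx => by simpa using h.color_lt x hx,
    sum_congr rfl fun i hi => h.card_part i (mem_range.mp hi), sum_const, card_range, smul_eq_mul]

theorem choose_mul_pow_le_ncard (h : IsCompletePartite q H S c m t) :
    m.choose q * t ^ q ≤ {e : Finset V | e ∈ H ∧ e ⊆ S}.ncard := by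
  classical
  calc m.choose q * t ^ q = (#(range m)).choose q * t ^ q := by rw [card_range]
    _ ≤ #{e ∈ S.powersetCard q | Set.InjOn c (e : Finset V)} :=
      choose_mul_pow_le_card_rainbow (fun x hx => mem_range.mpr (h.color_lt x hx))
        (fun i hi => (h.card_part i (mem_range.mp hi)).ge) q
    _ = Set.ncard (SetLike.coe {e ∈ S.powersetCard q | Set.InjOn c (e : Finset V)}) :=
      (Set.ncard_coe_finset _).symm
    _ ≤ {e : Finset V | e ∈ H ∧ e ⊆ S}.ncard := by
      refine Set.ncard_le_ncard (fun e he => ?_)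
        (S.powerset.finite_toSet.subset fun e (he : e ∈ H ∧ e ⊆ S) => mem_powerset.mpr he.2)
      simp only [coe_filter, mem_powersetCard, Set.mem_ofPred_eq] at he
      exact ⟨h.rainbow_mem e he.1.1 he.2 he.1.2, he.1.1⟩

theorem card_le_of_isClique (h : IsCompletePartite q H S c m t) {K : Finset V} (hKS : K ⊆ S)
    (hK : IsClique q H K) : #K ≤ (q - 1) * m := by
  rw [← card_range m]
  refine card_le_mul_card_image_of_maps_to (f := c)
    (fun x hx => mem_range.mpr (h.color_lt x (hKS hx))) _ fun i hi => Nat.le_sub_one_of_lt ?_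
  exact (hK.mono (filter_subset _ K)).card_lt_of_isIndep
    ((h.isIndep_part i (mem_range.mp hi)).mono (coe_subset.mpr (filter_subset_filter _ hKS)))

end IsCompletePartite

/-- The instance of the fractional Helly property for one fixed density `α`. -/
def FracHellyAt (q : ℕ) (H : Set (Finset V)) (α : ℝ) : Prop :=
  ∃ β : ℝ, 0 < β ∧ ∀ S : Finset V,
    α * (S.card.choose q : ℝ) ≤ ({e : Finset V | e ∈ H ∧ e ⊆ S}.ncard : ℝ) →
    ∃ K : Finset V, K ⊆ S ∧ IsClique q H K ∧ β * (S.card : ℝ) ≤ (K.card : ℝ)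

theorem eventually_mul_choose_mul_le {α : ℝ} (hα : α < 1) (q t : ℕ) :
    ∀ᶠ m : ℕ in atTop, α * ((m * t).choose q : ℝ) ≤ (m.choose q : ℝ) * (t : ℝ) ^ q := by
  obtain hα0 | hα0 := le_total α 0
  · exact .of_forall fun m => (mul_nonpos_of_nonpos_of_nonneg hα0 (by positivity)).trans
      (by positivity)
  · filter_upwards [(isEquivalent_choose q).isLittleO.def (sub_pos.mpr hα)] with m hm
    have hlower : α * ((m : ℝ) ^ q / q.factorial) ≤ m.choose q := by
      rw [Pi.sub_apply, Real.norm_eq_abs, Real.norm_of_nonneg (by positivity)] at hm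
      linarith [(abs_le.mp hm).1]
    calc α * ((m * t).choose q : ℝ) ≤ α * (((m * t : ℕ) : ℝ) ^ q / q.factorial) := by
          gcongr
          exact Nat.choose_le_pow_div q (m * t)
      _ = α * ((m : ℝ) ^ q / q.factorial) * (t : ℝ) ^ q := by push_cast; ring
      _ ≤ m.choose q * (t : ℝ) ^ q := by gcongr

theorem FracHellyAt.exists_forall_not_isCompletePartite {α : ℝ} (hα : α < 1)
    (h : FracHellyAt q H α) : ∃ m t, ∀ S c, ¬ IsCompletePartite q H S c m t := by
  obtain ⟨β, hβ, hclique⟩ := h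
  obtain ⟨t, ht⟩ := exists_nat_gt (((q - 1 : ℕ) : ℝ) / β)
  obtain ⟨m, hdense, hm⟩ :=
    ((eventually_mul_choose_mul_le hα q t).and (eventually_gt_atTop 0)).exists
  refine ⟨m, t, fun S c hS => ?_⟩
  obtain ⟨K, hKS, hK, hβK⟩ := hclique S (by
    rw [hS.card_eq]
    exact hdense.trans (mod_cast hS.choose_mul_pow_le_ncard))
  have hKle : (#K : ℝ) ≤ ((q - 1 : ℕ) : ℝ) * m := mod_cast hS.card_le_of_isClique hKS hK
  have hlt : ((q - 1 : ℕ) : ℝ) * m < β * #S := by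
    rw [div_lt_iff₀' hβ] at ht
    calc ((q - 1 : ℕ) : ℝ) * m < β * t * m := mul_lt_mul_of_pos_right ht (mod_cast hm)
      _ = β * #S := by rw [hS.card_eq]; push_cast; ring
  exact (hKle.trans_lt hlt).not_ge hβK

theorem exists_infinite_isIndep_or_forall_isCompletePartite
    (h : HasLargeIndep q H Set.univ) :
    (∃ I : Set V, I.Infinite ∧ IsIndep q H I) ∨
      ∀ m t, ∃ S c, IsCompletePartite q H S c m t := by
  classical
  obtain ⟨U, hU⟩ := h.exists_ultrafilter
  have hcofinite : (U : Filter V) ≤ cofinite :=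
    U.le_cofinite_or_eq_pure.resolve_right fun ⟨a, ha⟩ =>
      (hU {a} (by simp [ha])).infinite (Set.finite_singleton a)
  obtain ⟨L, hL, hLH⟩ | ⟨L, hL, hLH⟩ :=
    exists_isExtendable_forall_mem_or_forall_notMem U q H
  · right
    intro m t
    obtain ⟨S, c, hcolor, hpart, hrainbow⟩ :=
      hL.exists_rainbow hcofinite (fun A hA => hU A hA t) m
    exact ⟨S, c, hcolor, fun i hi => (hpart i hi).1, fun i hi => (hpart i hi).2,
      fun e he hce => hLH e (hrainbow e he hce)⟩
  · left
    obtain ⟨I, hinf, hI⟩ := hL.exists_infinite hcofinite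
    exact ⟨I, hinf, fun e he => hLH e (hI e he)⟩

end Hypergraph

theorem stmt_0_general {V : Type*} {q : ℕ} {H : Set (Finset V)} {α : ℝ} (hα : α < 1)
    (hfh : FracHellyAt q H α)
    (hind : ∀ n : ℕ, ∃ I : Finset V, IsIndep q H ↑I ∧ n ≤ I.card) :
    ∃ I : Set V, I.Infinite ∧ IsIndep q H I := by
  have hlarge : HasLargeIndep q H Set.univ :=
    .of_le_card fun n => (hind n).imp fun I hI => ⟨Set.subset_univ _, hI.2, hI.1⟩
  obtain ⟨m, t, hmt⟩ := hfh.exists_forall_not_isCompletePartite hα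
  refine (exists_infinite_isIndep_or_forall_isCompletePartite hlarge).resolve_right fun h => ?_
  obtain ⟨S, c, hS⟩ := h m t
  exact hmt S c hS

/-- If a `q`-uniform hypergraph satisfies the fractional Helly property
and has arbitrarily large finite independent sets, then it has an infinite independent set. -/
theorem stmt_0 {V : Type*} (q : ℕ) (hq : 1 ≤ q) (H : Set (Finset V))
    (huni : IsUniform q H) (hfh : FracHelly q H)
    (hind : ∀ n : ℕ, ∃ I : Finset V, IsIndep q H ↑I ∧ n ≤ I.card) :
    ∃ I : Set V, I.Infinite ∧ IsIndep q H I :=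
  stmt_0_general one_half_lt_one (hfh _ one_half_pos) hind
end

section
/- Let q ≥ 1 be an integer and let H be a q-uniform hypergraph on a vertex set V. Suppose β > 0 is a real number witnessing the fractional Helly property of H for α = q!/q^q, i.e., for every finite subset S of V, if the number of edges of H contained in S is at least (q!/q^q)·(|S| choose q), then S contains a clique of H of size at least β·|S|. Then for every integer t with t ≥ q and t > (q-1)/β, H contains no M_q^{(q)}(t)-configuration. -/
/-- `Vs` is an `M_s^{(q)}(t)`-configuration in `H`: `s` pairwise disjoint `t`-element
independent sets such that every `q`-element vertex set meeting each part in at most one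
vertex, with all its vertices in the union of the parts, is an edge. -/
def IsMConfig {V : Type*} (q s t : ℕ) (H : Set (Finset V)) (Vs : Fin s → Finset V) : Prop :=
  (∀ i j, i ≠ j → Disjoint (Vs i) (Vs j)) ∧
  (∀ i, (Vs i).card = t) ∧
  (∀ i, IsIndep q H ↑(Vs i)) ∧
  (∀ e : Finset V, e.card = q → (∀ x ∈ e, ∃ i, x ∈ Vs i) →
    (∀ i, ∀ x ∈ e, ∀ y ∈ e, x ∈ Vs i → y ∈ Vs i → x = y) → e ∈ H)

/-!
Let `S` be the union of the parts of an `M_s^{(q)}(t)`-configuration. Choosing `q` parts and one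
vertex in each of them gives `(s choose q) * t ^ q` edges inside `S`, and `|S| = s * t`, so the edge
density of `S` is at least `s (s - 1) ⋯ (s - q + 1) / s ^ q`, which is `q! / q ^ q` when `s = q`.
The fractional Helly property at this density yields a clique on `β * s * t` vertices of `S`. A
clique has at most `q - 1` vertices in each independent part, so `β * t ≤ q - 1`.
-/

open Finset Function

/-- The `q`-uniform hypergraph `H` has the fractional Helly property at density `α` with clique
ratio `β`: every finite vertex set `S` spanning at least `α * (|S| choose q)` edges contains a
clique with at least `β * |S|` vertices. -/
structure HasFractionalHelly {V : Type*} (q : ℕ) (H : Set (Finset V)) (α β : ℝ) : Prop where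
  isUniform : IsUniform q H
  exists_isClique (S : Finset V) :
    α * (#S).choose q ≤ {e : Finset V | e ∈ H ∧ e ⊆ S}.ncard →
      ∃ K ⊆ S, IsClique q H K ∧ β * #S ≤ #K

lemma descFactorial_mul_choose_mul_le (q s t : ℕ) :
    s.descFactorial q * (s * t).choose q ≤ s.choose q * t ^ q * s ^ q :=
  calc s.descFactorial q * (s * t).choose q
      = s.choose q * (s * t).descFactorial q := by
        simp only [Nat.descFactorial_eq_factorial_mul_choose]; ring
    _ ≤ s.choose q * (s * t) ^ q := by gcongr; exact Nat.descFactorial_le_pow _ _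
    _ = s.choose q * t ^ q * s ^ q := by ring

section Transversals

variable {ι V : Type*} {P : ι → Finset V}

lemma eq_of_mem_of_mem_of_pairwise_disjoint (hP : Pairwise (Disjoint on P)) {i j : ι} {x : V}
    (hi : x ∈ P i) (hj : x ∈ P j) : i = j :=
  hP.eq (Finset.not_disjoint_iff.2 ⟨x, hi, hj⟩)

variable [DecidableEq V]

lemma image_univ_inter_eq_singleton [Fintype ι] (hP : Pairwise (Disjoint on P)) {f : ι → V}
    (hf : ∀ i, f i ∈ P i) (i : ι) : univ.image f ∩ P i = {f i} := by
  ext x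
  simp only [mem_inter, mem_image, mem_univ, true_and, mem_singleton]
  constructor
  · rintro ⟨⟨j, rfl⟩, hj⟩
    rw [eq_of_mem_of_mem_of_pairwise_disjoint hP (hf j) hj]
  · rintro rfl
    exact ⟨⟨i, rfl⟩, hf i⟩

variable [DecidableEq ι]

section Fintype

variable [Fintype ι]

/-- The sets obtained by choosing one vertex from each part of the family `P`. -/
def transversals (P : ι → Finset V) : Finset (Finset V) :=
  (Fintype.piFinset P).image fun f ↦ univ.image f

lemma mem_transversals {e : Finset V} :
    e ∈ transversals P ↔ ∃ f : ι → V, (∀ i, f i ∈ P i) ∧ univ.image f = e := by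
  simp only [transversals, mem_image, Fintype.mem_piFinset]

lemma card_inter_of_mem_transversals (hP : Pairwise (Disjoint on P)) {e : Finset V}
    (he : e ∈ transversals P) (i : ι) : #(e ∩ P i) = 1 := by
  obtain ⟨f, hf, rfl⟩ := mem_transversals.1 he
  rw [image_univ_inter_eq_singleton hP hf, card_singleton]

lemma exists_mem_of_mem_transversals {e : Finset V} (he : e ∈ transversals P) {x : V}
    (hx : x ∈ e) : ∃ i, x ∈ P i := by
  obtain ⟨f, hf, rfl⟩ := mem_transversals.1 he
  obtain ⟨i, -, rfl⟩ := mem_image.1 hx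
  exact ⟨i, hf i⟩

lemma card_of_mem_transversals (hP : Pairwise (Disjoint on P)) {e : Finset V}
    (he : e ∈ transversals P) : #e = Fintype.card ι := by
  obtain ⟨f, hf, rfl⟩ := mem_transversals.1 he
  refine card_image_of_injective _ fun i j hij ↦ ?_
  exact eq_of_mem_of_mem_of_pairwise_disjoint hP (hf i) (hij ▸ hf j)

lemma card_transversals (hP : Pairwise (Disjoint on P)) : #(transversals P) = ∏ i, #(P i) := by
  rw [transversals, card_image_of_injOn, Fintype.card_piFinset]
  intro f hf g hg (hfg : univ.image f = univ.image g)
  rw [mem_coe, Fintype.mem_piFinset] at hf hg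
  ext i
  rw [← singleton_inj, ← image_univ_inter_eq_singleton hP hf, hfg,
    image_univ_inter_eq_singleton hP hg]

end Fintype

lemma mem_index_iff_of_mem_transversals (hP : Pairwise (Disjoint on P)) {I : Finset ι}
    {e : Finset V} (he : e ∈ transversals fun i : I ↦ P i) {i : ι} :
    i ∈ I ↔ (e ∩ P i).Nonempty := by
  constructor
  · intro hi
    have hcard := card_inter_of_mem_transversals
      (hP.comp_of_injective Subtype.val_injective) he ⟨i, hi⟩
    exact card_pos.1 (hcard ▸ one_pos)
  · rintro ⟨x, hx⟩
    obtain ⟨hxe, hxi⟩ := mem_inter.1 hx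
    obtain ⟨j, hxj⟩ := exists_mem_of_mem_transversals he hxe
    exact eq_of_mem_of_mem_of_pairwise_disjoint hP hxj hxi ▸ j.2

variable [Fintype ι]

/-- The sets obtained by choosing `q` parts of the family `P` and one vertex from each chosen
part. -/
def partialTransversals (q : ℕ) (P : ι → Finset V) : Finset (Finset V) :=
  (univ.powersetCard q).biUnion fun I : Finset ι ↦ transversals fun i : I ↦ P i

lemma mem_partialTransversals {q : ℕ} {e : Finset V} :
    e ∈ partialTransversals q P ↔
      ∃ I : Finset ι, #I = q ∧ e ∈ transversals fun i : I ↦ P i := by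
  simp only [partialTransversals, mem_biUnion, mem_powersetCard_univ]

lemma card_partialTransversals (hP : Pairwise (Disjoint on P)) (q : ℕ) :
    #(partialTransversals q P) = ∑ I ∈ univ.powersetCard q, ∏ i ∈ I, #(P i) := by
  rw [partialTransversals, card_biUnion]
  · refine sum_congr rfl fun I _ ↦ ?_
    rw [card_transversals (hP.comp_of_injective Subtype.val_injective),
      prod_coe_sort I fun i ↦ #(P i)]
  · intro I _ J _ hIJ
    refine Finset.disjoint_left.2 fun e heI heJ ↦ hIJ ?_
    ext i
    rw [mem_index_iff_of_mem_transversals hP heI, mem_index_iff_of_mem_transversals hP heJ]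

lemma card_of_mem_partialTransversals (hP : Pairwise (Disjoint on P)) {q : ℕ} {e : Finset V}
    (he : e ∈ partialTransversals q P) : #e = q := by
  obtain ⟨I, hI, heI⟩ := mem_partialTransversals.1 he
  rw [card_of_mem_transversals (hP.comp_of_injective Subtype.val_injective) heI,
    Fintype.card_coe, hI]

lemma exists_mem_of_mem_partialTransversals {q : ℕ} {e : Finset V}
    (he : e ∈ partialTransversals q P) {x : V} (hx : x ∈ e) : ∃ i, x ∈ P i := by
  obtain ⟨I, -, he⟩ := mem_partialTransversals.1 he
  obtain ⟨i, hi⟩ := exists_mem_of_mem_transversals he hx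
  exact ⟨i, hi⟩

lemma card_inter_le_one_of_mem_partialTransversals (hP : Pairwise (Disjoint on P)) {q : ℕ}
    {e : Finset V} (he : e ∈ partialTransversals q P) (i : ι) : #(e ∩ P i) ≤ 1 := by
  obtain ⟨I, -, he⟩ := mem_partialTransversals.1 he
  by_cases hi : i ∈ I
  · exact (card_inter_of_mem_transversals
      (hP.comp_of_injective Subtype.val_injective) he ⟨i, hi⟩).le
  · rw [mem_index_iff_of_mem_transversals hP he, not_nonempty_iff_eq_empty] at hi
    simp only [hi, card_empty, zero_le]

end Transversals

section Hypergraph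

variable {V : Type*} {q : ℕ} {H : Set (Finset V)}

lemma IsClique.card_inter_lt_of_isIndep [DecidableEq V] {K I : Finset V} (hK : IsClique q H K)
    (hI : IsIndep q H I) : #(K ∩ I) < q := by
  by_contra! hq
  obtain ⟨e, he, hcard⟩ := exists_subset_card_eq hq
  exact hI e (coe_subset.2 (he.trans inter_subset_right)) hcard
    (hK e (he.trans inter_subset_left) hcard)

-- This is `#K ≤ #T * (q - 1)`, rearranged to avoid truncated subtraction.
lemma IsClique.card_add_card_le_mul_of_subset_biUnion [DecidableEq V] {ι : Type*} {T : Finset ι}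
    {P : ι → Finset V} {K : Finset V} (hK : IsClique q H K) (hP : ∀ i ∈ T, IsIndep q H (P i))
    (hKP : K ⊆ T.biUnion P) : #K + #T ≤ #T * q :=
  calc #K + #T = #(T.biUnion fun i ↦ K ∩ P i) + #T := by
        rw [← inter_biUnion, inter_eq_left.2 hKP]
    _ ≤ ∑ i ∈ T, #(K ∩ P i) + #T := by gcongr; exact card_biUnion_le
    _ = ∑ i ∈ T, (#(K ∩ P i) + 1) := by rw [sum_add_distrib, card_eq_sum_ones T]
    _ ≤ #T * q := sum_le_card_nsmul T _ q fun i hi ↦ hK.card_inter_lt_of_isIndep (hP i hi)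

lemma finite_setOf_mem_and_subset (H : Set (Finset V)) (S : Finset V) :
    {e : Finset V | e ∈ H ∧ e ⊆ S}.Finite :=
  S.powerset.finite_toSet.subset fun _ he ↦ mem_coe.2 (mem_powerset.2 he.2)

namespace IsMConfig

variable {s t : ℕ} {P : Fin s → Finset V}

lemma pairwise_disjoint (h : IsMConfig q s t H P) : Pairwise (Disjoint on P) :=
  fun i j hij ↦ h.1 i j hij

lemma card_part (h : IsMConfig q s t H P) (i : Fin s) : #(P i) = t :=
  h.2.1 i

lemma isIndep_part (h : IsMConfig q s t H P) (i : Fin s) : IsIndep q H (P i) :=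
  h.2.2.1 i

variable [DecidableEq V]

lemma mem_of_mem_partialTransversals (h : IsMConfig q s t H P) {e : Finset V}
    (he : e ∈ partialTransversals q P) : e ∈ H := by
  refine h.2.2.2 e (card_of_mem_partialTransversals h.pairwise_disjoint he)
    (fun x hx ↦ exists_mem_of_mem_partialTransversals he hx) fun i x hx y hy hxi hyi ↦ ?_
  exact card_le_one.1 (card_inter_le_one_of_mem_partialTransversals h.pairwise_disjoint he i)
    x (mem_inter.2 ⟨hx, hxi⟩) y (mem_inter.2 ⟨hy, hyi⟩)

lemma card_biUnion (h : IsMConfig q s t H P) : #(univ.biUnion P) = s * t := by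
  rw [Finset.card_biUnion fun i _ j _ hij ↦ h.pairwise_disjoint hij,
    sum_const_nat fun i _ ↦ h.card_part i, card_univ, Fintype.card_fin]

lemma card_partialTransversals (h : IsMConfig q s t H P) :
    #(partialTransversals q P) = s.choose q * t ^ q := by
  simp only [_root_.card_partialTransversals h.pairwise_disjoint, h.card_part, prod_const]
  rw [sum_const_nat fun I hI ↦ by rw [mem_powersetCard_univ.1 hI], card_powersetCard, card_univ,
    Fintype.card_fin]

lemma choose_mul_pow_le_ncard (h : IsMConfig q s t H P) :
    s.choose q * t ^ q ≤ {e : Finset V | e ∈ H ∧ e ⊆ univ.biUnion P}.ncard := by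
  rw [← h.card_partialTransversals, ← Set.ncard_coe_finset]
  refine Set.ncard_le_ncard (fun e he ↦ ⟨h.mem_of_mem_partialTransversals he, fun x hx ↦ ?_⟩)
    (finite_setOf_mem_and_subset H _)
  obtain ⟨i, hi⟩ := exists_mem_of_mem_partialTransversals he hx
  exact mem_biUnion.2 ⟨i, mem_univ i, hi⟩

lemma density_mul_choose_le_ncard (h : IsMConfig q s t H P) :
    (s.descFactorial q / s ^ q : ℝ) * (#(univ.biUnion P)).choose q ≤
      {e : Finset V | e ∈ H ∧ e ⊆ univ.biUnion P}.ncard := by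
  rw [h.card_biUnion, div_mul_eq_mul_div]
  refine div_le_of_le_mul₀ (by positivity) (by positivity) ?_
  exact_mod_cast (descFactorial_mul_choose_mul_le q s t).trans
    (Nat.mul_le_mul_right _ h.choose_mul_pow_le_ncard)

end IsMConfig

end Hypergraph

theorem stmt_1_general {V : Type*} {q s t : ℕ} (hs : 0 < s) {H : Set (Finset V)} {β : ℝ}
    (hH : HasFractionalHelly q H (s.descFactorial q / s ^ q) β) {P : Fin s → Finset V}
    (hP : IsMConfig q s t H P) : β * t ≤ q - 1 := by
  classical
  obtain ⟨K, hKP, hK, hβK⟩ := hH.exists_isClique (univ.biUnion P) hP.density_mul_choose_le_ncard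
  have hK_le : #K + s ≤ s * q := by
    simpa only [card_univ, Fintype.card_fin] using
      hK.card_add_card_le_mul_of_subset_biUnion (fun i _ ↦ hP.isIndep_part i) hKP
  have hK_le' : (#K + s : ℝ) ≤ s * q := by exact_mod_cast hK_le
  rw [hP.card_biUnion, Nat.cast_mul] at hβK
  have hs' : (0 : ℝ) < s := Nat.cast_pos.2 hs
  refine le_of_mul_le_mul_left ?_ hs'
  linarith

/-- If `β > 0` witnesses the fractional Helly property of the `q`-uniform
hypergraph `H` for `α = q!/q^q`, then for every `t ≥ q` with `t > (q-1)/β`, `H` contains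
no `M_q^{(q)}(t)`-configuration. -/
theorem stmt_1 {V : Type*} (q : ℕ) (hq : 1 ≤ q) (H : Set (Finset V))
    (huni : IsUniform q H) (β : ℝ) (hβ : 0 < β)
    (hfh : ∀ S : Finset V,
      ((q.factorial : ℝ) / ((q : ℝ) ^ q)) * (S.card.choose q : ℝ)
          ≤ ({e : Finset V | e ∈ H ∧ e ⊆ S}.ncard : ℝ) →
      ∃ K : Finset V, K ⊆ S ∧ IsClique q H K ∧ β * (S.card : ℝ) ≤ (K.card : ℝ))
    (t : ℕ) (htq : q ≤ t) (htβ : ((q : ℝ) - 1) / β < (t : ℝ)) :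
    ¬ ∃ Vs : Fin q → Finset V, IsMConfig q q t H Vs := by
  rintro ⟨Vs, hVs⟩
  have hH : HasFractionalHelly q H (q.descFactorial q / q ^ q) β :=
    ⟨huni, by rwa [Nat.descFactorial_self]⟩
  exact ((div_lt_iff₀' hβ).1 htβ).not_ge (stmt_1_general hq hH hVs)
end

section
/- Let q ≥ 2 be an integer, let V be a countably infinite set partitioned into q-element blocks B_1, B_2, …, and let H be the q-uniform hypergraph on V whose edges are exactly the q-element subsets of V that are not equal to any block B_n (the complement of an infinite matching). Then: (1) every finite subset S of V contains a clique of H of size at least ((q-1)/q)·|S|, and consequently H satisfies the fractional Helly property; and (2) for every integer s ≥ q, H contains an M_s^{(q)}(q)-configuration. -/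
/-!
In the complement of a matching, a set is a clique as soon as it contains no block. The
blocks inside a finite set `S` are disjoint, so there are at most `|S| / q` of them, and deleting
one vertex from each leaves a clique of size at least `|S| - |S| / q`. On the other hand, any `s`
blocks form an `M_s^{(q)}(q)`-configuration: a transversal of them meets each block in at most one
vertex, whereas a block has at least two.
-/

open Function

/-- The complement of the family `B` inside the complete `q`-uniform hypergraph. When `B` is a
family of pairwise disjoint `q`-sets, it is the complement of a (not necessarily perfect)
matching. -/
def complFamily {V ι : Type*} (q : ℕ) (B : ι → Finset V) : Set (Finset V) :=
  {e | e.card = q ∧ ∀ i, e ≠ B i}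

theorem injective_of_pairwise_disjoint_of_ne_bot {α ι : Type*} [PartialOrder α] [OrderBot α]
    {f : ι → α} (hdisj : Pairwise (Disjoint on f)) (hne : ∀ i, f i ≠ ⊥) : Injective f := by
  intro i j hij
  refine hdisj.eq fun hd => hne i ?_
  rw [onFun, ← hij] at hd
  exact disjoint_self.1 hd

section

variable {V ι : Type*} {q : ℕ} {B : ι → Finset V}

theorem card_mul_le_card_of_pairwise_disjoint (hdisj : Pairwise (Disjoint on B)) {I : Finset ι}
    {S : Finset V} (hsub : ∀ i ∈ I, B i ⊆ S) (hcard : ∀ i ∈ I, q ≤ (B i).card) :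
    I.card * q ≤ S.card := by
  classical
  calc I.card * q ≤ ∑ i ∈ I, (B i).card := I.card_nsmul_le_sum _ q hcard
    _ = (I.biUnion B).card := (Finset.card_biUnion fun _ _ _ _ hij => hdisj hij).symm
    _ ≤ S.card := Finset.card_le_card (Finset.biUnion_subset.2 hsub)

theorem exists_subset_not_disjoint_card_mul_le (hdisj : Pairwise (Disjoint on B)) (hq : 0 < q)
    (hcard : ∀ i, q ≤ (B i).card) (S : Finset V) :
    ∃ T ⊆ S, (∀ i, B i ⊆ S → ¬ Disjoint (B i) T) ∧ T.card * q ≤ S.card := by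
  classical
  have hne (i : ι) : (B i).Nonempty := Finset.card_pos.1 (hq.trans_le (hcard i))
  have hinj : Injective B :=
    injective_of_pairwise_disjoint_of_ne_bot hdisj fun i => (hne i).ne_empty
  choose v hv using hne
  let I : Finset ι := S.powerset.preimage B hinj.injOn
  have mem_I {i : ι} : i ∈ I ↔ B i ⊆ S := by simp [I]
  refine ⟨I.image v, Finset.image_subset_iff.2 fun i hi => mem_I.1 hi (hv i), fun i hi => ?_, ?_⟩
  · exact Finset.not_disjoint_iff.2 ⟨v i, hv i, Finset.mem_image_of_mem v (mem_I.2 hi)⟩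
  · calc (I.image v).card * q ≤ I.card * q := Nat.mul_le_mul_right q Finset.card_image_le
      _ ≤ S.card :=
        card_mul_le_card_of_pairwise_disjoint hdisj (fun _ => mem_I.1) fun i _ => hcard i

theorem isClique_complFamily_of_forall_not_subset {K : Finset V} (hK : ∀ i, ¬ B i ⊆ K) :
    IsClique q (complFamily q B) K :=
  fun _ heK he => ⟨he, fun i hei => hK i (hei ▸ heK)⟩

theorem exists_isClique_complFamily (hdisj : Pairwise (Disjoint on B)) (hq : 0 < q)
    (hcard : ∀ i, q ≤ (B i).card) (S : Finset V) :
    ∃ K ⊆ S, IsClique q (complFamily q B) K ∧ ((q : ℝ) - 1) / q * S.card ≤ K.card := by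
  classical
  obtain ⟨T, hTS, hT, hTcard⟩ := exists_subset_not_disjoint_card_mul_le hdisj hq hcard S
  refine ⟨S \ T, Finset.sdiff_subset, isClique_complFamily_of_forall_not_subset fun i hi => ?_, ?_⟩
  · exact hT i (hi.trans Finset.sdiff_subset) (Finset.subset_sdiff.1 hi).2
  · have hq' : (0 : ℝ) < q := by exact_mod_cast hq
    have hTcard' : (T.card : ℝ) ≤ S.card / q := by
      rw [le_div_iff₀ hq']
      exact_mod_cast hTcard
    calc ((q : ℝ) - 1) / q * S.card = S.card - S.card / q := by field_simp
      _ ≤ S.card - T.card := by gcongr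
      _ = (S \ T).card := (Finset.cast_card_sdiff hTS).symm

theorem fracHelly_of_forall_exists_isClique {H : Set (Finset V)} {β : ℝ} (hβ : 0 < β)
    (hH : ∀ S : Finset V, ∃ K ⊆ S, IsClique q H K ∧ β * S.card ≤ K.card) : FracHelly q H :=
  fun _ _ => ⟨β, hβ, fun S _ => hH S⟩

theorem isIndep_complFamily {i : ι} (hcard : (B i).card ≤ q) :
    IsIndep q (complFamily q B) (B i) := by
  intro e heB he heH
  exact heH.2 i (Finset.eq_of_subset_of_card_le (Finset.coe_subset.1 heB) (hcard.trans he.ge))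

theorem isMConfig_complFamily_comp (hdisj : Pairwise (Disjoint on B)) (hq : 2 ≤ q)
    (hcard : ∀ i, (B i).card = q) {s : ℕ} (f : Fin s ↪ ι) :
    IsMConfig q s q (complFamily q B) (B ∘ f) := by
  refine ⟨fun i j hij => hdisj (f.injective.ne hij), fun i => hcard (f i),
    fun i => isIndep_complFamily (hcard (f i)).le, ?_⟩
  intro e he hcover htransversal
  refine ⟨he, ?_⟩
  rintro n rfl
  obtain ⟨x, hx, y, hy, hxy⟩ := Finset.one_lt_card.1 (hq.trans he.ge)
  obtain ⟨i, hxi⟩ := hcover x hx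
  have hin : f i = n := hdisj.eq (Finset.not_disjoint_iff.2 ⟨x, hxi, hx⟩)
  exact hxy (htransversal i x hx y hy hxi (by rwa [comp_apply, hin]))

end

theorem stmt_2_general {V ι : Type*} [Infinite ι] {q : ℕ} (hq : 2 ≤ q) {B : ι → Finset V}
    (hdisj : Pairwise (Disjoint on B)) (hcard : ∀ i, (B i).card = q) :
    ((∀ S : Finset V, ∃ K ⊆ S, IsClique q (complFamily q B) K ∧
        ((q : ℝ) - 1) / q * S.card ≤ K.card) ∧
      FracHelly q (complFamily q B)) ∧
    ∀ s : ℕ, ∃ Vs : Fin s → Finset V, IsMConfig q s q (complFamily q B) Vs := by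
  have hq' : (2 : ℝ) ≤ q := by exact_mod_cast hq
  have hclique := exists_isClique_complFamily hdisj (by lia) fun i => (hcard i).ge
  have hpos : 0 < ((q : ℝ) - 1) / q := div_pos (by linarith) (by linarith)
  refine ⟨⟨hclique, fracHelly_of_forall_exists_isClique hpos hclique⟩, fun s => ?_⟩
  exact ⟨_, isMConfig_complFamily_comp hdisj hq hcard
    (Fin.valEmbedding.trans (Infinite.natEmbedding ι))⟩

/-- Let `V` be countably infinite, partitioned into `q`-element blocks
`B 0, B 1, …`, and let `H` be the `q`-uniform hypergraph whose edges are exactly the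
`q`-element sets that are not blocks (the complement of an infinite matching). Then
(1) every finite `S` contains a clique of size at least `((q-1)/q)·|S|`, hence `H` has the
fractional Helly property, and (2) for every `s ≥ q`, `H` contains an
`M_s^{(q)}(q)`-configuration. -/
theorem stmt_2 {V : Type*} [Countable V] [Infinite V] (q : ℕ) (hq : 2 ≤ q)
    (B : ℕ → Finset V)
    (hdisj : ∀ m n, m ≠ n → Disjoint (B m) (B n))
    (hcard : ∀ n, (B n).card = q)
    (hcover : ∀ v : V, ∃ n, v ∈ B n)
    (H : Set (Finset V))
    (hH : H = {e : Finset V | e.card = q ∧ ∀ n, e ≠ B n}) :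
    ((∀ S : Finset V, ∃ K : Finset V, K ⊆ S ∧ IsClique q H K ∧
        (((q : ℝ) - 1) / (q : ℝ)) * (S.card : ℝ) ≤ (K.card : ℝ)) ∧
      FracHelly q H) ∧
    (∀ s : ℕ, q ≤ s → ∃ Vs : Fin s → Finset V, IsMConfig q s q H Vs) := by
  subst hH
  obtain ⟨hclique, hconfig⟩ := stmt_2_general hq (fun m n => hdisj m n) hcard
  exact ⟨hclique, fun s _ => hconfig s⟩
end

section
/- For every integer q ≥ 2 there exists a q-uniform hypergraph H (on some infinite vertex set) such that H contains no M_q^{(q)}(q+1)-configuration, yet H does not satisfy the fractional Helly property. -/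
/-!
Everything reduces to triangle-free graphs whose finite subsets can have arbitrarily small
independence ratio: their non-edges form a `2`-uniform hypergraph whose cliques are the independent
sets of the graph and whose independent sets are its cliques, hence have at most two vertices.
Ordering the vertices and adding to every edge a new largest vertex raises the uniformity by one;
deleting the largest vertex turns a clique or an independent set of the new hypergraph into one of
the old, so cliques stay sparse and independent sets have at most `q` vertices. The last property
excludes `M_q^{(q)}(q + 1)`-configurations, and it makes the edges dense, because every
`(q + 1)`-set contains one.

For the graphs, join two subsets of `{0, …, 3m - 1}` when they differ in more than `2m` elements.
Three pairwise distances in a cube of dimension `3m` add up to at most `6m`, so there are no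
triangles. A family with pairwise distances at most `2m` has at most `(27/4)^m` of the `8^m`
members, by an induction on the dimension that bounds the product of the sizes of two families.
-/

section UniformHypergraphs

open Finset

variable {V : Type*} {q : ℕ} {H : Set (Finset V)}

/-- The cliques of `H` can be arbitrarily sparse: for every `ε > 0` some finite vertex set `S` has
no clique with more than `ε |S|` vertices. -/
def HasSparseCliques (q : ℕ) (H : Set (Finset V)) : Prop :=
  ∀ ε : ℝ, 0 < ε → ∃ S : Finset V, S.Nonempty ∧ ∀ K ⊆ S, IsClique q H K → (#K : ℝ) ≤ ε * #S

theorem isClique_of_card_lt {K : Finset V} (hK : #K < q) : IsClique q H K := fun _ heK he ↦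
  absurd (card_le_card heK) (by omega)

theorem one_le_mul_card_of_isClique_card_le (hq : 2 ≤ q) {ε : ℝ} {S : Finset V} (hS : S.Nonempty)
    (hcard : ∀ K ⊆ S, IsClique q H K → (#K : ℝ) ≤ ε * #S) : 1 ≤ ε * #S := by
  obtain ⟨v, hv⟩ := hS
  simpa using hcard {v} (singleton_subset_iff.2 hv)
    (isClique_of_card_lt (by rwa [card_singleton]))

theorem exists_subset_mem_of_isIndep_card_le (hindep : ∀ T : Finset V, IsIndep q H ↑T → #T ≤ q)
    {T : Finset V} (hT : q < #T) : ∃ e ∈ H, e ⊆ T := by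
  by_contra! hne
  exact hT.not_ge (hindep T fun e heT _ he ↦ hne e he (coe_subset.1 heT))

/-- Double counting of the pairs `e ⊆ T ⊆ S` with `e` an edge and `T` of size `q + 1`. -/
theorem choose_le_mul_ncard_edges (hH : IsUniform q H)
    (hindep : ∀ T : Finset V, IsIndep q H ↑T → #T ≤ q) {S : Finset V} (hS : q < #S) :
    (#S).choose q ≤ (q + 1) * {e : Finset V | e ∈ H ∧ e ⊆ S}.ncard := by
  classical
  set E : Finset (Finset V) := {e ∈ S.powerset | e ∈ H} with hE
  have hcoe : {e : Finset V | e ∈ H ∧ e ⊆ S} = ↑E := by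
    ext e
    simp [hE, and_comm]
  have hcover : S.powersetCard (q + 1) ⊆ E.biUnion fun e ↦ (S \ e).image (insert · e) := by
    intro T hT
    obtain ⟨hTS, hTcard⟩ := mem_powersetCard.1 hT
    obtain ⟨e, he, heT⟩ := exists_subset_mem_of_isIndep_card_le hindep (T := T) (by omega)
    obtain ⟨v, hv⟩ : (T \ e).Nonempty := by
      rw [← card_pos, card_sdiff_of_subset heT, hTcard, hH e he]
      omega
    obtain ⟨hvT, hve⟩ := mem_sdiff.1 hv
    have hinsert : insert v e = T :=
      eq_of_subset_of_card_le (insert_subset hvT heT)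
        (by rw [card_insert_of_notMem hve, hTcard, hH e he])
    exact mem_biUnion.2 ⟨e, mem_filter.2 ⟨mem_powerset.2 (heT.trans hTS), he⟩,
      mem_image.2 ⟨v, mem_sdiff.2 ⟨hTS hvT, hve⟩, hinsert⟩⟩
  have hfiber : ∀ e ∈ E, #((S \ e).image (insert · e)) ≤ #S - q := by
    intro e he
    obtain ⟨heS, heH⟩ := mem_filter.1 he
    rw [← hH e heH, ← card_sdiff_of_subset (mem_powerset.1 heS)]
    exact card_image_le
  have hcount : (#S).choose (q + 1) ≤ #E * (#S - q) := by
    rw [← card_powersetCard]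
    exact (card_le_card hcover).trans (card_biUnion_le_card_mul _ _ _ hfiber)
  rw [hcoe, Set.ncard_coe_finset]
  refine Nat.le_of_mul_le_mul_right ?_ (Nat.sub_pos_of_lt hS)
  calc (#S).choose q * (#S - q) = (#S).choose (q + 1) * (q + 1) :=
        (Nat.choose_succ_right_eq _ _).symm
    _ ≤ #E * (#S - q) * (q + 1) := Nat.mul_le_mul_right _ hcount
    _ = (q + 1) * #E * (#S - q) := by ring

theorem HasSparseCliques.not_fracHelly (hsparse : HasSparseCliques q H) (hq : 2 ≤ q)
    (hH : IsUniform q H) (hindep : ∀ T : Finset V, IsIndep q H ↑T → #T ≤ q) :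
    ¬ FracHelly q H := by
  intro hF
  have hq₁ : (0 : ℝ) < q + 1 := by positivity
  obtain ⟨β, hβ, hF⟩ := hF (q + 1 : ℝ)⁻¹ (inv_pos.2 hq₁)
  obtain ⟨S, hS, hcard⟩ := hsparse (min (β / 2) (q + 1 : ℝ)⁻¹) (by positivity)
  have hSpos : (0 : ℝ) < #S := by exact_mod_cast hS.card_pos
  have hqS : q < #S := by
    have hle : 1 ≤ (q + 1 : ℝ)⁻¹ * #S :=
      (one_le_mul_card_of_isClique_card_le hq hS hcard).trans (by gcongr; exact min_le_right _ _)
    rw [le_inv_mul_iff₀ hq₁, mul_one] at hle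
    exact_mod_cast hle
  have hdense : (q + 1 : ℝ)⁻¹ * ((#S).choose q : ℝ) ≤
      ({e : Finset V | e ∈ H ∧ e ⊆ S}.ncard : ℝ) := by
    rw [inv_mul_le_iff₀ hq₁]
    exact_mod_cast choose_le_mul_ncard_edges hH hindep hqS
  obtain ⟨K, hKS, hK, hβK⟩ := hF S hdense
  have hsmall : (#K : ℝ) ≤ β / 2 * #S :=
    (hcard K hKS hK).trans (by gcongr; exact min_le_left _ _)
  linarith [mul_pos hβ hSpos]

theorem not_isMConfig_of_isIndep_card_le (hindep : ∀ T : Finset V, IsIndep q H ↑T → #T ≤ q)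
    {s : ℕ} (hs : 0 < s) (Vs : Fin s → Finset V) : ¬ IsMConfig q s (q + 1) H Vs :=
  fun ⟨_, hcard, hVs, _⟩ ↦ absurd (hindep _ (hVs ⟨0, hs⟩)) (by rw [hcard]; omega)

end UniformHypergraphs

section TopCone

open Finset

variable {V : Type*} [LinearOrder V] {q : ℕ} {H : Set (Finset V)}

/-- The hypergraph obtained from `H` by adding to every edge, in all possible ways, a new vertex
that is larger than all its vertices. It turns a `q`-uniform hypergraph into a `(q + 1)`-uniform
one. -/
def topCone (H : Set (Finset V)) : Set (Finset V) :=
  {e | ∃ a, IsGreatest (e : Set V) a ∧ e.erase a ∈ H}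

theorem mem_topCone_iff {e : Finset V} {a : V} (ha : IsGreatest (e : Set V) a) :
    e ∈ topCone H ↔ e.erase a ∈ H :=
  ⟨fun ⟨_, hb, he⟩ ↦ ha.unique hb ▸ he, fun he ↦ ⟨a, ha, he⟩⟩

theorem IsUniform.topCone (hH : IsUniform q H) : IsUniform (q + 1) (topCone H) := by
  rintro e ⟨a, ha, he⟩
  rw [← card_erase_add_one (mem_coe.1 ha.1), hH _ he]

theorem insert_mem_topCone_iff {K e : Finset V} {a : V} (ha : IsGreatest (K : Set V) a)
    (he : e ⊆ K.erase a) : insert a e ∈ topCone H ↔ e ∈ H := by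
  have hae : a ∉ e := fun h ↦ notMem_erase a K (he h)
  have hgreatest : IsGreatest (↑(insert a e) : Set V) a :=
    ⟨mem_coe.2 (mem_insert_self a e),
      upperBounds_mono_set (coe_subset.2 (insert_subset ha.1 (he.trans (erase_subset a K)))) ha.2⟩
  rw [mem_topCone_iff hgreatest, erase_insert hae]

theorem card_insert_of_subset_erase {K e : Finset V} {a : V} (he : e ⊆ K.erase a) :
    #(insert a e) = #e + 1 :=
  card_insert_of_notMem fun h ↦ notMem_erase a K (he h)

theorem IsClique.erase_of_topCone {K : Finset V} {a : V} (hK : IsClique (q + 1) (topCone H) K)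
    (ha : IsGreatest (K : Set V) a) : IsClique q H (K.erase a) := fun e he hcard ↦
  (insert_mem_topCone_iff ha he).1 <|
    hK _ (insert_subset ha.1 (he.trans (erase_subset a K)))
      (by rw [card_insert_of_subset_erase he, hcard])

theorem IsIndep.erase_of_topCone {T : Finset V} {a : V}
    (hT : IsIndep (q + 1) (topCone H) (T : Set V)) (ha : IsGreatest (T : Set V) a) :
    IsIndep q H ↑(T.erase a) := fun e he hcard heH ↦
  have he : e ⊆ T.erase a := coe_subset.1 he
  hT _ (coe_subset.2 (insert_subset ha.1 (he.trans (erase_subset a T))))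
    (by rw [card_insert_of_subset_erase he, hcard]) ((insert_mem_topCone_iff ha he).2 heH)

theorem card_le_succ_of_isIndep_topCone (hindep : ∀ T : Finset V, IsIndep q H ↑T → #T ≤ q)
    (T : Finset V) (hT : IsIndep (q + 1) (topCone H) (T : Set V)) : #T ≤ q + 1 := by
  obtain rfl | hne := T.eq_empty_or_nonempty
  · simp
  · have hmax := T.isGreatest_max' hne
    rw [← card_erase_add_one (mem_coe.1 hmax.1)]
    exact Nat.succ_le_succ (hindep _ (hT.erase_of_topCone hmax))

theorem HasSparseCliques.topCone (hsparse : HasSparseCliques q H) (hq : 2 ≤ q) :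
    HasSparseCliques (q + 1) (topCone H) := by
  intro ε hε
  obtain ⟨S, hS, hcard⟩ := hsparse (ε / 2) (half_pos hε)
  have hone := one_le_mul_card_of_isClique_card_le hq hS hcard
  refine ⟨S, hS, fun K hKS hK ↦ ?_⟩
  obtain rfl | hne := K.eq_empty_or_nonempty
  · rw [card_empty, Nat.cast_zero]
    positivity
  · have hmax := K.isGreatest_max' hne
    have hsmall := hcard _ ((erase_subset _ K).trans hKS) (hK.erase_of_topCone hmax)
    rw [← card_erase_add_one (mem_coe.1 hmax.1)]
    push_cast
    linarith

end TopCone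

section NonEdges

open Finset SimpleGraph

variable {V : Type*} {G : SimpleGraph V}

theorem isUniform_indepSetSet (G : SimpleGraph V) (n : ℕ) : IsUniform n (G.indepSetSet n) :=
  fun _ he ↦ he.card_eq

theorem pair_mem_indepSetSet_two_iff [DecidableEq V] {x y : V} (hxy : x ≠ y) :
    {x, y} ∈ G.indepSetSet 2 ↔ ¬ G.Adj x y := by
  simp [mem_indepSetSet_iff, isNIndepSet_iff, hxy, Set.pairwise_pair, G.adj_comm y x]

theorem isIndepSet_of_isClique_indepSetSet_two {K : Finset V}
    (hK : _root_.IsClique 2 (G.indepSetSet 2) K) : G.IsIndepSet K := by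
  classical
  exact fun x hx y hy hxy ↦ (pair_mem_indepSetSet_two_iff hxy).1 <|
    hK _ (insert_subset hx (singleton_subset_iff.2 hy)) (card_pair hxy)

theorem isClique_of_isIndep_indepSetSet_two {T : Set V} (hT : IsIndep 2 (G.indepSetSet 2) T) :
    G.IsClique T := by
  classical
  refine fun x hx y hy hxy ↦ by_contra fun hadj ↦
    hT {x, y} ?_ (card_pair hxy) ((pair_mem_indepSetSet_two_iff hxy).2 hadj)
  simp [Set.insert_subset_iff, hx, hy]

theorem card_le_two_of_isIndep_indepSetSet_two (hG : G.CliqueFree 3) (T : Finset V)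
    (hT : IsIndep 2 (G.indepSetSet 2) (T : Set V)) : #T ≤ 2 := by
  by_contra! hcard
  exact hG.mono hcard T ⟨isClique_of_isIndep_indepSetSet_two hT, rfl⟩

end NonEdges

section FarGraph

open Finset
open scoped symmDiff

variable {α : Type*} [DecidableEq α]

theorem card_symmDiff_add_two_mul_card_inter (A B : Finset α) :
    #(A ∆ B) + 2 * #(A ∩ B) = #A + #B := by
  have hunion : #(A ∪ B) = #(A ∆ B) + #(A ∩ B) := by
    exact (congrArg card (symmDiff_sup_inf A B).symm).trans
      (card_union_of_disjoint (disjoint_symmDiff_inf A B))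
  have := card_union_add_card_inter A B
  omega

theorem card_symmDiff_add_card_symmDiff_add_card_symmDiff_le {A B C u : Finset α}
    (hA : A ⊆ u) (hB : B ⊆ u) (hC : C ⊆ u) :
    #(A ∆ B) + #(B ∆ C) + #(A ∆ C) ≤ 2 * #u := by
  have hAC : (A ∆ B) ∆ (B ∆ C) = A ∆ C := by
    rw [symmDiff_assoc, symmDiff_symmDiff_cancel_left]
  have hdist := card_symmDiff_add_two_mul_card_inter (A ∆ B) (B ∆ C)
  have hunion := card_union_add_card_inter (A ∆ B) (B ∆ C)
  have hle : #(A ∆ B ∪ B ∆ C) ≤ #u := card_le_card <| union_subset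
    (symmDiff_subset_union.trans (union_subset hA hB))
    (symmDiff_subset_union.trans (union_subset hB hC))
  rw [hAC] at hdist
  omega

theorem card_insert_symmDiff {a : α} {A B : Finset α} (hA : a ∉ A) (hB : a ∉ B) :
    #(insert a A ∆ B) = #(A ∆ B) + 1 := by
  rw [← card_insert_of_notMem (s := A ∆ B) (a := a) (by simp [mem_symmDiff, hA, hB])]
  congr 1
  ext x
  by_cases hx : x = a <;> simp [mem_symmDiff, hx, hA, hB]

theorem insert_symmDiff_insert {a : α} {A B : Finset α} (hA : a ∉ A) (hB : a ∉ B) :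
    insert a A ∆ insert a B = A ∆ B := by
  ext x
  by_cases hx : x = a <;> simp [mem_symmDiff, hx, hA, hB]

theorem nonMemberSubfamily_subset_powerset {a : α} {u : Finset α} {𝒜 : Finset (Finset α)}
    (h𝒜 : 𝒜 ⊆ (insert a u).powerset) : 𝒜.nonMemberSubfamily a ⊆ u.powerset := by
  intro A hA
  obtain ⟨hA, haA⟩ := mem_nonMemberSubfamily.1 hA
  exact mem_powerset.2 ((subset_insert_iff_of_notMem haA).1 (mem_powerset.1 (h𝒜 hA)))

theorem memberSubfamily_subset_powerset {a : α} {u : Finset α} {𝒜 : Finset (Finset α)}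
    (h𝒜 : 𝒜 ⊆ (insert a u).powerset) : 𝒜.memberSubfamily a ⊆ u.powerset := by
  intro A hA
  obtain ⟨hA, haA⟩ := mem_memberSubfamily.1 hA
  exact mem_powerset.2 ((subset_insert_iff_of_notMem haA).1
    ((subset_insert a A).trans (mem_powerset.1 (h𝒜 hA))))

/-- `𝒜` and `ℬ` are families of subsets of `u`, and every member of `𝒜` agrees with every member of
`ℬ` on at least `k` elements of `u`. The agreement of `A` and `B` is encoded as the complement in
`u` of their symmetric difference. -/
structure CrossAgreeing (k : ℕ) (u : Finset α) (𝒜 ℬ : Finset (Finset α)) : Prop where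
  left_subset : 𝒜 ⊆ u.powerset
  right_subset : ℬ ⊆ u.powerset
  add_card_symmDiff_le : ∀ A ∈ 𝒜, ∀ B ∈ ℬ, k + #(A ∆ B) ≤ #u

namespace CrossAgreeing

variable {k : ℕ} {u : Finset α} {a : α} {𝒜 ℬ : Finset (Finset α)}

theorem symm (h : CrossAgreeing k u 𝒜 ℬ) : CrossAgreeing k u ℬ 𝒜 :=
  ⟨h.right_subset, h.left_subset, fun B hB A hA ↦ by
    simpa only [symmDiff_comm] using h.add_card_symmDiff_le A hA B hB⟩

theorem pred_of_card_symmDiff_le (h𝒜 : 𝒜 ⊆ u.powerset) (hℬ : ℬ ⊆ u.powerset)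
    (h : ∀ A ∈ 𝒜, ∀ B ∈ ℬ, k + #(A ∆ B) ≤ #u + 1) : CrossAgreeing (k - 1) u 𝒜 ℬ := by
  refine ⟨h𝒜, hℬ, fun A hA B hB ↦ ?_⟩
  have hAB : #(A ∆ B) ≤ #u := card_le_card <| symmDiff_subset_union.trans <|
    union_subset (mem_powerset.1 (h𝒜 hA)) (mem_powerset.1 (hℬ hB))
  have := h A hA B hB
  omega

theorem nonMember_nonMember (h : CrossAgreeing k (insert a u) 𝒜 ℬ) :
    CrossAgreeing (k - 1) u (𝒜.nonMemberSubfamily a) (ℬ.nonMemberSubfamily a) :=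
  pred_of_card_symmDiff_le (nonMemberSubfamily_subset_powerset h.left_subset)
    (nonMemberSubfamily_subset_powerset h.right_subset) fun A hA B hB ↦
      (h.add_card_symmDiff_le A (mem_nonMemberSubfamily.1 hA).1
        B (mem_nonMemberSubfamily.1 hB).1).trans (card_insert_le a u)

theorem member_member (h : CrossAgreeing k (insert a u) 𝒜 ℬ) :
    CrossAgreeing (k - 1) u (𝒜.memberSubfamily a) (ℬ.memberSubfamily a) :=
  pred_of_card_symmDiff_le (memberSubfamily_subset_powerset h.left_subset)
    (memberSubfamily_subset_powerset h.right_subset) fun A hA B hB ↦ by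
      obtain ⟨hA, haA⟩ := mem_memberSubfamily.1 hA
      obtain ⟨hB, haB⟩ := mem_memberSubfamily.1 hB
      have hle := (h.add_card_symmDiff_le _ hA _ hB).trans (card_insert_le a u)
      rwa [insert_symmDiff_insert haA haB] at hle

theorem member_nonMember (h : CrossAgreeing k (insert a u) 𝒜 ℬ) :
    CrossAgreeing k u (𝒜.memberSubfamily a) (ℬ.nonMemberSubfamily a) := by
  refine ⟨memberSubfamily_subset_powerset h.left_subset,
    nonMemberSubfamily_subset_powerset h.right_subset, fun A hA B hB ↦ ?_⟩
  obtain ⟨hA, haA⟩ := mem_memberSubfamily.1 hA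
  obtain ⟨hB, haB⟩ := mem_nonMemberSubfamily.1 hB
  have hle := (h.add_card_symmDiff_le _ hA _ hB).trans (card_insert_le a u)
  rw [card_insert_symmDiff haA haB] at hle
  omega

theorem nonMember_member (h : CrossAgreeing k (insert a u) 𝒜 ℬ) :
    CrossAgreeing k u (𝒜.nonMemberSubfamily a) (ℬ.memberSubfamily a) :=
  h.symm.member_nonMember.symm

end CrossAgreeing

/-- The products `f₀ g₀` and `f₁ g₁` cannot both be as large as `t B`, because they multiply to
`(f₀ g₁) (f₁ g₀) ≤ B ^ 2`. -/
theorem mul_add_mul_add_le {f₀ f₁ g₀ g₁ t B : ℝ} (hf₁ : 0 ≤ f₁) (hg₀ : 0 ≤ g₀) (ht : 0 ≤ t)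
    (hB : 0 < B) (h₀₀ : f₀ * g₀ ≤ t * B) (h₁₁ : f₁ * g₁ ≤ t * B) (h₀₁ : f₀ * g₁ ≤ B)
    (h₁₀ : f₁ * g₀ ≤ B) : t * ((f₀ + f₁) * (g₀ + g₁)) ≤ (1 + t) ^ 2 * B := by
  have hprod : (f₀ * g₀) * (f₁ * g₁) ≤ B * B :=
    calc (f₀ * g₀) * (f₁ * g₁) = (f₀ * g₁) * (f₁ * g₀) := by ring
      _ ≤ B * B := by gcongr
  have hsame : t * (f₀ * g₀ + f₁ * g₁) ≤ (t ^ 2 + 1) * B := by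
    refine le_of_mul_le_mul_left ?_ hB
    linarith [mul_nonneg (sub_nonneg.2 h₀₀) (sub_nonneg.2 h₁₁)]
  have hcross : t * (f₀ * g₁ + f₁ * g₀) ≤ t * (B + B) := by gcongr
  linarith

theorem pow_add_mul_le_of_pow_add_pred_mul_le {t c B : ℝ} {n k : ℕ} (ht : 1 ≤ t) (hc : 0 ≤ c)
    (h : t ^ (n + (k - 1)) * c ≤ B) : t ^ (n + k) * c ≤ t * B := by
  calc t ^ (n + k) * c ≤ t ^ (n + (k - 1) + 1) * c :=
        mul_le_mul_of_nonneg_right (pow_le_pow_right₀ ht (by omega)) hc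
    _ = t * (t ^ (n + (k - 1)) * c) := by ring
    _ ≤ t * B := mul_le_mul_of_nonneg_left h (zero_le_one.trans ht)

theorem CrossAgreeing.pow_mul_card_mul_card_le {t : ℝ} (ht : 1 ≤ t) {k : ℕ} {u : Finset α}
    {𝒜 ℬ : Finset (Finset α)} (h : CrossAgreeing k u 𝒜 ℬ) :
    t ^ (#u + k) * (#𝒜 * #ℬ) ≤ (1 + t) ^ (2 * #u) := by
  have ht₀ : 0 ≤ t := zero_le_one.trans ht
  induction u using Finset.induction_on generalizing k 𝒜 ℬ with
  | empty =>
    obtain rfl | rfl := subset_singleton_iff.1 h.left_subset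
    · simp
    obtain rfl | rfl := subset_singleton_iff.1 h.right_subset
    · simp
    have hk : k = 0 := by
      simpa using h.add_card_symmDiff_le ∅ (mem_singleton_self ∅) ∅ (mem_singleton_self ∅)
    simp [hk]
  | insert a u ha ih =>
    have h₀₀ := pow_add_mul_le_of_pow_add_pred_mul_le ht (by positivity) (ih h.nonMember_nonMember)
    have h₁₁ := pow_add_mul_le_of_pow_add_pred_mul_le ht (by positivity) (ih h.member_member)
    have h₀₁ := ih h.nonMember_member
    have h₁₀ := ih h.member_nonMember
    rw [← mul_assoc] at h₀₀ h₁₁ h₀₁ h₁₀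
    have hsum := mul_add_mul_add_le (by positivity) (by positivity) ht₀ (by positivity)
      h₀₀ h₁₁ h₀₁ h₁₀
    rw [card_insert_of_notMem ha, ← card_memberSubfamily_add_card_nonMemberSubfamily a 𝒜,
      ← card_memberSubfamily_add_card_nonMemberSubfamily a ℬ]
    push_cast
    convert hsum using 1 <;> ring

theorem four_pow_mul_card_le_of_card_symmDiff_le {u : Finset α} {m : ℕ} (hu : #u = 3 * m)
    {𝒜 : Finset (Finset α)} (h𝒜 : 𝒜 ⊆ u.powerset)
    (hdist : ∀ A ∈ 𝒜, ∀ B ∈ 𝒜, #(A ∆ B) ≤ 2 * m) : (4 : ℝ) ^ m * #𝒜 ≤ 27 ^ m := by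
  have hagree : CrossAgreeing m u 𝒜 𝒜 := ⟨h𝒜, h𝒜, fun A hA B hB ↦ by
    have := hdist A hA B hB
    omega⟩
  refine (sq_le_sq₀ (by positivity) (by positivity)).1 ?_
  calc ((4 : ℝ) ^ m * #𝒜) ^ 2 = 2 ^ (3 * m + m) * (#𝒜 * #𝒜) := by
        rw [mul_pow, pow_right_comm, ← add_one_mul, pow_mul, sq (#𝒜 : ℝ)]
        norm_num
    _ ≤ (1 + 2) ^ (2 * (3 * m)) := hu ▸ hagree.pow_mul_card_mul_card_le one_le_two
    _ = (27 ^ m) ^ 2 := by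
        rw [← pow_mul, mul_left_comm, pow_mul, mul_comm m]
        norm_num

/-- The disjoint union over `m` of the graphs on the subsets of `{0, …, 3m - 1}` in which two sets
are adjacent when they differ in more than `2m` elements; the `m`-th of these graphs lives on the
pairs `(m, A)`, and pairs `(m, A)` with `A` not contained in `{0, …, 3m - 1}` are isolated. It is
triangle-free and has finite vertex sets of arbitrarily small independence ratio. -/
def farGraph : SimpleGraph (ℕ × Finset ℕ) where
  Adj x y := x.1 = y.1 ∧ x.2 ⊆ range (3 * x.1) ∧ y.2 ⊆ range (3 * y.1) ∧ 2 * x.1 < #(x.2 ∆ y.2)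
  symm := ⟨fun _ _ ⟨heq, hx, hy, hlt⟩ ↦ ⟨heq.symm, hy, hx, by rwa [← heq, symmDiff_comm]⟩⟩
  loopless := ⟨fun _ ⟨_, _, _, hlt⟩ ↦ by simp at hlt⟩

theorem farGraph_adj {x y : ℕ × Finset ℕ} : farGraph.Adj x y ↔
    x.1 = y.1 ∧ x.2 ⊆ range (3 * x.1) ∧ y.2 ⊆ range (3 * y.1) ∧ 2 * x.1 < #(x.2 ∆ y.2) :=
  Iff.rfl

theorem farGraph_cliqueFree_three : farGraph.CliqueFree 3 := by
  intro T hT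
  obtain ⟨⟨m, A⟩, ⟨m₁, B⟩, ⟨m₂, C⟩, hAB, hAC, hBC, -⟩ := SimpleGraph.is3Clique_iff.1 hT
  obtain ⟨rfl, hA, hB, hltAB⟩ := farGraph_adj.1 hAB
  obtain ⟨rfl, -, hC, hltAC⟩ := farGraph_adj.1 hAC
  obtain ⟨-, -, -, hltBC⟩ := farGraph_adj.1 hBC
  have := card_symmDiff_add_card_symmDiff_add_card_symmDiff_le hA hB hC
  rw [card_range] at this
  dsimp only at hltAB hltAC hltBC this
  omega

theorem four_pow_mul_card_le_of_isIndepSet_farGraph {m : ℕ} {I : Finset (ℕ × Finset ℕ)}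
    (hI : I ⊆ {m} ×ˢ (range (3 * m)).powerset) (hindep : farGraph.IsIndepSet I) :
    (4 : ℝ) ^ m * #I ≤ 27 ^ m := by
  have hfst : ∀ x ∈ I, x.1 = m := fun x hx ↦ mem_singleton.1 (mem_product.1 (hI hx)).1
  have hsnd : ∀ x ∈ I, x.2 ∈ (range (3 * m)).powerset := fun x hx ↦ (mem_product.1 (hI hx)).2
  have hinj : Set.InjOn Prod.snd (I : Set (ℕ × Finset ℕ)) := fun x hx y hy hxy ↦
    Prod.ext ((hfst x hx).trans (hfst y hy).symm) hxy
  rw [← card_image_of_injOn hinj]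
  refine four_pow_mul_card_le_of_card_symmDiff_le (card_range _) (image_subset_iff.2 hsnd)
    (forall_mem_image.2 fun x hx ↦ forall_mem_image.2 fun y hy ↦ ?_)
  by_contra! hlt
  have hne : x ≠ y := by
    rintro rfl
    simp at hlt
  refine hindep hx hy hne <| farGraph_adj.2 ⟨(hfst x hx).trans (hfst y hy).symm, ?_, ?_, ?_⟩
  · simpa only [hfst x hx] using mem_powerset.1 (hsnd x hx)
  · simpa only [hfst y hy] using mem_powerset.1 (hsnd y hy)
  · rwa [hfst x hx]

theorem hasSparseCliques_indepSetSet_farGraph : HasSparseCliques 2 (farGraph.indepSetSet 2) := by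
  intro ε hε
  obtain ⟨m, hm⟩ := exists_pow_lt_of_lt_one hε (show (27 / 32 : ℝ) < 1 by norm_num)
  refine ⟨{m} ×ˢ (range (3 * m)).powerset, by simp [powerset_nonempty], fun K hKS hK ↦ ?_⟩
  have hcard : #({m} ×ˢ (range (3 * m)).powerset) = 8 ^ m := by
    rw [card_product, card_singleton, one_mul, card_powerset, card_range, pow_mul]
    norm_num
  have hK₄ := four_pow_mul_card_le_of_isIndepSet_farGraph hKS
    (isIndepSet_of_isClique_indepSetSet_two hK)
  rw [hcard]
  push_cast
  refine le_of_mul_le_mul_left ?_ (show (0 : ℝ) < 4 ^ m by positivity)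
  calc (4 : ℝ) ^ m * #K ≤ 27 ^ m := hK₄
    _ = (27 / 32) ^ m * (4 ^ m * 8 ^ m) := by rw [← mul_pow, ← mul_pow]; norm_num
    _ ≤ ε * (4 ^ m * 8 ^ m) := by gcongr
    _ = 4 ^ m * (ε * 8 ^ m) := by ring

end FarGraph

theorem exists_isUniform_hasSparseCliques {V : Type*} {G : SimpleGraph V} (hG : G.CliqueFree 3)
    (hsparse : HasSparseCliques 2 (G.indepSetSet 2)) {q : ℕ} (hq : 2 ≤ q) :
    ∃ H : Set (Finset V), IsUniform q H ∧ (∀ T : Finset V, IsIndep q H ↑T → T.card ≤ q) ∧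
      HasSparseCliques q H := by
  let _ : LinearOrder V := IsWellOrder.linearOrder WellOrderingRel
  induction q, hq using Nat.le_induction with
  | base =>
    exact ⟨G.indepSetSet 2, isUniform_indepSetSet G 2, card_le_two_of_isIndep_indepSetSet_two hG,
      hsparse⟩
  | succ q hq ih =>
    obtain ⟨H, hH, hindep, hH_sparse⟩ := ih
    exact ⟨topCone H, hH.topCone, card_le_succ_of_isIndep_topCone hindep, hH_sparse.topCone hq⟩

/-- For every `q ≥ 2` there is a `q`-uniform hypergraph on an infinite
vertex set which contains no `M_q^{(q)}(q+1)`-configuration but does not satisfy the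
fractional Helly property. -/
theorem stmt_3 (q : ℕ) (hq : 2 ≤ q) :
    ∃ (V : Type) (H : Set (Finset V)), Infinite V ∧ IsUniform q H ∧
      (¬ ∃ Vs : Fin q → Finset V, IsMConfig q q (q + 1) H Vs) ∧
      ¬ FracHelly q H := by
  obtain ⟨H, hH, hindep, hsparse⟩ := exists_isUniform_hasSparseCliques farGraph_cliqueFree_three
    hasSparseCliques_indepSetSet_farGraph hq
  exact ⟨ℕ × Finset ℕ, H, inferInstance, hH,
    fun ⟨Vs, hVs⟩ ↦ not_isMConfig_of_isIndep_card_le hindep (by omega) Vs hVs,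
    hsparse.not_fracHelly hq hH hindep⟩
end

section
/- Let q ≥ 2 be an integer. For every sequence (n'_i)_{i∈ℕ} of positive integers there exists a sequence (n_i)_{i∈ℕ} of positive integers with the following property: for every q-uniform hypergraph H on a vertex set V and every sequence (V_i)_{i∈ℕ} of pairwise disjoint finite subsets of V with |V_i| ≥ n_i for all i, there exists a subsequence of subsets (V'_i)_{i∈ℕ} of (V_i)_{i∈ℕ} such that |V'_i| ≥ n'_i for all i, and H together with (V'_i)_{i∈ℕ} is (q-1)-homogeneous. -/
/-- `v` is an increasing `p`-tuple of the sequence of sets `Vs`: there are indices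
`i_1 < i_2 < … < i_p` with `v j ∈ Vs (i_j)` for each `j`. -/
def IsIncrTuple {V : Type*} {p : ℕ} (Vs : ℕ → Finset V) (v : Fin p → V) : Prop :=
  ∃ idx : Fin p → ℕ, StrictMono idx ∧ ∀ j, v j ∈ Vs (idx j)

/-- The vertex set `{w 0, …, w (q-1)}` of a `q`-tuple, as a finset. -/
noncomputable def tupleEdge {V : Type*} {q : ℕ} (w : Fin q → V) : Finset V :=
  @Finset.image _ _ (Classical.decEq V) w Finset.univ

/-- `H` is homogeneous with respect to the increasing `p`-tuple `v` of `Vs` (`p ≤ q`):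
either every increasing `q`-tuple of `Vs` extending `v` spans an edge,
or none of them does. -/
def HomogWrt {V : Type*} (q : ℕ) (H : Set (Finset V)) (Vs : ℕ → Finset V)
    {p : ℕ} (hpq : p ≤ q) (v : Fin p → V) : Prop :=
  (∀ w : Fin q → V, IsIncrTuple Vs w → (∀ j : Fin p, w (Fin.castLE hpq j) = v j) →
      tupleEdge w ∈ H) ∨
  (∀ w : Fin q → V, IsIncrTuple Vs w → (∀ j : Fin p, w (Fin.castLE hpq j) = v j) →
      tupleEdge w ∉ H)

/-- `H` together with `Vs` is `p`-homogeneous: it is homogeneous with respect to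
every increasing `p`-tuple of `Vs`. -/
def PHomog {V : Type*} (q : ℕ) (H : Set (Finset V)) (Vs : ℕ → Finset V)
    (p : ℕ) (hpq : p ≤ q) : Prop :=
  ∀ v : Fin p → V, IsIncrTuple Vs v → HomogWrt q H Vs hpq v

/-- `Vs'` is a subsequence of subsets of `Vs`: there are indices `i_1 < i_2 < …`
with `Vs' j ⊆ Vs (i_j)` for every `j`. -/
def SubseqOfSubsets {V : Type*} (Vs Vs' : ℕ → Finset V) : Prop :=
  ∃ idx : ℕ → ℕ, StrictMono idx ∧ ∀ j, Vs' j ⊆ Vs (idx j)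

/-!
Build the new sequence one set at a time. Having used a finite set `U` of vertices, colour each
vertex `x` by the family of all `S ⊆ U` for which `S ∪ {x}` is an edge. There are at most
`2 ^ 2 ^ |U|` colours, so by pigeonhole each remaining set has a large monochromatic subset, and
infinitely many of these subsets share a colour. Keep only those, and take the next set from the
first of them. Whether a tuple spans an edge then does not depend on its last vertex. The size of
`U` at each stage is bounded in terms of `n'` alone, so the total loss can be allowed for in `n`.
-/

open Finset Function

section SubseqOfSubsets

variable {V : Type*} {A B C : ℕ → Finset V}

theorem SubseqOfSubsets.trans (hAB : SubseqOfSubsets A B) (hBC : SubseqOfSubsets B C) :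
    SubseqOfSubsets A C := by
  obtain ⟨f, hf, hfB⟩ := hAB
  obtain ⟨g, hg, hgC⟩ := hBC
  exact ⟨f ∘ g, hf.comp hg, fun j => (hgC j).trans (hfB (g j))⟩

theorem SubseqOfSubsets.of_subset (h : ∀ j, B j ⊆ A j) : SubseqOfSubsets A B :=
  ⟨id, strictMono_id, h⟩

theorem SubseqOfSubsets.diagonal {W : ℕ → ℕ → Finset V}
    (hW : ∀ k, SubseqOfSubsets (fun j => W k (j + 1)) (W (k + 1))) :
    SubseqOfSubsets (W 0) (fun k => W k 0) := by
  choose f hf hfW using hW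
  let F : ℕ → ℕ → ℕ := fun k => k.rec id fun k Fk j => Fk (f k j + 1)
  have hF : ∀ k, StrictMono (F k) := fun k => by
    induction k with
    | zero => exact strictMono_id
    | succ k ih => exact fun a b hab => ih (Nat.succ_lt_succ (hf k hab))
  have hFW : ∀ k j, W k j ⊆ W 0 (F k j) := fun k => by
    induction k with
    | zero => exact fun j => Subset.rfl
    | succ k ih => exact fun j => (hfW k j).trans (ih (f k j + 1))
  exact ⟨fun k => F k 0, strictMono_nat_of_lt_succ fun k => hF k (f k 0).succ_pos,
    fun k => hFW k 0⟩

theorem exists_monochromatic_subseqOfSubsets {κ : Type*} [Fintype κ] [Nonempty κ] (c : V → κ)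
    {m : ℕ → ℕ} (hm : Monotone m) (hA : ∀ j, Fintype.card κ * m j ≤ #(A j)) :
    ∃ B, SubseqOfSubsets A B ∧ (∀ j, m j ≤ #(B j)) ∧ ∃ a, ∀ j, ∀ x ∈ B j, c x = a := by
  classical
  have large_fiber : ∀ j, ∃ a, m j ≤ #{x ∈ A j | c x = a} := fun j => by
    obtain ⟨a, -, ha⟩ := exists_le_card_fiber_of_mul_le_card_of_maps_to (s := A j) (t := univ)
      (fun x _ => mem_univ (c x)) univ_nonempty (hA j)
    exact ⟨a, ha⟩
  choose colour hcolour using large_fiber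
  obtain ⟨a, ha⟩ := Finite.exists_infinite_fiber colour
  obtain ⟨f, hf, hfa⟩ := Filter.extraction_of_frequently_atTop
    (Nat.frequently_atTop_iff_infinite.2 (Set.infinite_coe_iff.1 ha))
  refine ⟨fun j => {x ∈ A (f j) | c x = a}, ⟨f, hf, fun j => filter_subset _ _⟩, fun j => ?_,
    a, fun j x hx => (mem_filter.1 hx).2⟩
  calc m j ≤ m (f j) := hm hf.le_apply
    _ ≤ #{x ∈ A (f j) | c x = colour (f j)} := hcolour (f j)
    _ = #{x ∈ A (f j) | c x = a} := by rw [show colour (f j) = a from hfa j]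

end SubseqOfSubsets

section HasConstantLink

variable {V : Type*} [DecidableEq V] {H : Set (Finset V)} {U U' : Finset V} {A B : ℕ → Finset V}

/-- All vertices occurring in the sets `A i` have the same link in `H` when the link of a vertex `x`
is restricted to subsets of `U`, that is, to the `S ⊆ U` with `insert x S ∈ H`. -/
def HasConstantLink (H : Set (Finset V)) (U : Finset V) (A : ℕ → Finset V) : Prop :=
  ∀ S ⊆ U, ∀ i j, ∀ x ∈ A i, ∀ y ∈ A j, insert x S ∈ H ↔ insert y S ∈ H

theorem HasConstantLink.mono (hA : HasConstantLink H U A) (hU : U' ⊆ U)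
    (hAB : SubseqOfSubsets A B) : HasConstantLink H U' B := by
  obtain ⟨f, -, hfB⟩ := hAB
  exact fun S hS i j x hx y hy => hA S (hS.trans hU) (f i) (f j) x (hfB i hx) y (hfB j hy)

theorem exists_subseqOfSubsets_hasConstantLink (H : Set (Finset V)) {m : ℕ → ℕ} (hm : Monotone m)
    (hA : ∀ j, 2 ^ 2 ^ #U * m j ≤ #(A j)) :
    ∃ B, SubseqOfSubsets A B ∧ (∀ j, m j ≤ #(B j)) ∧ HasConstantLink H U B := by
  let link : V → U.powerset → Prop := fun x S => insert x S.1 ∈ H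
  have card_links : Fintype.card (U.powerset → Prop) = 2 ^ 2 ^ #U := by simp
  obtain ⟨B, hAB, hmB, L, hL⟩ := exists_monochromatic_subseqOfSubsets link hm (card_links ▸ hA)
  refine ⟨B, hAB, hmB, fun S hS i j x hx y hy => ?_⟩
  have hxy : link x = link y := (hL i x hx).trans (hL j y hy).symm
  exact (congrFun hxy ⟨S, mem_powerset.2 hS⟩).to_iff

end HasConstantLink

section PHomog

variable {V : Type*} {H : Set (Finset V)} {A : ℕ → Finset V} {p : ℕ}

theorem mem_tupleEdge {x : V} {w : Fin p → V} : x ∈ tupleEdge w ↔ ∃ j, w j = x := by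
  simp [tupleEdge]

theorem tupleEdge_eq_insert_init [DecidableEq V] (w : Fin (p + 1) → V) :
    tupleEdge w = insert (w (Fin.last p)) (tupleEdge (Fin.init w)) := by
  ext x
  simp only [mem_tupleEdge, mem_insert, Fin.exists_fin_succ', Fin.init, eq_comm (a := x), or_comm]

theorem homogWrt_of_forall_iff {q : ℕ} {hpq : p ≤ q} {v : Fin p → V}
    (h : ∀ w w' : Fin q → V, IsIncrTuple A w → (∀ j, w (Fin.castLE hpq j) = v j) →
      IsIncrTuple A w' → (∀ j, w' (Fin.castLE hpq j) = v j) →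
      (tupleEdge w ∈ H ↔ tupleEdge w' ∈ H)) :
    HomogWrt q H A hpq v := by
  by_cases hedge : ∃ w, IsIncrTuple A w ∧ (∀ j, w (Fin.castLE hpq j) = v j) ∧ tupleEdge w ∈ H
  · obtain ⟨w, hw, hwv, hwH⟩ := hedge
    exact .inl fun w' hw' hwv' => (h w w' hw hwv hw' hwv').1 hwH
  · exact .inr fun w hw hwv hwH => hedge ⟨w, hw, hwv, hwH⟩

theorem pHomog_of_hasConstantLink [DecidableEq V] (hA : Pairwise (Disjoint on A))
    (hlink : ∀ k, HasConstantLink H ((range k).biUnion A) (fun j => A (k + j))) (p : ℕ) :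
    PHomog (p + 1) H A p p.le_succ := by
  rintro v ⟨idx, -, hv⟩
  let k := univ.sup fun j => idx j + 1
  have tupleEdge_subset : tupleEdge v ⊆ (range k).biUnion A := by
    intro x hx
    obtain ⟨j, rfl⟩ := mem_tupleEdge.1 hx
    exact mem_biUnion.2 ⟨idx j, mem_range.2 (le_sup (f := fun j => idx j + 1) (mem_univ j)), hv j⟩
  have last_mem : ∀ w, IsIncrTuple A w → Fin.init w = v → ∃ i, w (Fin.last p) ∈ A (k + i) := by
    rintro w ⟨idw, hidw, hw⟩ rfl
    have idx_eq : ∀ j, idx j = idw j.castSucc := fun j =>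
      hA.eq (not_disjoint_iff.2 ⟨_, hv j, hw j.castSucc⟩)
    have hk : k ≤ idw (Fin.last p) :=
      Finset.sup_le fun j _ => idx_eq j ▸ hidw j.castSucc_lt_last
    obtain ⟨i, hi⟩ := Nat.exists_eq_add_of_le hk
    exact ⟨i, hi ▸ hw (Fin.last p)⟩
  refine homogWrt_of_forall_iff fun w w' hw hwv hw' hwv' => ?_
  have init_eq : Fin.init w = v := funext hwv
  have init_eq' : Fin.init w' = v := funext hwv'
  obtain ⟨i, hi⟩ := last_mem w hw init_eq
  obtain ⟨i', hi'⟩ := last_mem w' hw' init_eq'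
  rw [tupleEdge_eq_insert_init w, tupleEdge_eq_insert_init w', init_eq, init_eq']
  exact hlink k _ tupleEdge_subset i i' _ hi _ hi'

end PHomog

/-- The size required of the `j`-th set remaining at stage `k` of the construction of sets of sizes
`n' 0, n' 1, …`. The set with `j = 0` must contain `n' k` vertices besides the `∑ i < k, n' i` used
before. Any other set becomes the `(j - 1)`-th one at stage `k + 1`, at the cost of the number of
families of subsets of the `∑ i ≤ k, n' i` vertices used by then. -/
def stageSize (n' : ℕ → ℕ) : ℕ → ℕ → ℕ
  | k, 0 => ∑ i ∈ range (k + 1), n' i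
  | k, j + 1 => 2 ^ 2 ^ (∑ i ∈ range (k + 1), n' i) * stageSize n' (k + 1) j

theorem stageSize_monotone (n' : ℕ → ℕ) (k : ℕ) : Monotone (stageSize n' k) := by
  refine monotone_nat_of_le_succ fun j => ?_
  induction j generalizing k with
  | zero =>
    calc ∑ i ∈ range (k + 1), n' i ≤ ∑ i ∈ range (k + 2), n' i := by
          rw [sum_range_succ _ (k + 1)]
          exact Nat.le_add_right _ _
      _ ≤ 2 ^ 2 ^ (∑ i ∈ range (k + 1), n' i) * ∑ i ∈ range (k + 2), n' i :=
          Nat.le_mul_of_pos_left _ (by positivity)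
  | succ j ih => exact Nat.mul_le_mul_left _ (ih (k + 1))

/-- The state of the construction before its `k`-th set is chosen: the vertices `used` by the
earlier sets, and the sequence `rest` from which all further sets are to be taken. -/
structure Stage {V : Type*} [DecidableEq V] (H : Set (Finset V)) (n' : ℕ → ℕ) (k : ℕ) where
  used : Finset V
  rest : ℕ → Finset V
  card_used_le : #used ≤ ∑ i ∈ range k, n' i
  stageSize_le_card_rest : ∀ j, stageSize n' k j ≤ #(rest j)
  hasConstantLink : HasConstantLink H used rest

namespace Stage

variable {V : Type*} [DecidableEq V] {H : Set (Finset V)} {n' : ℕ → ℕ} {k : ℕ}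

/-- `t` arises from `s` by taking the set `t.used \ s.used` of at least `n' k` new vertices from
the first remaining set of `s` and thinning out the other remaining sets. -/
structure IsNext (s : Stage H n' k) (t : Stage H n' (k + 1)) : Prop where
  used_subset : s.used ⊆ t.used
  sdiff_subset : t.used \ s.used ⊆ s.rest 0
  le_card_sdiff : n' k ≤ #(t.used \ s.used)
  subseqOfSubsets : SubseqOfSubsets (fun j => s.rest (j + 1)) t.rest

theorem exists_initial (H : Set (Finset V)) {A : ℕ → Finset V}
    (hA : ∀ j, 2 * stageSize n' 0 j ≤ #(A j)) :
    ∃ s : Stage H n' 0, SubseqOfSubsets A s.rest := by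
  obtain ⟨B, hAB, hcard, hlink⟩ :=
    exists_subseqOfSubsets_hasConstantLink (U := ∅) H (stageSize_monotone n' 0) hA
  exact ⟨⟨∅, B, Nat.zero_le _, hcard, hlink⟩, hAB⟩

theorem exists_isNext (s : Stage H n' k) : ∃ t, s.IsNext t := by
  have enough_new : n' k ≤ #(s.rest 0 \ s.used) := by
    have hrest : ∑ i ∈ range (k + 1), n' i ≤ #(s.rest 0) := s.stageSize_le_card_rest 0
    have hsdiff := le_card_sdiff s.used (s.rest 0)
    have hused := s.card_used_le
    rw [sum_range_succ] at hrest
    omega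
  obtain ⟨new, hnew, hcard⟩ := exists_subset_card_eq enough_new
  have sdiff_eq : (s.used ∪ new) \ s.used = new :=
    union_sdiff_cancel_left (disjoint_sdiff.mono_right hnew)
  have card_used : #(s.used ∪ new) ≤ ∑ i ∈ range (k + 1), n' i := by
    rw [sum_range_succ]
    exact (card_union_le _ _).trans (Nat.add_le_add s.card_used_le hcard.le)
  have card_rest : ∀ j, 2 ^ 2 ^ #(s.used ∪ new) * stageSize n' (k + 1) j ≤ #(s.rest (j + 1)) :=
    fun j => calc
      _ ≤ 2 ^ 2 ^ (∑ i ∈ range (k + 1), n' i) * stageSize n' (k + 1) j := by gcongr <;> norm_num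
      _ ≤ #(s.rest (j + 1)) := s.stageSize_le_card_rest (j + 1)
  obtain ⟨B, hB, hBcard, hlink⟩ :=
    exists_subseqOfSubsets_hasConstantLink H (stageSize_monotone n' (k + 1)) card_rest
  exact ⟨⟨s.used ∪ new, B, card_used, hBcard, hlink⟩, subset_union_left,
    sdiff_eq.symm ▸ hnew.trans sdiff_subset, by rw [sdiff_eq, hcard], hB⟩

theorem exists_seq_isNext (s₀ : Stage H n' 0) :
    ∃ s : ∀ k, Stage H n' k, s 0 = s₀ ∧ ∀ k, (s k).IsNext (s (k + 1)) := by
  choose next hnext using fun k => exists_isNext (H := H) (n' := n') (k := k)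
  exact ⟨fun k => k.rec s₀ next, rfl, fun k => hnext k _⟩

/-- The sets of new vertices taken at the successive stages of a run of the construction. -/
def newVertices (s : ∀ k, Stage H n' k) (k : ℕ) : Finset V :=
  (s (k + 1)).used \ (s k).used

variable {s : ∀ k, Stage H n' k}

theorem newVertices_subset (hs : ∀ k, (s k).IsNext (s (k + 1))) {i k : ℕ} (hik : i < k) :
    newVertices s i ⊆ (s k).used :=
  have used_mono : Monotone fun k => (s k).used :=
    monotone_nat_of_le_succ fun k => (hs k).used_subset
  sdiff_subset.trans (used_mono hik)

theorem pairwise_disjoint_newVertices (hs : ∀ k, (s k).IsNext (s (k + 1))) :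
    Pairwise (Disjoint on newVertices s) :=
  (pairwise_disjoint_on _).2 fun _ _ hij => disjoint_sdiff.mono_left (newVertices_subset hs hij)

theorem subseqOfSubsets_newVertices (hs : ∀ k, (s k).IsNext (s (k + 1))) (k : ℕ) :
    SubseqOfSubsets (s k).rest fun j => newVertices s (k + j) :=
  (SubseqOfSubsets.diagonal (W := fun j => (s (k + j)).rest)
    fun j => (hs (k + j)).subseqOfSubsets).trans (.of_subset fun j => (hs (k + j)).sdiff_subset)

theorem pHomog_newVertices (hs : ∀ k, (s k).IsNext (s (k + 1))) (p : ℕ) :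
    PHomog (p + 1) H (newVertices s) p p.le_succ := by
  refine pHomog_of_hasConstantLink (pairwise_disjoint_newVertices hs) (fun k => ?_) p
  have earlier_subset : (range k).biUnion (newVertices s) ⊆ (s k).used :=
    biUnion_subset.2 fun _ hi => newVertices_subset hs (mem_range.1 hi)
  exact (s k).hasConstantLink.mono earlier_subset (subseqOfSubsets_newVertices hs k)

end Stage

theorem stmt_4_general.{u} (n' : ℕ → ℕ) :
    ∃ n : ℕ → ℕ, (∀ i, 0 < n i) ∧
      ∀ (V : Type u) (H : Set (Finset V)) (Vs : ℕ → Finset V), (∀ i, n i ≤ #(Vs i)) →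
        ∃ Vs' : ℕ → Finset V, SubseqOfSubsets Vs Vs' ∧ Pairwise (Disjoint on Vs') ∧
          (∀ i, n' i ≤ #(Vs' i)) ∧ ∀ p, PHomog (p + 1) H Vs' p p.le_succ := by
  classical
  refine ⟨fun j => 2 * stageSize n' 0 j + 1, fun j => Nat.succ_pos _, fun V H Vs hVs => ?_⟩
  obtain ⟨s₀, hs₀⟩ := Stage.exists_initial H fun j => (Nat.le_succ _).trans (hVs j)
  obtain ⟨s, rfl, hs⟩ := s₀.exists_seq_isNext
  have hsub : SubseqOfSubsets (s 0).rest (Stage.newVertices s) := by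
    simpa only [Nat.zero_add] using Stage.subseqOfSubsets_newVertices hs 0
  exact ⟨Stage.newVertices s, hs₀.trans hsub, Stage.pairwise_disjoint_newVertices hs,
    fun k => (hs k).le_card_sdiff, Stage.pHomog_newVertices hs⟩

/-- For every `q ≥ 2` and every sequence `n'` of positive integers
there is a sequence `n` of positive integers such that: for every `q`-uniform hypergraph `H`
and pairwise disjoint finite vertex sets `Vs` with `|Vs i| ≥ n i`, there is a subsequence
of subsets `Vs'` with `|Vs' i| ≥ n' i` for all `i` such that `H` together with `Vs'` is
`(q-1)`-homogeneous. -/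
theorem stmt_4 (q : ℕ) (hq : 2 ≤ q) (n' : ℕ → ℕ) (hn' : ∀ i, 0 < n' i) :
    ∃ n : ℕ → ℕ, (∀ i, 0 < n i) ∧
      ∀ (V : Type) (H : Set (Finset V)), IsUniform q H →
        ∀ Vs : ℕ → Finset V, (∀ i j, i ≠ j → Disjoint (Vs i) (Vs j)) →
          (∀ i, n i ≤ (Vs i).card) →
          ∃ Vs' : ℕ → Finset V, SubseqOfSubsets Vs Vs' ∧
            (∀ i, n' i ≤ (Vs' i).card) ∧
            PHomog q H Vs' (q - 1) (by omega) := by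
  obtain ⟨p, rfl⟩ := Nat.exists_eq_add_of_le' (one_le_two.trans hq)
  obtain ⟨n, hpos, hn⟩ := stmt_4_general n'
  refine ⟨n, hpos, fun V H _ Vs _ hVs => ?_⟩
  obtain ⟨Vs', hsub, -, hcard, hhom⟩ := hn V H Vs hVs
  exact ⟨Vs', hsub, hcard, hhom p⟩
end

section
/- Let q and t be positive integers with t ≥ q, and let H be a q-uniform hypergraph on a vertex set V that is M_{ℵ₀}^{(q)}(t)-free. If H has arbitrarily large finite independent sets (i.e., for every natural number n there exists a finite independent set of H of size at least n), then H has an infinite independent set. -/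
/-- `H` is `M_{ℵ₀}^{(q)}(t)`-free: there is no infinite sequence of pairwise disjoint
`t`-element independent sets of `H` such that every `q`-element subset of their union
containing at most one vertex from each part is an edge of `H`. -/
def MAleph0Free {V : Type*} (q t : ℕ) (H : Set (Finset V)) : Prop :=
  ¬ ∃ Vs : ℕ → Finset V,
      (∀ i j, i ≠ j → Disjoint (Vs i) (Vs j)) ∧
      (∀ i, (Vs i).card = t) ∧
      (∀ i, IsIndep q H ↑(Vs i)) ∧
      (∀ e : Finset V, e.card = q → (∀ x ∈ e, ∃ i, x ∈ Vs i) →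
        (∀ i, ∀ x ∈ e, ∀ y ∈ e, x ∈ Vs i → y ∈ Vs i → x = y) → e ∈ H)

/-!
The unboundedness of independent sets is partition regular, so there is an ultrafilter `u`, each of
whose members contains arbitrarily large finite independent sets. Ask whether for `u`-almost all
`x₁`, for `u`-almost all `x₂`, …, for `u`-almost all `x_q` the set `{x₁, …, x_q}` is an edge.
If so, greedily picking `t`-element independent sets, each inside a suitable member of `u`, produces
a sequence all of whose `q`-element transversals are edges. If not, then, `u` being an ultrafilter,
the same iterated quantifier holds for non-edges, and greedily picking single vertices
produces an infinite independent set.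
-/

open Filter Finset

theorem IsIndep.mono_s7 {V : Type*} {q : ℕ} {H : Set (Finset V)} {I J : Set V}
    (hJ : IsIndep q H J) (hIJ : I ⊆ J) : IsIndep q H I :=
  fun e he => hJ e (he.trans hIJ)

section BoundedMembers

variable {V : Type*} {F : Set (Finset V)} {A B : Set V}

theorem exists_ultrafilter_le_cofinite_forall_not {p : Set V → Prop}
    (hfin : ∀ A, A.Finite → p A) (hmono : ∀ B, p B → ∀ A ⊆ B, p A)
    (hunion : ∀ A, p A → ∀ B, p B → p (A ∪ B)) (huniv : ¬ p Set.univ) :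
    ∃ u : Ultrafilter V, (u : Filter V) ≤ cofinite ∧ ∀ A ∈ u, ¬ p A := by
  let l : Filter V := comk p (hfin ∅ Set.finite_empty) hmono hunion
  have : l.NeBot := ⟨fun hl => huniv <| by
    have hempty : ∅ ∈ l := hl ▸ mem_bot
    simpa only [l, mem_comk, Set.compl_empty] using hempty⟩
  have hl : Ultrafilter.of l ≤ l := Ultrafilter.of_le l
  exact ⟨Ultrafilter.of l, hl.trans fun A hA => mem_comk.2 (hfin _ hA),
    fun A hA hpA => Ultrafilter.compl_notMem_iff.2 hA (hl (compl_mem_comk.2 hpA))⟩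

/-- The members of the family `F` of finite sets that lie inside `A` have bounded cardinality.
For a hereditary family `F`, the sets `A` with this property are the ideal avoided by the
ultrafilter that drives the proof. -/
def HasBoundedMembers (F : Set (Finset V)) (A : Set V) : Prop :=
  ∃ n, ∀ I ∈ F, ↑I ⊆ A → #I ≤ n

theorem HasBoundedMembers.of_finite (hA : A.Finite) : HasBoundedMembers F A :=
  ⟨#hA.toFinset, fun _ _ hIA => card_le_card fun _ hx => hA.mem_toFinset.2 (hIA hx)⟩

theorem HasBoundedMembers.mono_s7 (hB : HasBoundedMembers F B) (hAB : A ⊆ B) :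
    HasBoundedMembers F A :=
  hB.imp fun _ hn I hI hIA => hn I hI (hIA.trans hAB)

theorem HasBoundedMembers.union (hF : IsLowerSet F) (hA : HasBoundedMembers F A)
    (hB : HasBoundedMembers F B) : HasBoundedMembers F (A ∪ B) := by
  classical
  obtain ⟨a, ha⟩ := hA
  obtain ⟨b, hb⟩ := hB
  refine ⟨a + b, fun I hI hIAB => ?_⟩
  have hIA : #{x ∈ I | x ∈ A} ≤ a :=
    ha _ (hF (filter_subset _ _) hI) fun x hx => (mem_filter.1 hx).2
  have hIB : #{x ∈ I | x ∉ A} ≤ b :=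
    hb _ (hF (filter_subset _ _) hI) fun x hx =>
      (hIAB (mem_filter.1 hx).1).resolve_left (mem_filter.1 hx).2
  rw [← card_filter_add_card_filter_not (s := I) (· ∈ A)]
  exact add_le_add hIA hIB

theorem exists_mem_card_eq_of_not_hasBoundedMembers (hF : IsLowerSet F)
    (hA : ¬ HasBoundedMembers F A) (t : ℕ) : ∃ I ∈ F, #I = t ∧ ↑I ⊆ A := by
  simp only [HasBoundedMembers, not_exists, not_forall, not_le] at hA
  obtain ⟨J, hJ, hJA, htJ⟩ := hA t
  obtain ⟨I, hIJ, hIt⟩ := exists_subset_card_eq htJ.le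
  exact ⟨I, hF hIJ hJ, hIt, (coe_subset.2 hIJ).trans hJA⟩

theorem exists_ultrafilter_forall_not_hasBoundedMembers (hF : IsLowerSet F)
    (huniv : ¬ HasBoundedMembers F Set.univ) :
    ∃ u : Ultrafilter V, (u : Filter V) ≤ cofinite ∧ ∀ A ∈ u, ¬ HasBoundedMembers F A :=
  exists_ultrafilter_le_cofinite_forall_not (fun _ => .of_finite) (fun _ hB _ => hB.mono_s7)
    (fun _ hA _ => hA.union hF) huniv

end BoundedMembers

/-- `e` is a partial transversal of the sequence `W`: it is covered by the sets `W i` and meets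
each of them in at most one point. -/
def IsPartialTransversal {V : Type*} (W : ℕ → Finset V) (e : Finset V) : Prop :=
  (∀ x ∈ e, ∃ i, x ∈ W i) ∧ ∀ i, ∀ x ∈ e, ∀ y ∈ e, x ∈ W i → y ∈ W i → x = y

section GreedySequence

variable {V : Type*} [DecidableEq V] {l : Filter V} {S : Finset V → Prop}

theorem exists_seq_forall_biUnion_range {r : Finset V → Finset V → Prop}
    (hr : ∀ U, ∃ W, r U W) :
    ∃ W : ℕ → Finset V, ∀ n, r ((range n).biUnion W) (W n) := by
  choose next hnext using hr
  let U (n : ℕ) : Finset V := (fun T : Finset V => next T ∪ T)^[n] ∅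
  have hU (n : ℕ) : (range n).biUnion (fun i => next (U i)) = U n := by
    induction n with
    | zero => rfl
    | succ n ih =>
      rw [range_add_one, biUnion_insert, ih]
      simp only [U, Function.iterate_succ_apply']
  exact ⟨fun n => next (U n), fun n => hU n ▸ hnext (U n)⟩

theorem IsPartialTransversal.of_forall_insert {W : ℕ → Finset V} (hempty : S ∅)
    (hinsert : ∀ n, ∀ x ∈ W n, ∀ e ⊆ (range n).biUnion W, S e → S (insert x e))
    {e : Finset V} (he : IsPartialTransversal W e) : S e := by
  obtain ⟨hcover, hunique⟩ := he
  choose! index hindex using hcover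
  suffices ∀ s ⊆ e, S s from this e Subset.rfl
  intro s
  induction s using Finset.induction_on_max_value index with
  | empty => exact fun _ => hempty
  | insert a s has hmax ih =>
    intro hse
    have hae : a ∈ e := hse (mem_insert_self a s)
    have hse : s ⊆ e := (subset_insert a s).trans hse
    refine hinsert (index a) a (hindex a hae) s (fun x hx => ?_) (ih hse)
    have hne : index x ≠ index a := fun h => has <|
      hunique _ x (hse hx) a hae (hindex x (hse hx)) (h ▸ hindex a hae) ▸ hx
    exact mem_biUnion.2
      ⟨index x, mem_range.2 ((hmax x hx).lt_of_ne hne), hindex x (hse hx)⟩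

theorem eventually_notMem_and_forall_subset_insert (hl : l ≤ cofinite)
    (hinsert : ∀ e, S e → ∀ᶠ x in l, S (insert x e)) (U : Finset V) :
    ∀ᶠ x in l, x ∉ U ∧ ∀ e ⊆ U, S e → S (insert x e) := by
  have hforall : ∀ᶠ x in l, ∀ e ∈ U.powerset, S e → S (insert x e) := by
    rw [eventually_all_finset]
    exact fun e _ => eventually_imp_distrib_left.2 (hinsert e)
  have hnotMem : ∀ᶠ x in l, x ∉ U := hl U.finite_toSet.compl_mem_cofinite
  filter_upwards [hnotMem, hforall] with x hxU hx
  exact ⟨hxU, fun e he => hx e (mem_powerset.2 he)⟩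

theorem exists_seq_disjoint_forall_isPartialTransversal {F : Set (Finset V)}
    (hl : l ≤ cofinite) (hF : ∀ A ∈ l, ∃ I ∈ F, ↑I ⊆ A) (hempty : S ∅)
    (hinsert : ∀ e, S e → ∀ᶠ x in l, S (insert x e)) :
    ∃ W : ℕ → Finset V, (∀ i j, i ≠ j → Disjoint (W i) (W j)) ∧ (∀ i, W i ∈ F) ∧
      ∀ e, IsPartialTransversal W e → S e := by
  obtain ⟨W, hW⟩ := exists_seq_forall_biUnion_range fun U =>
    hF _ (eventually_notMem_and_forall_subset_insert hl hinsert U)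
  have hdisj {i j : ℕ} (hij : i < j) : Disjoint (W i) (W j) :=
    disjoint_left.2 fun x hxi hxj =>
      ((hW j).2 hxj).1 (mem_biUnion.2 ⟨i, mem_range.2 hij, hxi⟩)
  exact ⟨W, fun i j hij => hij.lt_or_gt.elim hdisj fun h => (hdisj h).symm, fun i => (hW i).1,
    fun e he => he.of_forall_insert hempty fun n x hx => ((hW n).2 hx).2⟩

end GreedySequence

section IteratedEventually

variable {V : Type*} [DecidableEq V] {l : Filter V} {P : Finset V → Prop} {q : ℕ}

/-- For `l`-almost all `x₁`, for `l`-almost all `x₂`, …, for `l`-almost all `xₙ`, the set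
`e ∪ {x₁, …, xₙ}` satisfies `P`. For `e = ∅` and `l` an ultrafilter, this says that
`P {x₁, …, xₙ}` holds for almost all tuples in the `n`-th Fubini power of `l`. -/
def IteratedEventually (l : Filter V) (P : Finset V → Prop) : ℕ → Finset V → Prop
  | 0, e => P e
  | n + 1, e => ∀ᶠ x in l, IteratedEventually l P n (insert x e)

theorem iteratedEventually_not {u : Ultrafilter V} (n : ℕ) (e : Finset V) :
    IteratedEventually u (fun s => ¬ P s) n e ↔ ¬ IteratedEventually u P n e := by
  induction n generalizing e with
  | zero => rfl
  | succ n ih =>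
    simp only [IteratedEventually, ih]
    exact Ultrafilter.eventually_not

theorem IteratedEventually.eventually_insert {e : Finset V} (hl : l ≤ cofinite)
    (he : #e ≤ q → IteratedEventually l P (q - #e) e) :
    ∀ᶠ x in l, #(insert x e) ≤ q → IteratedEventually l P (q - #(insert x e)) (insert x e) := by
  have hnotMem : ∀ᶠ x in l, x ∉ e := hl e.finite_toSet.compl_mem_cofinite
  rcases lt_or_ge #e q with hlt | hge
  · have hnext : ∀ᶠ x in l, IteratedEventually l P (q - (#e + 1)) (insert x e) := by
      have h := he hlt.le
      rwa [show q - #e = q - (#e + 1) + 1 by lia] at h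
    filter_upwards [hnotMem, hnext] with x hxe hx _
    rwa [card_insert_of_notMem hxe]
  · filter_upwards [hnotMem] with x hxe hcard
    rw [card_insert_of_notMem hxe] at hcard
    lia

theorem IteratedEventually.exists_seq_disjoint {F : Set (Finset V)}
    (h : IteratedEventually l P q ∅) (hl : l ≤ cofinite) (hF : ∀ A ∈ l, ∃ I ∈ F, ↑I ⊆ A) :
    ∃ W : ℕ → Finset V, (∀ i j, i ≠ j → Disjoint (W i) (W j)) ∧ (∀ i, W i ∈ F) ∧
      ∀ e, IsPartialTransversal W e → #e = q → P e := by
  obtain ⟨W, hdisj, hWF, hW⟩ := exists_seq_disjoint_forall_isPartialTransversal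
    (S := fun e => #e ≤ q → IteratedEventually l P (q - #e) e) hl hF (fun _ => h)
    (fun _ => eventually_insert hl)
  refine ⟨W, hdisj, hWF, fun e he hcard => ?_⟩
  have heP := hW e he hcard.le
  rwa [hcard, Nat.sub_self] at heP

theorem IteratedEventually.exists_infinite [l.NeBot] (h : IteratedEventually l P q ∅)
    (hl : l ≤ cofinite) :
    ∃ I : Set V, I.Infinite ∧ ∀ e : Finset V, ↑e ⊆ I → #e = q → P e := by
  have hsingleton : ∀ A ∈ l, ∃ I ∈ Set.range (singleton : V → Finset V), ↑I ⊆ A := fun A hA =>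
    have ⟨x, hx⟩ := nonempty_of_mem hA
    ⟨{x}, ⟨x, rfl⟩, by simpa only [coe_singleton, Set.singleton_subset_iff]⟩
  obtain ⟨W, hdisj, hWF, hW⟩ := h.exists_seq_disjoint hl hsingleton
  choose f hf using hWF
  have hmem {x : V} {i : ℕ} : x ∈ W i ↔ x = f i := by rw [← hf i, mem_singleton]
  have hinj : Function.Injective f := fun i j hij => by
    by_contra hne
    exact disjoint_left.1 (hdisj i j hne) (hmem.2 rfl) (hmem.2 hij)
  refine ⟨Set.range f, Set.infinite_range_of_injective hinj, fun e he => hW e ⟨?_, ?_⟩⟩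
  · exact fun x hx => (he hx).imp fun i hi => hmem.2 hi.symm
  · exact fun i x _ y _ hx hy => (hmem.1 hx).trans (hmem.1 hy).symm

end IteratedEventually

theorem stmt_7_general {V : Type*} (q t : ℕ) (H : Set (Finset V)) (hfree : MAleph0Free q t H)
    (hind : ∀ n : ℕ, ∃ I : Finset V, IsIndep q H ↑I ∧ n ≤ I.card) :
    ∃ I : Set V, I.Infinite ∧ IsIndep q H I := by
  classical
  let F : Set (Finset V) := {I | IsIndep q H I}
  have hF : IsLowerSet F := fun I J hJI hI => IsIndep.mono_s7 hI (coe_subset.2 hJI)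
  have huniv : ¬ HasBoundedMembers F Set.univ := fun ⟨n, hn⟩ =>
    have ⟨I, hI, hcard⟩ := hind (n + 1)
    (hn I hI (Set.subset_univ _)).not_gt hcard
  obtain ⟨u, hu, hunbounded⟩ := exists_ultrafilter_forall_not_hasBoundedMembers hF huniv
  by_cases hedge : IteratedEventually u (· ∈ H) q ∅
  · have hlarge : ∀ A ∈ (u : Filter V), ∃ I ∈ {I ∈ F | #I = t}, ↑I ⊆ A := fun A hA =>
      have ⟨I, hI, hcard, hIA⟩ :=
        exists_mem_card_eq_of_not_hasBoundedMembers hF (hunbounded A hA) t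
      ⟨I, ⟨hI, hcard⟩, hIA⟩
    obtain ⟨W, hdisj, hWF, hW⟩ := hedge.exists_seq_disjoint hu hlarge
    exact absurd ⟨W, hdisj, fun i => (hWF i).2, fun i => (hWF i).1,
      fun e hcard hcover hunique => hW e ⟨hcover, hunique⟩ hcard⟩ hfree
  · exact ((iteratedEventually_not q ∅).2 hedge).exists_infinite hu

/-- If a `q`-uniform hypergraph is `M_{ℵ₀}^{(q)}(t)`-free (`t ≥ q ≥ 1`)
and has arbitrarily large finite independent sets, then it has an infinite
independent set. -/
theorem stmt_7 {V : Type*} (q t : ℕ) (hq : 1 ≤ q) (htq : q ≤ t) (H : Set (Finset V))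
    (huni : IsUniform q H) (hfree : MAleph0Free q t H)
    (hind : ∀ n : ℕ, ∃ I : Finset V, IsIndep q H ↑I ∧ n ≤ I.card) :
    ∃ I : Set V, I.Infinite ∧ IsIndep q H I :=
  stmt_7_general q t H hfree hind
end

section
/- Let d ≥ 1 and let F be a family of nonempty compact convex subsets of ℝ^d. Suppose that every infinite subfamily of F contains d+1 members having a common point. Then there exists a finite set P of points of ℝ^d such that every member of F contains at least one point of P. -/
/-!
If no finite set pierces the family, the finite intersection property yields an ultrafilter `U` on
it for which every point lies in `U`-almost no member. For an affine subspace `A`, let `L` be the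
set of limits along `U` of points of the traces `C i ∩ A`. If `L` affinely spanned `A`, then a
relative interior point of the convex hull of finitely many points of `L` would lie in `U`-almost
all `C i`; so `L` spans a proper subspace of `A`. Induction on the dimension, with compactness
passing from limits back to the sets themselves, shows that for `U`-almost all `i₀`, for `U`-almost
all `i₁`, …, for `U`-almost all `i_d`, the intersection `C i₀ ∩ … ∩ C i_d` is empty. Members of the
family can therefore be selected one after another so that no `d + 1` of them have a common point.
-/

open Filter Metric Topology Module

section Selection

variable {ι E : Type*}

theorem exists_ultrafilter_forall_eventually_notMem {C : ι → Set E}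
    (hC : ∀ P : Finset E, ∃ i, ∀ p ∈ P, p ∉ C i) :
    ∃ U : Ultrafilter ι, ∀ x, ∀ᶠ i in U, x ∉ C i := by
  classical
  obtain ⟨U, hU⟩ := Ultrafilter.exists_ultrafilter_of_finite_inter_nonempty
    (Set.range fun x => {i | x ∉ C i}) fun T hT => by
      rw [← Set.image_univ] at hT
      obtain ⟨P, -, rfl⟩ := Finset.subset_set_image_iff.1 hT
      obtain ⟨i, hi⟩ := hC P
      exact ⟨i, by simpa using hi⟩
  exact ⟨U, fun x => hU ⟨x, rfl⟩⟩

theorem le_cofinite_of_forall_eventually_notMem {l : Filter ι} {C : ι → Set E}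
    (hne : ∀ i, (C i).Nonempty) (hl : ∀ x, ∀ᶠ i in l, x ∉ C i) : l ≤ cofinite := by
  refine le_cofinite_iff_eventually_ne.2 fun i => ?_
  obtain ⟨x, hx⟩ := hne i
  filter_upwards [hl x] with j hj hji
  exact hj (hji ▸ hx)

theorem exists_infinite_forall_finset_subset [DecidableEq ι] {l : Filter ι} [NeBot l]
    (hl : l ≤ cofinite) {Q : Finset ι → Prop} (hempty : Q ∅)
    (hinsert : ∀ s, Q s → ∀ᶠ j in l, Q (insert j s)) :
    ∃ S : Set ι, S.Infinite ∧ ∀ s : Finset ι, ↑s ⊆ S → Q s := by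
  have hchar : Order.IsOfFiniteCharacter {S : Set ι | ∀ s : Finset ι, ↑s ⊆ S → Q s} :=
    fun S => ⟨fun hS T hT _ s hs => hS s (hs.trans hT),
      fun hS s hs => hS s hs s.finite_toSet s subset_rfl⟩
  obtain ⟨S, -, hS⟩ := hchar.exists_maximal (x := ∅) fun s hs => by
    rwa [Finset.coe_eq_empty.1 (Set.subset_empty_iff.1 hs)]
  refine ⟨S, fun hfin => ?_, hS.prop⟩
  lift S to Finset ι using hfin
  have hnew : ∀ᶠ j in l, j ∉ S := hl S.finite_toSet.compl_mem_cofinite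
  have hext : ∀ᶠ j in l, ∀ s ∈ S.powerset, Q (insert j s) :=
    (eventually_all_finset _).2 fun s hs => hinsert s (hS.prop s (by simpa using hs))
  obtain ⟨j, hjS, hj⟩ := (hnew.and hext).exists
  refine hjS (hS.le_of_ge (y := insert j ↑S) (fun s hs => ?_) (Set.subset_insert j _) (by simp))
  have hsS : s ⊆ insert j S := by exact_mod_cast hs
  by_cases hjs : j ∈ s
  · rw [← Finset.insert_erase hjs]
    exact hj _ (Finset.mem_powerset.2 (Finset.subset_insert_iff.1 hsS))
  · exact hS.prop s (by exact_mod_cast (Finset.subset_insert_iff_of_notMem hjs).1 hsS)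

end Selection

section EventuallyInterEmpty

variable {ι E : Type*}

/-- For `l`-almost all `i₁`, for `l`-almost all `i₂`, …, for `l`-almost all `iₙ`, the set
`K ∩ C i₁ ∩ ⋯ ∩ C iₙ` is empty. -/
def EventuallyInterEmpty (l : Filter ι) (C : ι → Set E) : ℕ → Set E → Prop
  | 0, K => K = ∅
  | n + 1, K => ∀ᶠ i in l, EventuallyInterEmpty l C n (K ∩ C i)

theorem eventuallyInterEmpty_empty (l : Filter ι) (C : ι → Set E) (n : ℕ) :
    EventuallyInterEmpty l C n ∅ := by
  induction n with
  | zero => rfl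
  | succ n ih => exact .of_forall fun i => by rwa [Set.empty_inter]

theorem EventuallyInterEmpty.exists_infinite_forall_biInter_eq_empty {l : Filter ι} [NeBot l]
    {C : ι → Set E} {n : ℕ} (hC : EventuallyInterEmpty l C n Set.univ) (hl : l ≤ cofinite) :
    ∃ S : Set ι, S.Infinite ∧ ∀ T : Finset ι, ↑T ⊆ S → T.card = n → ⋂ i ∈ T, C i = ∅ := by
  classical
  let Q (s : Finset ι) : Prop :=
    ∀ k, s.card + k = n → EventuallyInterEmpty l C k (⋂ i ∈ s, C i)
  have hempty : Q ∅ := by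
    intro k hk
    obtain rfl : k = n := by simpa using hk
    simpa using hC
  have hinsert (s : Finset ι) (hs : Q s) : ∀ᶠ j in l, Q (insert j s) := by
    have hnew : ∀ᶠ j in l, j ∉ s := hl s.finite_toSet.compl_mem_cofinite
    rcases lt_or_ge s.card n with hlt | hge
    · obtain ⟨m, rfl⟩ := Nat.exists_eq_add_of_lt hlt
      have hnext : ∀ᶠ j in l, EventuallyInterEmpty l C m ((⋂ i ∈ s, C i) ∩ C j) :=
        hs (m + 1) (by omega)
      filter_upwards [hnew, hnext] with j hjs hj k hk
      obtain rfl : k = m := by rw [Finset.card_insert_of_notMem hjs] at hk; omega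
      rwa [Finset.set_biInter_insert, Set.inter_comm]
    · filter_upwards [hnew] with j hjs k hk
      rw [Finset.card_insert_of_notMem hjs] at hk
      omega
  obtain ⟨S, hS, hQ⟩ := exists_infinite_forall_finset_subset hl hempty hinsert
  exact ⟨S, hS, fun T hT hcard => hQ T hT 0 hcard⟩

end EventuallyInterEmpty

section KuratowskiLimsup

variable {ι E : Type*} [TopologicalSpace E] {l : Filter ι} {C D : ι → Set E} {A A' K : Set E}

/-- The Kuratowski upper limit of the sets `D i` along `l`. When `l` is an ultrafilter it is also
the lower limit, and consists of the limits along `l` of points chosen in the sets `D i`. -/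
def kuratowskiLimsup (l : Filter ι) (D : ι → Set E) : Set E :=
  {p | ∀ V ∈ 𝓝 p, ∃ᶠ i in l, (D i ∩ V).Nonempty}

theorem kuratowskiLimsup_subset_of_isClosed (hA : IsClosed A) (hD : ∀ i, D i ⊆ A) :
    kuratowskiLimsup l D ⊆ A := by
  intro p hp
  refine hA.closure_subset (mem_closure_iff_nhds.2 fun V hV => ?_)
  obtain ⟨i, z, hzD, hzV⟩ := (hp V hV).exists
  exact ⟨z, hzV, hD i hzD⟩

theorem eventually_inter_eq_empty_of_isCompact (hK : IsCompact K)
    (h : kuratowskiLimsup l D ∩ K = ∅) : ∀ᶠ i in l, D i ∩ K = ∅ := by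
  refine hK.induction_on (p := fun V => ∀ᶠ i in l, D i ∩ V = ∅) (by simp) ?_ ?_ ?_
  · exact fun V W hVW hW => hW.mono fun i hi =>
      Set.subset_empty_iff.1 ((Set.inter_subset_inter_right _ hVW).trans hi.subset)
  · intro V W hV hW
    filter_upwards [hV, hW] with i hiV hiW
    rw [Set.inter_union_distrib_left, hiV, hiW, Set.union_empty]
  · intro p hpK
    have hp : p ∉ kuratowskiLimsup l D := fun hp => Set.notMem_empty p (h ▸ ⟨hp, hpK⟩)
    simp only [kuratowskiLimsup, Set.mem_ofPred_eq, not_forall, not_frequently,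
      Set.not_nonempty_iff_eq_empty] at hp
    obtain ⟨V, hV, hDV⟩ := hp
    exact ⟨V, mem_nhdsWithin_of_mem_nhds hV, hDV⟩

theorem EventuallyInterEmpty.of_kuratowskiLimsup_subset [T2Space E] (hC : ∀ i, IsCompact (C i))
    (hA : kuratowskiLimsup l (fun i => C i ∩ A) ⊆ A') {n : ℕ} (hK : IsCompact K)
    (h : EventuallyInterEmpty l C n (A' ∩ K)) : EventuallyInterEmpty l C (n + 1) (A ∩ K) := by
  induction n generalizing K with
  | zero =>
    have hdisj : kuratowskiLimsup l (fun i => C i ∩ A) ∩ K = ∅ :=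
      Set.subset_empty_iff.1 ((Set.inter_subset_inter_left K hA).trans (Eq.subset h))
    filter_upwards [eventually_inter_eq_empty_of_isCompact hK hdisj] with i hi
    rwa [Set.inter_comm, ← Set.inter_assoc]
  | succ n ih =>
    refine Eventually.mono h fun i hi => ?_
    rw [Set.inter_assoc] at hi ⊢
    exact ih (hK.inter (hC i)) hi

end KuratowskiLimsup

theorem eventually_mem_thickening_of_mem_kuratowskiLimsup {ι E : Type*} [PseudoMetricSpace E]
    {U : Ultrafilter ι} {D : ι → Set E} {p : E} (hp : p ∈ kuratowskiLimsup (U : Filter ι) D)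
    {δ : ℝ} (hδ : 0 < δ) : ∀ᶠ i in U, p ∈ thickening δ (D i) := by
  filter_upwards [Ultrafilter.frequently_iff_eventually.1 (hp _ (ball_mem_nhds p hδ))]
    with i ⟨z, hzD, hzp⟩
  exact mem_thickening_iff.2 ⟨z, hzD, mem_ball'.1 hzp⟩

section NormedSpace

variable {ι E : Type*} [NormedAddCommGroup E] [NormedSpace ℝ E]

theorem exists_pos_closedBall_inter_affineSpan_subset_of_mem_intrinsicInterior {s : Set E} {x : E}
    (hx : x ∈ intrinsicInterior ℝ s) : ∃ δ > 0, closedBall x δ ∩ affineSpan ℝ s ⊆ s := by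
  obtain ⟨y, hy, rfl⟩ := mem_intrinsicInterior.1 hx
  obtain ⟨δ, hδ, hball⟩ := nhds_basis_closedBall.mem_iff.1 (mem_interior_iff_mem_nhds.1 hy)
  exact ⟨δ, hδ, fun z hz => hball (show ⟨z, hz.2⟩ ∈ closedBall y δ from hz.1)⟩

/-- Let `z` be a point of `T` nearest to `x`. Pushing `x` away from `z` by `δ` gives a point `y`
close to some `w ∈ T`, and the point dividing `[z, w]` as `x` divides `[z, y]` is closer to `x` than
`z` is. -/
theorem mem_of_closedBall_inter_subset_thickening {T : Set E} (hT : IsCompact T)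
    (hTconv : Convex ℝ T) {A : AffineSubspace ℝ E} (hTA : T ⊆ A) {x : E} (hxA : x ∈ A) {δ : ℝ}
    (hδ : 0 ≤ δ) (hball : closedBall x δ ∩ A ⊆ thickening δ T) : x ∈ T := by
  by_contra hxT
  obtain ⟨z₀, hz₀, -⟩ := mem_thickening_iff.1 (hball ⟨mem_closedBall_self hδ, hxA⟩)
  obtain ⟨z, hz, hzmin⟩ := hT.exists_infDist_eq_dist ⟨z₀, hz₀⟩ x
  have hzx : x ≠ z := fun h => hxT (h ▸ hz)
  set r := dist x z
  have hr : 0 < r := dist_pos.2 hzx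
  set y := AffineMap.lineMap x z (-(δ / r))
  have hyA : y ∈ A := AffineMap.lineMap_mem _ hxA (hTA hz)
  have hyx : dist y x = δ := by
    rw [dist_lineMap_left, norm_neg, Real.norm_of_nonneg (by positivity)]
    exact div_mul_cancel₀ δ hr.ne'
  obtain ⟨w, hw, hyw⟩ := mem_thickening_iff.1 (hball ⟨hyx.le, hyA⟩)
  set c := r / (r + δ)
  have hc : 0 < c := by positivity
  have hqT : z + c • (w - z) ∈ T :=
    hTconv.add_smul_sub_mem hz hw ⟨hc.le, div_le_one_of_le₀ (by linarith) (by linarith)⟩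
  have hxq : x - (z + c • (w - z)) = c • (y - w) := by
    simp only [y, c, AffineMap.lineMap_apply_module']
    match_scalars <;> field_simp <;> ring
  have hcloser : dist x (z + c • (w - z)) < r := calc
    dist x (z + c • (w - z)) = c * dist y w := by
      rw [dist_eq_norm, hxq, norm_smul, Real.norm_of_nonneg hc.le, dist_eq_norm]
    _ < c * (r + δ) := by gcongr; linarith
    _ = r := div_mul_cancel₀ r (by positivity)
  exact hcloser.not_ge (hzmin ▸ infDist_le_dist_of_mem hqT)

variable [FiniteDimensional ℝ E] {U : Ultrafilter ι} {C : ι → Set E}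

theorem eventually_mem_of_mem_intrinsicInterior_convexHull (hcpt : ∀ i, IsCompact (C i))
    (hconv : ∀ i, Convex ℝ (C i)) {A : AffineSubspace ℝ E} {t : Set E} (ht : t.Finite)
    (hlim : t ⊆ kuratowskiLimsup (U : Filter ι) fun i => C i ∩ A) (hspan : affineSpan ℝ t = A)
    {x : E} (hx : x ∈ intrinsicInterior ℝ (convexHull ℝ t)) : ∀ᶠ i in U, x ∈ C i := by
  obtain ⟨δ, hδ, hball⟩ :=
    exists_pos_closedBall_inter_affineSpan_subset_of_mem_intrinsicInterior hx
  rw [affineSpan_convexHull, hspan] at hball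
  have hxA : x ∈ A :=
    hspan ▸ convexHull_subset_affineSpan t (intrinsicInterior_subset hx)
  have hnear : ∀ᶠ i in U, ∀ p ∈ t, p ∈ thickening δ (C i ∩ A) :=
    ht.eventually_all.2 fun p hp =>
      eventually_mem_thickening_of_mem_kuratowskiLimsup (hlim hp) hδ
  filter_upwards [hnear] with i hi
  have hCA : Convex ℝ (C i ∩ A) := (hconv i).inter A.convex
  exact (mem_of_closedBall_inter_subset_thickening
    ((hcpt i).inter_right A.closed_of_finiteDimensional) hCA Set.inter_subset_right hxA hδ.le
    (hball.trans (convexHull_min hi (hCA.thickening δ)))).1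

theorem affineSpan_kuratowskiLimsup_lt (hcpt : ∀ i, IsCompact (C i))
    (hconv : ∀ i, Convex ℝ (C i)) (hnull : ∀ x, ∀ᶠ i in U, x ∉ C i) {A : AffineSubspace ℝ E}
    (hA : (A : Set E).Nonempty) :
    affineSpan ℝ (kuratowskiLimsup (U : Filter ι) fun i => C i ∩ A) < A := by
  refine lt_of_le_of_ne (affineSpan_le.2 (kuratowskiLimsup_subset_of_isClosed
    A.closed_of_finiteDimensional fun i => Set.inter_subset_right)) fun hspan => ?_
  obtain ⟨t, hlim, htspan, hind⟩ :=
    exists_affineIndependent ℝ E (kuratowskiLimsup (U : Filter ι) fun i => C i ∩ A)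
  rw [hspan] at htspan
  have ht : t.Finite := finite_set_of_fin_dim_affineIndependent ℝ hind
  have htne : t.Nonempty := (affineSpan_nonempty ℝ).1 (htspan ▸ hA)
  obtain ⟨x, hx⟩ := htne.convexHull.intrinsicInterior (convex_convexHull ℝ t)
  have hmem := eventually_mem_of_mem_intrinsicInterior_convexHull hcpt hconv ht hlim htspan hx
  obtain ⟨i, hxi, hxi'⟩ := (hmem.and (hnull x)).exists
  exact hxi' hxi

theorem eventuallyInterEmpty_affineSubspace (hcpt : ∀ i, IsCompact (C i))
    (hconv : ∀ i, Convex ℝ (C i)) (hnull : ∀ x, ∀ᶠ i in U, x ∉ C i) {n : ℕ}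
    {A : AffineSubspace ℝ E} (hA : finrank ℝ A.direction ≤ n) :
    EventuallyInterEmpty (U : Filter ι) C (n + 1) (A : Set E) := by
  induction n generalizing A with
  | zero =>
    rcases (A : Set E).eq_empty_or_nonempty with hempty | ⟨x, hx⟩
    · exact hempty ▸ eventuallyInterEmpty_empty _ C _
    have hsingle (y : E) (hy : y ∈ A) : y = x := by
      have hyx := A.vsub_mem_direction hy hx
      rwa [Submodule.finrank_eq_zero.1 (Nat.le_zero.1 hA), Submodule.mem_bot, vsub_eq_zero_iff_eq]
        at hyx
    filter_upwards [hnull x] with i hi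
    exact Set.eq_empty_of_forall_notMem fun y hy => hi (hsingle y hy.1 ▸ hy.2)
  | succ n ih =>
    rcases (A : Set E).eq_empty_or_nonempty with hempty | hne
    · exact hempty ▸ eventuallyInterEmpty_empty _ C _
    set A' := affineSpan ℝ (kuratowskiLimsup (U : Filter ι) fun i => C i ∩ A)
    have hlt : A' < A := affineSpan_kuratowskiLimsup_lt hcpt hconv hnull hne
    have hA' : EventuallyInterEmpty (U : Filter ι) C (n + 1) (A' : Set E) := by
      rcases (A' : Set E).eq_empty_or_nonempty with hempty' | hne'
      · exact hempty' ▸ eventuallyInterEmpty_empty _ C _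
      · exact ih (Nat.lt_succ_iff.1 ((Submodule.finrank_lt_finrank_of_lt
          (AffineSubspace.direction_lt_of_nonempty hlt hne')).trans_le hA))
    refine Eventually.mono hA' fun i hi => ?_
    exact .of_kuratowskiLimsup_subset hcpt (subset_affineSpan ℝ _) (hcpt i) hi

theorem exists_infinite_forall_biInter_eq_empty_of_forall_finset_exists_notMem
    (hne : ∀ i, (C i).Nonempty) (hcpt : ∀ i, IsCompact (C i)) (hconv : ∀ i, Convex ℝ (C i))
    (hC : ∀ P : Finset E, ∃ i, ∀ p ∈ P, p ∉ C i) :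
    ∃ S : Set ι, S.Infinite ∧
      ∀ T : Finset ι, ↑T ⊆ S → T.card = finrank ℝ E + 1 → ⋂ i ∈ T, C i = ∅ := by
  obtain ⟨U, hU⟩ := exists_ultrafilter_forall_eventually_notMem hC
  have hempty : EventuallyInterEmpty (U : Filter ι) C (finrank ℝ E + 1) Set.univ :=
    eventuallyInterEmpty_affineSubspace (A := ⊤) hcpt hconv hU (Submodule.finrank_le _)
  exact hempty.exists_infinite_forall_biInter_eq_empty
    (le_cofinite_of_forall_eventually_notMem hne hU)

theorem stmt_8_general (F : Set (Set E)) (hne : ∀ A ∈ F, A.Nonempty)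
    (hcpt : ∀ A ∈ F, IsCompact A) (hcvx : ∀ A ∈ F, Convex ℝ A)
    (hyp : ∀ G ⊆ F, G.Infinite → ∃ T : Finset (Set E), ↑T ⊆ G ∧ T.card = finrank ℝ E + 1 ∧
      ∃ x : E, ∀ A ∈ T, x ∈ A) :
    ∃ P : Finset E, ∀ A ∈ F, ∃ p ∈ P, p ∈ A := by
  classical
  by_contra! hP
  obtain ⟨S, hS, hempty⟩ :=
    exists_infinite_forall_biInter_eq_empty_of_forall_finset_exists_notMem
      (C := ((↑) : F → Set E)) (fun A => hne A A.2) (fun A => hcpt A A.2)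
      (fun A => hcvx A A.2) fun P => by simpa using hP P
  obtain ⟨T, hTS, hcard, x, hx⟩ := hyp (Subtype.val '' S) (Subtype.coe_image_subset F S)
    (hS.image Subtype.val_injective.injOn)
  obtain ⟨T, hT, rfl⟩ := Finset.subset_set_image_iff.1 hTS
  rw [Finset.card_image_of_injective _ Subtype.val_injective] at hcard
  refine Set.notMem_empty x (hempty T hT hcard ▸ Set.mem_iInter₂.2 fun A hA => ?_)
  exact hx A (Finset.mem_image_of_mem _ hA)

end NormedSpace

/-- **Corollary `(ℵ₀, d+1)`-theorem for convex sets.**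
If `F` is a family of nonempty compact convex subsets of `ℝ^d` such that every infinite
subfamily contains `d+1` members having a common point, then all members of `F` can be
pierced by finitely many points. -/
theorem stmt_8 (d : ℕ) (hd : 1 ≤ d)
    (F : Set (Set (EuclideanSpace ℝ (Fin d))))
    (hne : ∀ A ∈ F, A.Nonempty)
    (hcpt : ∀ A ∈ F, IsCompact A)
    (hcvx : ∀ A ∈ F, Convex ℝ A)
    (hyp : ∀ G ⊆ F, G.Infinite →
      ∃ T : Finset (Set (EuclideanSpace ℝ (Fin d))), ↑T ⊆ G ∧ T.card = d + 1 ∧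
        ∃ x : EuclideanSpace ℝ (Fin d), ∀ A ∈ T, x ∈ A) :
    ∃ P : Finset (EuclideanSpace ℝ (Fin d)), ∀ A ∈ F, ∃ p ∈ P, p ∈ A := by
  exact stmt_8_general F hne hcpt hcvx (by simpa only [finrank_euclideanSpace_fin] using hyp)
end

section
/- Let d ≥ 1 and let F be a family of nonempty compact convex subsets of ℝ^d. Suppose that every infinite subfamily of F contains d+1 members that are all intersected by a single hyperplane. Then there exist finitely many hyperplanes in ℝ^d such that every member of F intersects at least one of them. -/
/-- A hyperplane in `ℝ^d`: an affine subspace which is the level set of a nonzero linear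
functional, i.e. a `(d-1)`-dimensional affine subspace. -/
def IsHyperplane {d : ℕ} (W : Set (EuclideanSpace ℝ (Fin d))) : Prop :=
  ∃ (f : EuclideanSpace ℝ (Fin d) →ₗ[ℝ] ℝ) (c : ℝ), f ≠ 0 ∧ W = {x | f x = c}

/-!
A hyperplane `f x = c` in `E` is the trace on `E × {1}` of a linear hyperplane in `E × ℝ`, so it
suffices to treat linear hyperplanes in a space of dimension `n ≥ 2`.

If no finite set of linear hyperplanes meets all members of the family, some ultrafilter on the
family contains, for each `f ≠ 0`, the set of members on which `f` has no zero; members being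
connected, `f` has a constant sign on each of these. Rescaling points of the members to the unit
sphere and passing to the limit along the ultrafilter yields a flag of subspaces of the dual space
in which each step contains a functional dominating the whole previous step on almost every member.
Adding small multiples of these functionals, one greedily builds an infinite subfamily any `n`
members of which are shattered by functionals. But points chosen in shattered sets are linearly
independent, so no linear hyperplane meets `n` of them.
-/

namespace HyperplaneTransversal

open Filter Topology Set Module

section Extraction

variable {ι : Type*}

lemma exists_infinite_forall_finset_of_eventually_insert [DecidableEq ι] {l : Filter ι} [l.NeBot]
    (hl : l ≤ cofinite) {p : Finset ι → Prop} (hempty : p ∅)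
    (hinsert : ∀ T, p T → ∀ᶠ i in l, p (insert i T)) :
    ∃ G : Set ι, G.Infinite ∧ ∀ T : Finset ι, ↑T ⊆ G → p T := by
  have hchar : Order.IsOfFiniteCharacter {G : Set ι | ∀ T : Finset ι, ↑T ⊆ G → p T} := fun G =>
    ⟨fun hG Y hY _ T hT => hG T (hT.trans hY),
      fun h T hT => h T hT T.finite_toSet T Subset.rfl⟩
  have hmem : (∅ : Set ι) ∈ {G : Set ι | ∀ T : Finset ι, ↑T ⊆ G → p T} := by
    intro T hT
    rwa [Finset.coe_eq_empty.mp (subset_empty_iff.mp hT)]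
  obtain ⟨G, -, hG⟩ := hchar.exists_maximal hmem
  refine ⟨G, fun hfin => ?_, hG.prop⟩
  have hnew : ∀ᶠ i in l, i ∉ G := hl hfin.compl_mem_cofinite
  have hext : ∀ᶠ i in l, ∀ T ∈ hfin.toFinset.powerset, p (insert i T) :=
    (eventually_all_finset _).mpr fun T hT =>
      hinsert T (hG.prop T (by simpa [← Finset.coe_subset] using hT))
  obtain ⟨i, hiG, hi⟩ := (hnew.and hext).exists
  refine hiG (hG.le_of_ge (y := insert i G) (fun T hT => ?_) (subset_insert i G)
    (mem_insert i G))
  by_cases hiT : i ∈ T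
  · rw [← Finset.insert_erase hiT]
    exact hi _ (by simpa [← Finset.coe_subset] using hT)
  · exact hG.prop T ((subset_insert_iff_of_notMem (by simpa using hiT)).mp hT)

lemma exists_ultrafilter_forall_mem {κ : Type*} {s : κ → Set ι}
    (hs : ∀ H : Finset κ, ∃ i, ∀ k ∈ H, i ∈ s k) : ∃ U : Ultrafilter ι, ∀ k, s k ∈ U := by
  classical
  obtain ⟨U, hU⟩ := Ultrafilter.exists_ultrafilter_of_finite_inter_nonempty (range s) (by
    intro T hT
    rw [← image_univ, Finset.subset_set_image_iff] at hT
    obtain ⟨H, -, rfl⟩ := hT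
    simpa [Set.Nonempty] using hs H)
  exact ⟨U, fun k => hU (mem_range_self k)⟩

end Extraction

section Flag

variable {ι V : Type*} [NormedAddCommGroup V] [NormedSpace ℝ V]

lemma exists_norm_eq_one_tendsto_inv_norm_smul [ProperSpace V] (U : Ultrafilter ι) {x : ι → V}
    (hx : ∀ᶠ i in U, x i ≠ 0) :
    ∃ u : V, ‖u‖ = 1 ∧ Tendsto (fun i => ‖x i‖⁻¹ • x i) U (𝓝 u) := by
  have hsphere : ∀ᶠ i in U, ‖x i‖⁻¹ • x i ∈ Metric.sphere (0 : V) 1 := by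
    filter_upwards [hx] with i hi
    rw [mem_sphere_zero_iff_norm]
    exact norm_smul_inv_norm (𝕜 := ℝ) hi
  obtain ⟨u, hu, hlim⟩ := (isCompact_sphere (0 : V) 1).ultrafilter_le_nhds
    (U.map fun i => ‖x i‖⁻¹ • x i) (le_principal_iff.mpr hsphere)
  exact ⟨u, mem_sphere_zero_iff_norm.mp hu, hlim⟩

variable [FiniteDimensional ℝ V]

lemma exists_ne_zero_forall_pos_eventually_pos (U : Ultrafilter ι) {e : ι → StrongDual ℝ V}
    (he : ∀ᶠ i in U, e i ≠ 0) :
    ∃ φ : StrongDual ℝ V, φ ≠ 0 ∧ ∀ v, 0 < φ v → ∀ᶠ i in U, 0 < e i v := by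
  obtain ⟨φ, hφ, hlim⟩ := exists_norm_eq_one_tendsto_inv_norm_smul U he
  refine ⟨φ, norm_ne_zero_iff.mp (by simp [hφ]), fun v hv => ?_⟩
  have hlim_v : Tendsto (fun i => ‖e i‖⁻¹ * e i v) U (𝓝 (φ v)) :=
    ((ContinuousLinearMap.apply ℝ ℝ v).continuous.tendsto φ).comp hlim
  filter_upwards [hlim_v.eventually (lt_mem_nhds hv)] with i hi
  exact pos_of_mul_pos_right hi (by positivity)

lemma exists_submodule_dominated (U : Ultrafilter ι) {e : ι → StrongDual ℝ V}
    (he : ∀ v ≠ 0, ∀ᶠ i in U, e i v ≠ 0) {W : Submodule ℝ V} (hW : W ≠ ⊥) :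
    ∃ W' ≤ W, finrank ℝ W' + 1 = finrank ℝ W ∧
      ∃ g ∈ W, ∀ h ∈ W', ∀ᶠ i in U, 0 < e i (g - h) := by
  obtain ⟨w, hwW, hw⟩ := Submodule.exists_mem_ne_zero_of_ne_bot hW
  have hrestrict : ∀ᶠ i in U, (e i).comp W.subtypeL ≠ 0 := by
    filter_upwards [he w hw] with i hi hzero
    exact hi (DFunLike.congr_fun hzero ⟨w, hwW⟩)
  obtain ⟨φ, hφ, hpos⟩ := exists_ne_zero_forall_pos_eventually_pos U hrestrict
  have hφ' : (φ : W →ₗ[ℝ] ℝ) ≠ 0 := fun h => hφ (ContinuousLinearMap.coe_injective h)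
  obtain ⟨g, hg⟩ := LinearMap.surjective hφ' 1
  refine ⟨(LinearMap.ker (φ : W →ₗ[ℝ] ℝ)).map W.subtype, Submodule.map_subtype_le _ _, ?_,
    g, g.2, ?_⟩
  · rw [Submodule.finrank_map_subtype_eq]
    exact Dual.finrank_ker_add_one_of_ne_zero hφ'
  · rintro _ ⟨h, hh, rfl⟩
    have hgh : φ (g - h) = 1 := by
      rw [map_sub, show φ h = 0 from hh, show φ g = 1 from hg, sub_zero]
    exact hpos (g - h) (hgh ▸ one_pos)

lemma exists_flag_dominated (U : Ultrafilter ι) {e : ι → StrongDual ℝ V}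
    (he : ∀ v ≠ 0, ∀ᶠ i in U, e i v ≠ 0) (n : ℕ) (W : Submodule ℝ V) (hn : n ≤ finrank ℝ W) :
    ∃ F : ℕ → Submodule ℝ V, F n = W ∧ ∀ k < n, F k ≤ F (k + 1) ∧
      ∃ g ∈ F (k + 1), ∀ h ∈ F k, ∀ᶠ i in U, 0 < e i (g - h) := by
  induction n generalizing W with
  | zero => exact ⟨fun _ => W, rfl, by simp⟩
  | succ n ih =>
    have hW : W ≠ ⊥ := by
      rintro rfl
      simp at hn
    obtain ⟨W', hW'W, hrank, hdom⟩ := exists_submodule_dominated U he hW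
    obtain ⟨F, rfl, hF⟩ := ih W' (by omega)
    refine ⟨Function.update F (n + 1) W, Function.update_self .., fun k hk => ?_⟩
    rw [Function.update_of_ne hk.ne]
    obtain rfl | hkn := (Nat.lt_succ_iff.mp hk).eq_or_lt
    · rw [Function.update_self]
      exact ⟨hW'W, hdom⟩
    · rw [Function.update_of_ne (by omega)]
      exact hF k hkn

end Flag

section Shattering

variable {ι E : Type*} [NormedAddCommGroup E] [NormedSpace ℝ E]

lemma isOpen_setOf_mapsTo_clm {F : Type*} [NormedAddCommGroup F] [NormedSpace ℝ F] {K : Set E}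
    {O : Set F} (hK : IsCompact K) (hO : IsOpen O) : IsOpen {f : E →L[ℝ] F | MapsTo f K O} := by
  have hcoe : Continuous fun f : E →L[ℝ] F => (f : C(E, F)) :=
    ContinuousMap.continuous_of_continuous_uncurry _ isBoundedBilinearMap_apply.continuous
  exact (ContinuousMap.isOpen_setOfPred_mapsTo hK hO).preimage hcoe

variable [DecidableEq ι] {A : ι → Set E} {S T : Finset ι} {f : StrongDual ℝ E}

/-- `f` has the sign pattern `S` on the sets `A i`, `i ∈ T`: it is positive on those with `i ∈ S`
and negative on the others. -/
def HasSignPattern (f : StrongDual ℝ E) (A : ι → Set E) (S T : Finset ι) : Prop :=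
  ∀ i ∈ T, MapsTo f (A i) (if i ∈ S then Ioi 0 else Iio 0)

/-- The functionals in `W` shatter the sets `A i`, `i ∈ T`: every sign pattern on them is that of
some element of `W`. -/
def Shatters (W : Submodule ℝ (StrongDual ℝ E)) (A : ι → Set E) (T : Finset ι) : Prop :=
  ∀ S ⊆ T, ∃ f ∈ W, HasSignPattern f A S T

lemma HasSignPattern.eventually_nhds (hf : HasSignPattern f A S T)
    (hA : ∀ i ∈ T, IsCompact (A i)) : ∀ᶠ f' in 𝓝 f, HasSignPattern f' A S T := by
  refine (eventually_all_finset T).mpr fun i hi =>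
    (isOpen_setOf_mapsTo_clm (hA i hi) ?_).mem_nhds (hf i hi)
  split_ifs
  exacts [isOpen_Ioi, isOpen_Iio]

lemma HasSignPattern.exists_pos_add_smul_sub_smul (hf : HasSignPattern f A S T)
    (hA : ∀ i ∈ T, IsCompact (A i)) (g : StrongDual ℝ E) :
    ∃ ε : ℝ, 0 < ε ∧ HasSignPattern (f + ε • g) A S T ∧ HasSignPattern (f - ε • g) A S T := by
  have hadd : Tendsto (fun ε : ℝ => f + ε • g) (𝓝[>] 0) (𝓝 f) :=
    Continuous.tendsto' (by fun_prop) 0 f (by simp) |>.mono_left nhdsWithin_le_nhds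
  have hsub : Tendsto (fun ε : ℝ => f - ε • g) (𝓝[>] 0) (𝓝 f) :=
    Continuous.tendsto' (by fun_prop) 0 f (by simp) |>.mono_left nhdsWithin_le_nhds
  have hnear := hf.eventually_nhds hA
  exact (eventually_mem_nhdsWithin.and
    ((hadd.eventually hnear).and (hsub.eventually hnear))).exists

-- If `g` dominates `±ε⁻¹ • f` on `A j`, then `f ± ε • g` has the sign `±1` there.
lemma HasSignPattern.eventually_exists_of_dominated (hf : HasSignPattern f A S T)
    (hA : ∀ i ∈ T, IsCompact (A i)) {l : Filter ι} {W W' : Submodule ℝ (StrongDual ℝ E)}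
    (hWW' : W ≤ W') (hfW : f ∈ W) {g : StrongDual ℝ E} (hg : g ∈ W')
    (hdom : ∀ h ∈ W, ∀ᶠ i in l, MapsTo (g - h) (A i) (Ioi 0)) :
    ∀ᶠ j in l, (∃ f' ∈ W', HasSignPattern f' A S T ∧ MapsTo f' (A j) (Ioi 0)) ∧
      ∃ f' ∈ W', HasSignPattern f' A S T ∧ MapsTo f' (A j) (Iio 0) := by
  obtain ⟨ε, hε, hadd, hsub⟩ := hf.exists_pos_add_smul_sub_smul hA g
  have hεg : ε • g ∈ W' := W'.smul_mem ε hg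
  filter_upwards [hdom _ (W.smul_mem (-ε⁻¹) hfW), hdom _ (W.smul_mem ε⁻¹ hfW)] with j hpos hneg
  refine ⟨⟨f + ε • g, W'.add_mem (hWW' hfW) hεg, hadd, fun x hx => ?_⟩,
    ⟨f - ε • g, W'.sub_mem (hWW' hfW) hεg, hsub, fun x hx => ?_⟩⟩
  · have hgt : 0 < g x - -ε⁻¹ * f x := hpos hx
    calc 0 < ε * (g x - -ε⁻¹ * f x) := mul_pos hε hgt
      _ = (f + ε • g) x := by
        simp only [add_apply, smul_apply, smul_eq_mul]
        field_simp
        ring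
  · have hgt : 0 < g x - ε⁻¹ * f x := hneg hx
    calc (f - ε • g) x = -(ε * (g x - ε⁻¹ * f x)) := by
          simp only [sub_apply, smul_apply, smul_eq_mul]
          field_simp
          ring
      _ < 0 := neg_neg_of_pos (mul_pos hε hgt)

lemma shatters_empty (W : Submodule ℝ (StrongDual ℝ E)) (A : ι → Set E) : Shatters W A ∅ :=
  fun _ _ => ⟨0, W.zero_mem, by simp [HasSignPattern]⟩

lemma Shatters.eventually_insert {l : Filter ι} (hl : l ≤ cofinite)
    {W W' : Submodule ℝ (StrongDual ℝ E)} (hT : Shatters W A T) (hA : ∀ i ∈ T, IsCompact (A i))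
    (hWW' : W ≤ W') {g : StrongDual ℝ E} (hg : g ∈ W')
    (hdom : ∀ h ∈ W, ∀ᶠ i in l, MapsTo (g - h) (A i) (Ioi 0)) :
    ∀ᶠ j in l, Shatters W' A (insert j T) := by
  have hextend : ∀ᶠ j in l, ∀ S ∈ T.powerset,
      (∃ f ∈ W', HasSignPattern f A S T ∧ MapsTo f (A j) (Ioi 0)) ∧
        ∃ f ∈ W', HasSignPattern f A S T ∧ MapsTo f (A j) (Iio 0) := by
    refine (eventually_all_finset _).mpr fun S hS => ?_
    obtain ⟨f, hfW, hf⟩ := hT S (Finset.mem_powerset.mp hS)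
    exact hf.eventually_exists_of_dominated hA hWW' hfW hg hdom
  have hnew : ∀ᶠ j in l, j ∉ T := hl T.finite_toSet.compl_mem_cofinite
  filter_upwards [hextend, hnew] with j hj hjT S hS
  obtain ⟨f, hfW, hfT, hfj⟩ : ∃ f ∈ W', HasSignPattern f A (S.erase j) T ∧
      MapsTo f (A j) (if j ∈ S then Ioi 0 else Iio 0) := by
    have hSj := hj (S.erase j) (Finset.mem_powerset.mpr (Finset.subset_insert_iff.mp hS))
    split_ifs
    exacts [hSj.1, hSj.2]
  refine ⟨f, hfW, (Finset.forall_mem_insert ..).mpr ⟨hfj, fun i hi => ?_⟩⟩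
  simpa [ne_of_mem_of_not_mem hi hjT] using hfT i hi

lemma Shatters.linearIndepOn {W : Submodule ℝ (StrongDual ℝ E)} (hT : Shatters W A T) {a : ι → E}
    (ha : ∀ i ∈ T, a i ∈ A i) : LinearIndepOn ℝ a (T : Set ι) := by
  refine linearIndepOn_finset_iff.mpr fun c hc i hi => ?_
  obtain ⟨f, -, hf⟩ := hT (T.filter fun i => 0 < c i) (Finset.filter_subset _ _)
  have hterm : ∀ i ∈ T, 0 ≤ c i * f (a i) ∧ (c i * f (a i) = 0 → c i = 0) := by
    intro i hi
    have hfi := hf i hi (ha i hi)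
    by_cases hci : 0 < c i
    · have hpos : 0 < f (a i) := by simpa [hi, hci] using hfi
      exact ⟨by positivity, fun h => by simpa [hpos.ne'] using h⟩
    · have hneg : f (a i) < 0 := by simpa [hci] using hfi
      exact ⟨mul_nonneg_of_nonpos_of_nonpos (not_lt.mp hci) hneg.le,
        fun h => by simpa [hneg.ne] using h⟩
  have hsum : ∑ i ∈ T, c i * f (a i) = 0 := by simpa using congrArg f hc
  exact (hterm i hi).2 ((Finset.sum_eq_zero_iff_of_nonneg fun i hi => (hterm i hi).1).mp hsum i hi)

lemma Shatters.card_lt_finrank [FiniteDimensional ℝ E] {W : Submodule ℝ (StrongDual ℝ E)}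
    (hT : Shatters W A T) (hf : f ≠ 0) (hmeet : ∀ i ∈ T, ∃ x ∈ A i, f x = 0) :
    T.card < finrank ℝ E := by
  choose! a haA haf using hmeet
  have hindep : LinearIndependent ℝ fun i : T =>
      (⟨a i, haf i i.2⟩ : LinearMap.ker (f : E →ₗ[ℝ] ℝ)) :=
    .of_comp (Submodule.subtype _) (hT.linearIndepOn haA)
  have hf' : (f : E →ₗ[ℝ] ℝ) ≠ 0 := fun h => hf (ContinuousLinearMap.coe_injective h)
  have hker := Dual.finrank_ker_add_one_of_ne_zero hf'
  have hcard := hindep.fintype_card_le_finrank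
  rw [Fintype.card_coe] at hcard
  omega

end Shattering

section LinearHyperplanes

variable {ι E : Type*} [NormedAddCommGroup E] [NormedSpace ℝ E] {A : ι → Set E}

lemma mapsTo_Ioi_of_forall_ne {X : Type*} [TopologicalSpace X] {K : Set X} (hK : IsPreconnected K)
    {f : X → ℝ} (hf : ContinuousOn f K) (hne : ∀ x ∈ K, f x ≠ 0) {x₀ : X} (hx₀ : x₀ ∈ K)
    (hpos : 0 < f x₀) : MapsTo f K (Ioi 0) := by
  intro x hx
  by_contra hnonpos
  obtain ⟨z, hz, hz0⟩ := hK.intermediate_value hx hx₀ hf ⟨not_lt.mp hnonpos, hpos.le⟩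
  exact hne z hz hz0

lemma eventually_mapsTo_Ioi_of_eventually_pos {l : Filter ι} [l.NeBot]
    (hconn : ∀ i, IsPreconnected (A i))
    (hl : ∀ f : StrongDual ℝ E, f ≠ 0 → ∀ᶠ i in l, ∀ x ∈ A i, f x ≠ 0)
    {x : ι → E} (hx : ∀ i, x i ∈ A i) {f : StrongDual ℝ E} (hpos : ∀ᶠ i in l, 0 < f (x i)) :
    ∀ᶠ i in l, MapsTo f (A i) (Ioi 0) := by
  have hf : f ≠ 0 := by
    rintro rfl
    simpa using hpos.exists
  filter_upwards [hl f hf, hpos] with i hne hi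
  exact mapsTo_Ioi_of_forall_ne (hconn i) f.continuous.continuousOn hne (hx i) hi

lemma le_cofinite_of_forall_eventually_ne_zero [FiniteDimensional ℝ E] (hE : 1 < finrank ℝ E)
    (hA : ∀ i, (A i).Nonempty) {l : Filter ι}
    (hl : ∀ f : StrongDual ℝ E, f ≠ 0 → ∀ᶠ i in l, ∀ x ∈ A i, f x ≠ 0) : l ≤ cofinite := by
  refine le_cofinite_iff_eventually_ne.mpr fun j => ?_
  obtain ⟨x, hx⟩ := hA j
  have hspan : Submodule.span ℝ {x} < ⊤ := by
    refine lt_top_iff_ne_top.mpr fun htop => ?_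
    have hle := finrank_span_le_card (R := ℝ) {x}
    rw [htop, finrank_top, toFinset_singleton, Finset.card_singleton] at hle
    exact hle.not_gt hE
  obtain ⟨f, hf, hker⟩ := Submodule.exists_le_ker_of_lt_top _ hspan
  have hfx : f x = 0 := hker (Submodule.mem_span_singleton_self x)
  filter_upwards [hl (LinearMap.toContinuousLinearMap f) (by simpa using hf)] with i hi hij
  exact hi x (hij ▸ hx) hfx

lemma exists_infinite_forall_shatters [FiniteDimensional ℝ E] (hE : 1 < finrank ℝ E)
    (hconn : ∀ i, IsConnected (A i)) (hcpt : ∀ i, IsCompact (A i)) [DecidableEq ι]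
    (U : Ultrafilter ι)
    (hU : ∀ f : StrongDual ℝ E, f ≠ 0 → ∀ᶠ i in U, ∀ x ∈ A i, f x ≠ 0) :
    ∃ G : Set ι, G.Infinite ∧ ∀ T : Finset ι, ↑T ⊆ G → T.card = finrank ℝ E → Shatters ⊤ A T := by
  choose x hx using fun i => (hconn i).nonempty
  have hdual : finrank ℝ (⊤ : Submodule ℝ (StrongDual ℝ E)) = finrank ℝ E := by
    rw [finrank_top, ← LinearMap.toContinuousLinearMap.finrank_eq, Subspace.dual_finrank_eq]
  obtain ⟨W, hWtop, hW⟩ := exists_flag_dominated U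
    (e := fun i => ContinuousLinearMap.apply ℝ ℝ (x i))
    (fun f hf => (hU f hf).mono fun i hi => hi (x i) (hx i)) (finrank ℝ E) ⊤ hdual.ge
  have hcof := le_cofinite_of_forall_eventually_ne_zero hE (fun i => (hconn i).nonempty) hU
  obtain ⟨G, hG, hshatter⟩ := exists_infinite_forall_finset_of_eventually_insert hcof
    (p := fun T => T.card ≤ finrank ℝ E → Shatters (W T.card) A T)
    (fun _ => shatters_empty _ A) fun T hT => by
      have hnew : ∀ᶠ i in U, i ∉ T := hcof T.finite_toSet.compl_mem_cofinite
      by_cases hcard : T.card < finrank ℝ E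
      · obtain ⟨hWle, g, hg, hdom⟩ := hW T.card hcard
        filter_upwards [hnew, (hT hcard.le).eventually_insert hcof (fun i _ => hcpt i) hWle hg
          fun h hh => eventually_mapsTo_Ioi_of_eventually_pos
            (fun i => (hconn i).isPreconnected) hU hx (hdom h hh)] with i hi hins _
        rwa [Finset.card_insert_of_notMem hi]
      · filter_upwards [hnew] with i hi hle
        rw [Finset.card_insert_of_notMem hi] at hle
        omega
  exact ⟨G, hG, fun T hTG hcard => by simpa [hcard, hWtop] using hshatter T hTG hcard.le⟩

theorem exists_finset_forall_exists_eq_zero [FiniteDimensional ℝ E] (hE : 1 < finrank ℝ E)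
    (hconn : ∀ i, IsConnected (A i)) (hcpt : ∀ i, IsCompact (A i))
    (hyp : ∀ G : Set ι, G.Infinite → ∃ T : Finset ι, ↑T ⊆ G ∧ T.card = finrank ℝ E ∧
      ∃ f : StrongDual ℝ E, f ≠ 0 ∧ ∀ i ∈ T, ∃ x ∈ A i, f x = 0) :
    ∃ H : Finset (StrongDual ℝ E), 0 ∉ H ∧ ∀ i, ∃ f ∈ H, ∃ x ∈ A i, f x = 0 := by
  classical
  by_contra! hbad
  obtain ⟨U, hU⟩ := exists_ultrafilter_forall_mem (κ := {f : StrongDual ℝ E // f ≠ 0})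
    (s := fun f => {i | ∀ x ∈ A i, f.1 x ≠ 0}) fun H => by
      simpa using hbad (H.map (Function.Embedding.subtype _)) (by simp)
  obtain ⟨G, hG, hshatter⟩ :=
    exists_infinite_forall_shatters hE hconn hcpt U fun f hf => hU ⟨f, hf⟩
  obtain ⟨T, hTG, hcard, f, hf, hmeet⟩ := hyp G hG
  exact ((hshatter T hTG hcard).card_lt_finrank hf hmeet).ne hcard

end LinearHyperplanes

section AffineHyperplanes

/-- A hyperplane in a real vector space, encoded as in `IsHyperplane`: a level set of a nonzero
linear functional. -/
def IsAffineHyperplane {E : Type*} [AddCommGroup E] [Module ℝ E] (W : Set E) : Prop :=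
  ∃ (f : E →ₗ[ℝ] ℝ) (c : ℝ), f ≠ 0 ∧ W = {x | f x = c}

variable {ι E : Type*} [NormedAddCommGroup E] [NormedSpace ℝ E]

lemma IsAffineHyperplane.exists_strongDual_prod [FiniteDimensional ℝ E] {W : Set E}
    (hW : IsAffineHyperplane W) :
    ∃ φ : StrongDual ℝ (E × ℝ), φ ≠ 0 ∧ ∀ x ∈ W, φ (x, 1) = 0 := by
  obtain ⟨f, c, hf, rfl⟩ := hW
  refine ⟨f.toContinuousLinearMap.coprod (-c • .id ℝ ℝ), fun h => hf ?_, fun x hx => ?_⟩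
  · ext x
    simpa using DFunLike.congr_fun h (x, 0)
  · simp [show f x = c from hx]

lemma isAffineHyperplane_of_strongDual_prod {φ : StrongDual ℝ (E × ℝ)} (hφ : φ ≠ 0) {x₀ : E}
    (hx₀ : φ (x₀, 1) = 0) : IsAffineHyperplane {x | φ (x, 1) = 0} := by
  have hsplit : ∀ x t, φ (x, t) = φ (x, 0) + t * φ (0, 1) := by
    intro x t
    rw [← smul_eq_mul, ← map_smul, ← map_add]
    simp
  refine ⟨φ.comp (.inl ℝ E ℝ), -φ (0, 1), fun h => hφ ?_, ?_⟩
  · have hinl : ∀ x, φ (x, 0) = 0 := fun x => DFunLike.congr_fun h x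
    have hinr : φ (0, 1) = 0 := by simpa [hsplit x₀ 1, hinl] using hx₀
    exact ContinuousLinearMap.ext fun ⟨x, t⟩ => by simp [hsplit x t, hinl, hinr]
  · ext x
    simp [hsplit x 1, add_eq_zero_iff_eq_neg]

theorem exists_finite_isAffineHyperplane_forall_inter_nonempty [FiniteDimensional ℝ E]
    [Nontrivial E] {A : ι → Set E} (hconn : ∀ i, IsConnected (A i)) (hcpt : ∀ i, IsCompact (A i))
    (hyp : ∀ G : Set ι, G.Infinite → ∃ T : Finset ι, ↑T ⊆ G ∧ T.card = finrank ℝ E + 1 ∧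
      ∃ W, IsAffineHyperplane W ∧ ∀ i ∈ T, (A i ∩ W).Nonempty) :
    ∃ H : Set (Set E), H.Finite ∧ (∀ W ∈ H, IsAffineHyperplane W) ∧
      ∀ i, ∃ W ∈ H, (A i ∩ W).Nonempty := by
  have hlift : Continuous fun x : E => (x, (1 : ℝ)) := by fun_prop
  have hrank : finrank ℝ (E × ℝ) = finrank ℝ E + 1 := by simp
  obtain ⟨H, h0, hH⟩ := exists_finset_forall_exists_eq_zero
    (A := fun i => (fun x => (x, (1 : ℝ))) '' A i)
    (hrank ▸ Nat.lt_add_of_pos_left finrank_pos)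
    (fun i => (hconn i).image _ hlift.continuousOn) (fun i => (hcpt i).image hlift)
    fun G hG => by
      obtain ⟨T, hTG, hcard, W, hW, hmeet⟩ := hyp G hG
      obtain ⟨φ, hφ, hφW⟩ := hW.exists_strongDual_prod
      refine ⟨T, hTG, hcard.trans hrank.symm, φ, hφ, fun i hi => ?_⟩
      obtain ⟨x, hxA, hxW⟩ := hmeet i hi
      exact ⟨_, mem_image_of_mem _ hxA, hφW x hxW⟩
  refine ⟨(fun φ : StrongDual ℝ (E × ℝ) => {x | φ (x, 1) = 0}) '' H ∩ {W | IsAffineHyperplane W},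
    (H.finite_toSet.image _).inter_of_left _, fun W hW => hW.2, fun i => ?_⟩
  obtain ⟨φ, hφ, _, ⟨x, hx, rfl⟩, hφx⟩ := hH i
  have hφ0 : φ ≠ 0 := ne_of_mem_of_not_mem hφ h0
  exact ⟨_, ⟨mem_image_of_mem _ hφ, isAffineHyperplane_of_strongDual_prod hφ0 hφx⟩, x, hx, hφx⟩

end AffineHyperplanes

end HyperplaneTransversal

open HyperplaneTransversal in
theorem stmt_9_general {E : Type*} [NormedAddCommGroup E] [NormedSpace ℝ E] [FiniteDimensional ℝ E]
    [Nontrivial E] (F : Set (Set E)) (hconn : ∀ A ∈ F, IsConnected A)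
    (hcpt : ∀ A ∈ F, IsCompact A)
    (hyp : ∀ G ⊆ F, G.Infinite →
      ∃ T : Finset (Set E), ↑T ⊆ G ∧ T.card = Module.finrank ℝ E + 1 ∧
        ∃ W : Set E, IsAffineHyperplane W ∧ ∀ A ∈ T, (A ∩ W).Nonempty) :
    ∃ (n : ℕ) (W : Fin n → Set E),
      (∀ i, IsAffineHyperplane (W i)) ∧ ∀ A ∈ F, ∃ i, (A ∩ W i).Nonempty := by
  classical
  obtain ⟨H, hfin, hH, hmeet⟩ := exists_finite_isAffineHyperplane_forall_inter_nonempty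
    (A := ((↑) : F → Set E)) (fun A => hconn A A.2) (fun A => hcpt A A.2) fun G hG => by
      obtain ⟨T, hTG, hcard, W, hW, hTW⟩ :=
        hyp _ (Subtype.coe_image_subset F G) (hG.image Subtype.val_injective.injOn)
      obtain ⟨T', hT'G, rfl⟩ := Finset.subset_set_image_iff.mp hTG
      rw [Finset.card_image_of_injective _ Subtype.val_injective] at hcard
      exact ⟨T', hT'G, hcard, W, hW, fun A hA => hTW A (Finset.mem_image_of_mem _ hA)⟩
  obtain ⟨n, W, rfl⟩ := hfin.fin_embedding
  exact ⟨n, W, Set.forall_mem_range.mp hH, fun A hA => by simpa using hmeet ⟨A, hA⟩⟩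

/-- **`(ℵ₀, d+1)`-theorem for hyperplane transversals of convex sets.**
If `F` is a family of nonempty compact convex subsets of `ℝ^d` such that every infinite
subfamily contains `d+1` members all intersected by a single hyperplane, then all members
of `F` can be hit by finitely many hyperplanes. -/
theorem stmt_9 (d : ℕ) (hd : 1 ≤ d)
    (F : Set (Set (EuclideanSpace ℝ (Fin d))))
    (hne : ∀ A ∈ F, A.Nonempty)
    (hcpt : ∀ A ∈ F, IsCompact A)
    (hcvx : ∀ A ∈ F, Convex ℝ A)
    (hyp : ∀ G ⊆ F, G.Infinite →
      ∃ T : Finset (Set (EuclideanSpace ℝ (Fin d))), ↑T ⊆ G ∧ T.card = d + 1 ∧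
        ∃ W : Set (EuclideanSpace ℝ (Fin d)), IsHyperplane W ∧
          ∀ A ∈ T, (A ∩ W).Nonempty) :
    ∃ (n : ℕ) (W : Fin n → Set (EuclideanSpace ℝ (Fin d))),
      (∀ i, IsHyperplane (W i)) ∧ ∀ A ∈ F, ∃ i, (A ∩ W i).Nonempty := by
  have : Nonempty (Fin d) := Fin.pos_iff_nonempty.mp hd
  exact stmt_9_general F (fun A hA => ⟨hne A hA, (hcvx A hA).isPreconnected⟩) hcpt (by simpa)
end

section
/- Let d ≥ 1 and let F be a family of compact convex subsets of ℝ^d, each containing at least one point with all coordinates integers (a point of ℤ^d). Suppose that every infinite subfamily of F contains d+1 members whose intersection contains a point of ℤ^d. Then there exists a finite set P ⊆ ℤ^d such that every member of F contains at least one point of P. -/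
/-- A point of `ℝ^d` all of whose coordinates are integers (a point of `ℤ^d`). -/
def IsLatticePoint {d : ℕ} (x : EuclideanSpace ℝ (Fin d)) : Prop :=
  ∀ i : Fin d, ∃ m : ℤ, x i = (m : ℝ)

/-!
Among the subfamilies whose members pairwise have no lattice point in common, choose a maximal one.
The hypothesis forces it to be finite, and each of its members, being bounded, contains only
finitely many lattice points. By maximality, every member of the family shares a lattice point with
some member of this subfamily, so the lattice points of the subfamily pierce everything.
-/

section PairwiseDisjoint

variable {ι α : Type*}

theorem exists_maximal_subset_pairwiseDisjoint [PartialOrder α] [OrderBot α]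
    (s : Set ι) (f : ι → α) :
    ∃ t, Maximal (fun t : Set ι ↦ t ⊆ s ∧ t.PairwiseDisjoint f) t :=
  zorn_subset {t | t ⊆ s ∧ t.PairwiseDisjoint f} fun c hc hchain ↦
    ⟨⋃₀ c, ⟨Set.sUnion_subset fun _ hu ↦ (hc hu).1,
      (Set.pairwiseDisjoint_sUnion hchain.directedOn).2 fun _ hu ↦ (hc hu).2⟩,
      fun _ hu ↦ Set.subset_sUnion_of_mem hu⟩

theorem exists_not_disjoint_of_maximal_pairwiseDisjoint [PartialOrder α] [OrderBot α]
    {s t : Set ι} {f : ι → α} (ht : Maximal (fun t ↦ t ⊆ s ∧ t.PairwiseDisjoint f) t)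
    {i : ι} (hi : i ∈ s) (hfi : f i ≠ ⊥) : ∃ j ∈ t, ¬Disjoint (f i) (f j) := by
  by_contra! hdisj
  have hit : i ∈ t := ht.mem_of_prop_insert
    ⟨Set.insert_subset hi ht.prop.1, ht.prop.2.insert fun j hj _ ↦ hdisj j hj⟩
  exact hfi (disjoint_self.1 (hdisj i hit))

theorem exists_finite_piercing_of_pairwiseDisjoint_finite {s : Set ι} {f : ι → Set α}
    (hfin : ∀ i ∈ s, (f i).Finite) (hne : ∀ i ∈ s, (f i).Nonempty)
    (hdisj : ∀ t ⊆ s, t.PairwiseDisjoint f → t.Finite) :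
    ∃ P : Set α, P.Finite ∧ P ⊆ ⋃ i ∈ s, f i ∧ ∀ i ∈ s, (f i ∩ P).Nonempty := by
  obtain ⟨t, ht⟩ := exists_maximal_subset_pairwiseDisjoint s f
  obtain ⟨hts, htdisj⟩ := ht.prop
  refine ⟨⋃ j ∈ t, f j, (hdisj t hts htdisj).biUnion fun j hj ↦ hfin j (hts hj),
    Set.biUnion_mono hts fun _ _ ↦ subset_rfl, fun i hi ↦ ?_⟩
  obtain ⟨j, hj, hij⟩ := exists_not_disjoint_of_maximal_pairwiseDisjoint ht hi (hne i hi).ne_empty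
  exact (Set.not_disjoint_iff_nonempty_inter.1 hij).mono
    (Set.inter_subset_inter_right _ (Set.subset_biUnion_of_mem hj))

end PairwiseDisjoint

section LatticePoints

variable {d : ℕ}

theorem setOf_isLatticePoint_eq_span :
    {x : EuclideanSpace ℝ (Fin d) | IsLatticePoint x} =
      Submodule.span ℤ (Set.range (EuclideanSpace.basisFun (Fin d) ℝ).toBasis) := by
  ext x
  simp only [SetLike.mem_coe, Module.Basis.mem_span_iff_repr_mem]
  simp [IsLatticePoint, eq_comm]

theorem finite_inter_setOf_isLatticePoint {A : Set (EuclideanSpace ℝ (Fin d))}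
    (hA : Bornology.IsBounded A) : (A ∩ {x | IsLatticePoint x}).Finite := by
  rw [setOf_isLatticePoint_eq_span]
  exact ZSpan.setFinite_inter _ hA

end LatticePoints

theorem stmt_10_general {α : Type*} {L : Set α} {F : Set (Set α)}
    (hfin : ∀ A ∈ F, (A ∩ L).Finite) (hne : ∀ A ∈ F, (A ∩ L).Nonempty)
    (hyp : ∀ G ⊆ F, G.Infinite →
      ∃ T : Finset (Set α), ↑T ⊆ G ∧ 1 < T.card ∧ ∃ x ∈ L, ∀ A ∈ T, x ∈ A) :
    ∃ P : Finset α, (∀ p ∈ P, p ∈ L) ∧ ∀ A ∈ F, ∃ p ∈ P, p ∈ A := by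
  have hdisj : ∀ G ⊆ F, G.PairwiseDisjoint (· ∩ L) → G.Finite := by
    intro G hGF hGdisj
    by_contra hinf
    obtain ⟨T, hTG, hT, x, hxL, hxT⟩ := hyp G hGF hinf
    obtain ⟨A, hA, B, hB, hAB⟩ := Finset.one_lt_card.1 hT
    exact Set.disjoint_left.1 (hGdisj (hTG hA) (hTG hB) hAB) ⟨hxT A hA, hxL⟩ ⟨hxT B hB, hxL⟩
  obtain ⟨P, hPfin, hPsub, hP⟩ :=
    exists_finite_piercing_of_pairwiseDisjoint_finite hfin hne hdisj
  have hPL : P ⊆ L := hPsub.trans (Set.iUnion₂_subset fun _ _ ↦ Set.inter_subset_right)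
  lift P to Finset α using hPfin
  exact ⟨P, hPL, fun A hA ↦ (hP A hA).imp fun p hp ↦ ⟨hp.2, hp.1.1⟩⟩

/-- **`(ℵ₀, d+1)`-theorem for piercing by lattice points.**
If `F` is a family of compact convex subsets of `ℝ^d`, each containing a lattice point,
such that every infinite subfamily contains `d+1` members whose intersection contains a
lattice point, then all members of `F` can be pierced by finitely many lattice points. -/
theorem stmt_10 (d : ℕ) (hd : 1 ≤ d)
    (F : Set (Set (EuclideanSpace ℝ (Fin d))))
    (hcpt : ∀ A ∈ F, IsCompact A)
    (hcvx : ∀ A ∈ F, Convex ℝ A)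
    (hlat : ∀ A ∈ F, ∃ x ∈ A, IsLatticePoint x)
    (hyp : ∀ G ⊆ F, G.Infinite →
      ∃ T : Finset (Set (EuclideanSpace ℝ (Fin d))), ↑T ⊆ G ∧ T.card = d + 1 ∧
        ∃ x : EuclideanSpace ℝ (Fin d), IsLatticePoint x ∧ ∀ A ∈ T, x ∈ A) :
    ∃ P : Finset (EuclideanSpace ℝ (Fin d)),
      (∀ p ∈ P, IsLatticePoint p) ∧ ∀ A ∈ F, ∃ p ∈ P, p ∈ A :=
  stmt_10_general (fun A hA ↦ finite_inter_setOf_isLatticePoint (hcpt A hA).isBounded) hlat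
    fun G hGF hG ↦ (hyp G hGF hG).imp fun _ ⟨hTG, hT, hx⟩ ↦ ⟨hTG, hT ▸ Nat.lt_succ_of_le hd, hx⟩
end

section
/- Let d ≥ 1 and let F be a family of axis-parallel boxes in ℝ^d. Suppose that every infinite subfamily of F contains two boxes that are both intersected by a single axis-parallel hyperplane. Then there exist finitely many axis-parallel hyperplanes in ℝ^d such that every member of F intersects at least one of them. -/
/-- An axis-parallel box in `ℝ^d`: a product of `d` nonempty compact intervals. -/
def IsBox {d : ℕ} (B : Set (EuclideanSpace ℝ (Fin d))) : Prop :=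
  ∃ a b : Fin d → ℝ, (∀ i, a i ≤ b i) ∧ B = {x | ∀ i, x i ∈ Set.Icc (a i) (b i)}

/-- An axis-parallel hyperplane in `ℝ^d`: the set of points with a fixed value in one
coordinate. -/
def IsAxisParallelHyperplane {d : ℕ} (W : Set (EuclideanSpace ℝ (Fin d))) : Prop :=
  ∃ (j : Fin d) (c : ℝ), W = {x | x j = c}

/-!
If no finite set of hyperplanes hits every box, then some ultrafilter `U` on the family has the
property that each hyperplane misses `U`-almost every box. In one coordinate, let `L` be the set of
points lying to the left of almost every interval. An interval starting in `L` and ending outside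
`L` contains `sSup L`, a point that almost every interval misses. So almost every interval either
ends in `L`, and then lies to the left of almost every other one, or starts outside `L`, and then
lies to the right of almost every other one. As there are finitely many coordinates, almost every
box is separated in all of them from almost every other box, and a greedy choice gives an infinite
subfamily violating the hypothesis.
-/

open Filter Set

theorem exists_ultrafilter_forall_eventually_notMem_s11 {α β : Type*} {s : α → Set β}
    (h : ∀ T : Set β, T.Finite → ∃ x, ∀ p ∈ T, p ∉ s x) :
    ∃ U : Ultrafilter α, ∀ p, ∀ᶠ x in U, p ∉ s x := by
  have hne : (⨅ p, 𝓟 {x | p ∉ s x}).NeBot := by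
    refine (hasBasis_iInf_principal_finite _).neBot_iff.2 fun {T} hT => ?_
    obtain ⟨x, hx⟩ := h T hT
    exact ⟨x, mem_iInter₂.2 hx⟩
  exact ⟨Ultrafilter.of _, fun p =>
    (Ultrafilter.of_le _).trans (iInf_le _ p) (mem_principal_self _)⟩

theorem exists_seq_pairwise_of_eventually_eventually {α : Type*} {l : Filter α} [l.NeBot]
    {r : α → α → Prop} [Std.Symm r] (h : ∀ᶠ x in l, ∀ᶠ y in l, r x y) :
    ∃ f : ℕ → α, Pairwise fun m n => r (f m) (f n) := by
  obtain ⟨f, -, hf⟩ := exists_seq_of_forall_finset_exists' (fun x => ∀ᶠ y in l, r x y) r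
    fun t ht => (h.and ((eventually_all_finset t).2 ht)).exists
  exact ⟨f, hf⟩

theorem eventually_eventually_disjoint_Icc {α X : Type*} [ConditionallyCompleteLinearOrder X]
    {U : Ultrafilter α} {a b : α → X} (h : ∀ c, ∀ᶠ x in U, c ∉ Icc (a x) (b x)) :
    ∀ᶠ x in U, ∀ᶠ y in U, Disjoint (Icc (a x) (b x)) (Icc (a y) (b y)) := by
  let L : Set X := {c | ∀ᶠ x in U, c < a x}
  have lower_L : IsLowerSet L := fun _ _ hdc hc => hc.mono fun _ => hdc.trans_lt
  have ends_in_or_starts_outside : ∀ᶠ x in U, b x ∈ L ∨ a x ∉ L := by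
    filter_upwards [h (sSup L)] with x hx
    by_contra! ⟨hb, ha⟩
    have hub : b x ∈ upperBounds L := fun c hc =>
      le_of_not_gt fun hbc => hb (lower_L hbc.le hc)
    exact hx ⟨le_csSup ⟨b x, hub⟩ ha, csSup_le ⟨a x, ha⟩ hub⟩
  filter_upwards [ends_in_or_starts_outside] with x hx
  rcases hx with hb | ha
  · filter_upwards [hb] with y hxy
    exact disjoint_left.2 fun c hcx hcy => (hcx.2.trans_lt hxy).not_ge hcy.1
  · filter_upwards [Ultrafilter.eventually_not.2 ha, h (a x)] with y hay hy
    have hyx : b y < a x := lt_of_not_ge fun hby => hy ⟨not_lt.1 hay, hby⟩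
    exact disjoint_left.2 fun c hcx hcy => (hcy.2.trans_lt hyx).not_ge hcx.1

section Coordinates

variable {ι : Type*} {X : ι → Type*} [Finite ι] [∀ i, ConditionallyCompleteLinearOrder (X i)]

theorem exists_seq_pairwise_forall_disjoint_of_eq_Icc {α : Type*} {s : α → ∀ i, Set (X i)}
    (hs : ∀ x i, ∃ a b, s x i = Icc a b)
    (h : ∀ T : Set (Σ i, X i), T.Finite → ∃ x, ∀ p ∈ T, p.2 ∉ s x p.1) :
    ∃ f : ℕ → α, Pairwise fun m n => ∀ i, Disjoint (s (f m) i) (s (f n) i) := by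
  choose a b hab using hs
  obtain ⟨U, hU⟩ :=
    exists_ultrafilter_forall_eventually_notMem_s11 (s := fun x => {p : Σ i, X i | p.2 ∈ s x p.1}) h
  have disjoint_coord (i : ι) : ∀ᶠ x in U, ∀ᶠ y in U, Disjoint (s x i) (s y i) := by
    simpa only [hab] using eventually_eventually_disjoint_Icc (a := (a · i)) (b := (b · i))
      fun c => by simpa only [hab, mem_ofPred_eq] using hU ⟨i, c⟩
  let r (x y : α) : Prop := ∀ i, Disjoint (s x i) (s y i)
  have : Std.Symm r := ⟨fun _ _ hxy i => (hxy i).symm⟩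
  refine exists_seq_pairwise_of_eventually_eventually (l := (U : Filter α)) (r := r) ?_
  filter_upwards [eventually_all.2 disjoint_coord] with x hx using eventually_all.2 hx

/-- The role of the axis-parallel hyperplanes is played by the fibres of arbitrary maps `π i`, that
of the boxes by sets whose images under all `π i` are nonempty closed intervals. -/
theorem stmt_11_general {E : Type*} [Nonempty ι] (π : ∀ i, E → X i) (F : Set (Set E))
    (hF : ∀ B ∈ F, ∀ i, ∃ a b, a ≤ b ∧ π i '' B = Icc a b)
    (hyp : ∀ G ⊆ F, G.Infinite →
      ∃ B₁ ∈ G, ∃ B₂ ∈ G, B₁ ≠ B₂ ∧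
        ∃ W : Set E, (∃ i c, W = {x | π i x = c}) ∧ (B₁ ∩ W).Nonempty ∧ (B₂ ∩ W).Nonempty) :
    ∃ (n : ℕ) (W : Fin n → Set E),
      (∀ k, ∃ i c, W k = {x | π i x = c}) ∧ ∀ B ∈ F, ∃ k, (B ∩ W k).Nonempty := by
  by_contra hno
  have missed (T : Set (Σ i, X i)) (hT : T.Finite) :
      ∃ B : F, ∀ p ∈ T, p.2 ∉ π p.1 '' (B : Set E) := by
    obtain ⟨n, p, -, rfl⟩ := hT.fin_param
    by_contra! hit
    refine hno ⟨n, fun k => {x | π (p k).1 x = (p k).2}, fun k => ⟨_, _, rfl⟩, fun B hB => ?_⟩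
    obtain ⟨_, ⟨k, rfl⟩, hk⟩ := hit ⟨B, hB⟩
    exact ⟨k, hk⟩
  obtain ⟨f, hf⟩ := exists_seq_pairwise_forall_disjoint_of_eq_Icc
    (s := fun (B : F) i => π i '' (B : Set E))
    (fun B i => (hF B B.2 i).imp fun _ => Exists.imp fun _ => And.right) missed
  have nonempty_image (B : F) (i : ι) : (π i '' (B : Set E)).Nonempty := by
    obtain ⟨a, b, hab, h⟩ := hF B B.2 i
    exact h ▸ nonempty_Icc.2 hab
  have inj : Function.Injective fun n => (f n : Set E) := by
    intro m n (hmn : (f m : Set E) = f n)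
    by_contra hne
    obtain ⟨i⟩ := ‹Nonempty ι›
    exact (nonempty_image (f m) i).ne_empty (disjoint_self.1 (by simpa [hmn] using hf hne i))
  obtain ⟨_, ⟨m, rfl⟩, _, ⟨n, rfl⟩, hne, _, ⟨i, c, rfl⟩, h₁, h₂⟩ :=
    hyp (range fun n => (f n : Set E)) (range_subset_iff.2 fun n => (f n).2)
      (infinite_range_of_injective inj)
  exact disjoint_left.1 (hf (fun hmn => hne (by rw [hmn])) i) h₁ h₂

end Coordinates

theorem IsBox.exists_image_apply_eq_Icc {d : ℕ} {B : Set (EuclideanSpace ℝ (Fin d))} (hB : IsBox B)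
    (j : Fin d) : ∃ a b, a ≤ b ∧ (fun x => x j) '' B = Icc a b := by
  obtain ⟨a, b, hab, rfl⟩ := hB
  refine ⟨a j, b j, hab j, Subset.antisymm (image_subset_iff.2 fun x hx => hx j) fun c hc => ?_⟩
  refine ⟨WithLp.toLp 2 (Function.update a j c), fun i => ?_, by simp⟩
  rcases eq_or_ne i j with rfl | hij
  · simpa using hc
  · simpa [hij] using hab i

/-- **`(ℵ₀, 2)`-theorem for axis-parallel boxes and hyperplanes.**
If `F` is a family of axis-parallel boxes in `ℝ^d` such that every infinite subfamily
contains two boxes both intersected by a single axis-parallel hyperplane, then all members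
of `F` can be hit by finitely many axis-parallel hyperplanes. -/
theorem stmt_11 (d : ℕ) (hd : 1 ≤ d)
    (F : Set (Set (EuclideanSpace ℝ (Fin d))))
    (hbox : ∀ B ∈ F, IsBox B)
    (hyp : ∀ G ⊆ F, G.Infinite →
      ∃ B₁ ∈ G, ∃ B₂ ∈ G, B₁ ≠ B₂ ∧
        ∃ W : Set (EuclideanSpace ℝ (Fin d)), IsAxisParallelHyperplane W ∧
          (B₁ ∩ W).Nonempty ∧ (B₂ ∩ W).Nonempty) :
    ∃ (n : ℕ) (W : Fin n → Set (EuclideanSpace ℝ (Fin d))),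
      (∀ i, IsAxisParallelHyperplane (W i)) ∧ ∀ B ∈ F, ∃ i, (B ∩ W i).Nonempty := by
  have : Nonempty (Fin d) := ⟨⟨0, hd⟩⟩
  exact stmt_11_general (fun j (x : EuclideanSpace ℝ (Fin d)) => x j) F
    (fun B hB => (hbox B hB).exists_image_apply_eq_Icc) hyp
end
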